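/- arXiv:1306.3637 — 2 statements merged into one kernel-verified Lean document; each statement's English description precedes it below -/
import Mathlib

section
/- Let L > 0 and T > 0. There exists a constant C > 0, independent of the data and of ε, with the following property. Let ε ∈ (0,1], let y₀, ȳ₀ be two initial data, let y and ȳ be classical solutions of the modified KdV system (with cutoff Φ_ε) on [0,T] with y(0,·) = y₀ and ȳ(0,·) = ȳ₀, and let z and z̄ be classical solutions of the linearized KdV system on [0,T] with z(0,·) = y₀ and z̄(0,·) = ȳ₀. Set Δ(t,·) = (y(t,·) − z(t,·)) − (ȳ(t,·) − z̄(t,·)). Then ‖Δ(t,·)‖_{L²(0,L)} ≤ C for all t ∈ [0,T]. -/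
open Set Real MeasureTheory

/-- The `L²(0,L)` norm of a function on `(0,L)`. -/
noncomputable def L2norm (L : ℝ) (f : ℝ → ℝ) : ℝ :=
  Real.sqrt (∫ x in (0:ℝ)..L, (f x) ^ 2)

/-- A smooth cutoff `Φ ∈ C^∞([0,∞);[0,1])` with `Φ ≡ 1` on `[0,1/2]`, `Φ ≡ 0` on
`[1,∞)` and `Φ′ ≤ 0`.  (The rescaled cutoff is `Φ_ε(r) = Φ(r/ε)`.) -/
def IsCutoff (Φ : ℝ → ℝ) : Prop :=
  ContDiff ℝ (⊤ : ℕ∞) Φ ∧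
  (∀ r ∈ Ici (0:ℝ), Φ r ∈ Icc (0:ℝ) 1) ∧
  (∀ r ∈ Icc (0:ℝ) (1/2 : ℝ), Φ r = 1) ∧
  (∀ r ∈ Ici (1:ℝ), Φ r = 0) ∧
  (∀ r ∈ Ici (0:ℝ), deriv Φ r ≤ 0)

/-- A classical solution of the modified KdV system (with cutoff `Φ_ε = Φ(·/ε)`)
`y_t + y_x + y_xxx + Φ_ε(‖y(t,·)‖_{L²(0,L)}) y y_x = 0`,
`y(t,0) = y(t,L) = y_x(t,L) = 0`, on `[0,T] × [0,L]`. -/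
def IsModifiedKdVSol (L T ε : ℝ) (Φ : ℝ → ℝ) (y : ℝ → ℝ → ℝ) : Prop :=
  (∀ t ∈ Icc (0:ℝ) T, ContDiffOn ℝ 3 (y t) (Icc (0:ℝ) L)) ∧
  (∀ x ∈ Icc (0:ℝ) L, ContDiffOn ℝ 1 (fun s => y s x) (Icc (0:ℝ) T)) ∧
  ContinuousOn (fun p : ℝ × ℝ => y p.1 p.2) (Icc (0:ℝ) T ×ˢ Icc (0:ℝ) L) ∧
  (∀ t ∈ Ioo (0:ℝ) T, ∀ x ∈ Ioo (0:ℝ) L,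
    derivWithin (fun s => y s x) (Icc (0:ℝ) T) t
      + derivWithin (y t) (Icc (0:ℝ) L) x
      + iteratedDerivWithin 3 (y t) (Icc (0:ℝ) L) x
      + Φ (L2norm L (y t) / ε) * (y t x * derivWithin (y t) (Icc (0:ℝ) L) x) = 0) ∧
  (∀ t ∈ Icc (0:ℝ) T,
    y t 0 = 0 ∧ y t L = 0 ∧ derivWithin (y t) (Icc (0:ℝ) L) L = 0)

/-- A classical solution of the linearized KdV system
`z_t + z_x + z_xxx = 0`, `z(t,0) = z(t,L) = z_x(t,L) = 0`, on `[0,T] × [0,L]`. -/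
def IsLinearKdVSol (L T : ℝ) (z : ℝ → ℝ → ℝ) : Prop :=
  (∀ t ∈ Icc (0:ℝ) T, ContDiffOn ℝ 3 (z t) (Icc (0:ℝ) L)) ∧
  (∀ x ∈ Icc (0:ℝ) L, ContDiffOn ℝ 1 (fun s => z s x) (Icc (0:ℝ) T)) ∧
  ContinuousOn (fun p : ℝ × ℝ => z p.1 p.2) (Icc (0:ℝ) T ×ˢ Icc (0:ℝ) L) ∧
  (∀ t ∈ Ioo (0:ℝ) T, ∀ x ∈ Ioo (0:ℝ) L,
    derivWithin (fun s => z s x) (Icc (0:ℝ) T) t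
      + derivWithin (z t) (Icc (0:ℝ) L) x
      + iteratedDerivWithin 3 (z t) (Icc (0:ℝ) L) x = 0) ∧
  (∀ t ∈ Icc (0:ℝ) T,
    z t 0 = 0 ∧ z t L = 0 ∧ derivWithin (z t) (Icc (0:ℝ) L) L = 0)

/-!
Since `y_t` exists only pointwise, with no bound that is uniform in time, the energy identity for
`‖y(t)‖²` is not a matter of differentiating under the integral sign. As in the Looman–Menchoff
theorem, Baire category rescues the argument. If the curve `t ↦ y(t)` in `L²(0, L)` failed to be
right Lipschitz at some time, the closure of the bad times would contain a portion on which
`y_t` is bounded by one constant `M`, and on which the dissipativity of the KdV operator bounds,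
again through `M`, the distance of `y(s)` from `y(t)` for `s > t`. An increment of `y` from a point
of the portion is then linear in time: on the portion `y_t` is bounded, and on each gap the
dissipativity estimate, anchored at the left end of the gap, applies. So `y` is right Lipschitz
everywhere, and its `L²` norm decreases.

As long as `‖y‖ ≥ ε` the cutoff vanishes, so `y` solves the linear equation and coincides with `z`.
From the first time when `‖y‖ ≤ ε`, both `‖y‖` and `‖z‖` are at most `ε`. Hence `‖y - z‖ ≤ 2 ε`
throughout, and the same for the other pair of solutions.
-/

open Filter Topology Asymptotics
open scoped RealInnerProductSpace

section RightDerivative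

variable {E : Type*} [NormedAddCommGroup E] [InnerProductSpace ℝ E] {u w : ℝ → E}

/-- One-sided pointwise Lipschitz regularity of a curve: `‖u s - u t‖ = O(s - t)` as `s ↓ t`. -/
def RightLipschitzAt (u : ℝ → E) (t : ℝ) : Prop :=
  (fun s => u s - u t) =O[𝓝[≥] t] fun s => s - t

/-- `d` is the right derivative of the curve `u` at `t` for the weak topology of `E`. -/
def HasWeakRightDerivAt (u : ℝ → E) (d : E) (t : ℝ) : Prop :=
  ∀ g : E, HasDerivWithinAt (fun s => ⟪u s, g⟫) ⟪d, g⟫ (Ici t) t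

theorem RightLipschitzAt.hasDerivWithinAt_norm_sub_sq {d : E} {t : ℝ} (hu : RightLipschitzAt u t)
    (hd : HasWeakRightDerivAt u d t) (v : E) :
    HasDerivWithinAt (fun s => ‖u s - v‖ ^ 2) (2 * ⟪d, u t - v⟫) (Ici t) t := by
  have hquad : HasDerivWithinAt (fun s => ‖u s - u t‖ ^ 2) 0 (Ici t) t := by
    simpa using
      (IsBigO.hasFDerivWithinAt (n := 2) (hu.norm_norm.pow 2) self_mem_Ici one_lt_two)
        |>.hasDerivWithinAt
  have hexpand (s : ℝ) : ‖u s - v‖ ^ 2 =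
      2 * ⟪u s, u t - v⟫ + (‖v‖ ^ 2 - ‖u t‖ ^ 2) + ‖u s - u t‖ ^ 2 := by
    rw [norm_sub_sq_real, norm_sub_sq_real, inner_sub_right]
    ring
  simp only [hexpand]
  simpa only [add_zero] using (((hd (u t - v)).const_mul 2).add_const _).fun_add hquad

/-- `5 M` is chosen because the barrier `5 M (s - a) + δ` stays below `4` on `[a, b]`, and
`2 M (φ + φ²)` is less than `5 M * 2 φ` for `0 < φ < 4`. -/
theorem le_affine_of_deriv_right_sq_le {φ ψ : ℝ → ℝ} {M a b δ : ℝ} (hM : 0 < M) (hδ : 0 < δ)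
    (hδ1 : δ ≤ 1) (hab : M * (b - a) ≤ 1 / 2) (hφ : ContinuousOn φ (Icc a b)) (hφ0 : ∀ t, 0 ≤ φ t)
    (hφa : φ a ≤ δ) (hψ : ∀ t ∈ Ico a b, HasDerivWithinAt (fun s => φ s ^ 2) (ψ t) (Ici t) t)
    (hψφ : ∀ t ∈ Ico a b, ψ t ≤ 2 * M * (φ t + φ t ^ 2)) {s : ℝ} (hs : s ∈ Icc a b) :
    φ s ≤ 5 * M * (s - a) + δ := by
  have hbarrier (t : ℝ) : HasDerivAt (fun r => (5 * M * (r - a) + δ) ^ 2)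
      (2 * (5 * M * (t - a) + δ) * (5 * M)) t := by
    simpa using ((((hasDerivAt_id t).sub_const a).const_mul (5 * M)).add_const δ).fun_pow 2
  have hpos {r : ℝ} (hr : a ≤ r) : 0 < 5 * M * (r - a) + δ := by
    have := mul_nonneg hM.le (sub_nonneg.2 hr)
    linarith
  refine (sq_le_sq₀ (hφ0 s) (hpos hs.1).le).1 <|
    image_le_of_deriv_right_lt_deriv_boundary (hφ.pow 2) hψ
      (by simpa using pow_le_pow_left₀ (hφ0 a) hφa 2) hbarrier (fun t ht htouch => ?_) hs
  have hφt : φ t = 5 * M * (t - a) + δ := (sq_eq_sq₀ (hφ0 t) (hpos ht.1).le).1 htouch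
  have hφ4 : φ t < 4 := by
    have := mul_le_mul_of_nonneg_left (sub_le_sub_right ht.2.le a) hM.le
    linarith
  have hφpos : 0 < M * φ t := mul_pos hM (hφt ▸ hpos ht.1)
  rw [← hφt]
  nlinarith [hψφ t ht]

theorem le_linear_of_deriv_right_sq_le {φ ψ : ℝ → ℝ} {M a b : ℝ} (hM : 0 < M)
    (hab : M * (b - a) ≤ 1 / 2) (hφ : ContinuousOn φ (Icc a b)) (hφ0 : ∀ t, 0 ≤ φ t)
    (hφa : φ a = 0) (hψ : ∀ t ∈ Ioo a b, HasDerivWithinAt (fun s => φ s ^ 2) (ψ t) (Ici t) t)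
    (hψφ : ∀ t ∈ Ioo a b, ψ t ≤ 2 * M * (φ t + φ t ^ 2)) {s : ℝ} (hs : s ∈ Icc a b) :
    φ s ≤ 5 * M * (s - a) := by
  rcases hs.1.eq_or_lt with rfl | has
  · simp [hφa]
  have hφlim : Tendsto φ (𝓝[>] a) (𝓝 0) := by
    have hmem : Icc a b ∈ 𝓝[>] a := Icc_mem_nhdsGT (has.trans_le hs.2)
    simpa only [hφa] using
      (hφ a (left_mem_Icc.2 (hs.1.trans hs.2))).mono_left (nhdsWithin_le_of_mem hmem)
  have hid : Tendsto (fun r : ℝ => r) (𝓝[>] a) (𝓝 a) :=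
    tendsto_nhdsWithin_of_tendsto_nhds tendsto_id
  have hδlim : Tendsto (fun r => φ r + (r - a)) (𝓝[>] a) (𝓝 0) := by
    simpa using hφlim.add (hid.sub_const a)
  have hbound : Tendsto (fun r => 5 * M * (s - r) + (φ r + (r - a))) (𝓝[>] a)
      (𝓝 (5 * M * (s - a) + 0)) := ((hid.const_sub s).const_mul _).add hδlim
  rw [add_zero] at hbound
  refine ge_of_tendsto hbound ?_
  filter_upwards [hδlim.eventually_le_const one_pos, Ioo_mem_nhdsGT has] with r hr1 hr
  refine le_affine_of_deriv_right_sq_le hM (by linarith [hφ0 r, hr.1]) hr1 ?_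
    (hφ.mono (Icc_subset_Icc_left hr.1.le)) hφ0 (by linarith [hr.1])
    (fun t ht => hψ t ⟨hr.1.trans_le ht.1, ht.2⟩) (fun t ht => hψφ t ⟨hr.1.trans_le ht.1, ht.2⟩)
    ⟨hr.2.le, hs.2⟩
  nlinarith [hr.1]

/-- The anchored dissipativity estimate: `w` is the velocity of the curve `u` on the time set `I`,
and the distance from `u` to its value at the anchor `a` has controlled growth. -/
def IsAnchor (u w : ℝ → E) (I : Set ℝ) (M a : ℝ) : Prop :=
  ∀ t ∈ I, ⟪w t, u t - u a⟫ ≤ M * (‖u t - u a‖ + ‖u t - u a‖ ^ 2)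

theorem IsAnchor.norm_sub_le {I : Set ℝ} {M a b : ℝ} (ha : IsAnchor u w I M a) (hM : 0 < M)
    (hab : M * (b - a) ≤ 1 / 2) (hI : Ioo a b ⊆ I) (hu : ContinuousOn u (Icc a b))
    (hw : ∀ t ∈ Ioo a b, HasWeakRightDerivAt u (w t) t)
    (hR : ∀ t ∈ Ioo a b, RightLipschitzAt u t) {s : ℝ} (hs : s ∈ Icc a b) :
    ‖u s - u a‖ ≤ 5 * M * (s - a) :=
  le_linear_of_deriv_right_sq_le hM hab (hu.fun_sub continuousOn_const).norm
    (fun _ => norm_nonneg _)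
    (by simp) (fun t ht => (hR t ht).hasDerivWithinAt_norm_sub_sq (hw t ht) (u a))
    (fun t ht => by linarith [ha t (hI ht)]) hs

theorem antitoneOn_norm_of_inner_nonpos {I : Set ℝ} (hI : I.OrdConnected)
    (hu : ContinuousOn u I) (hw : ∀ t ∈ I, HasWeakRightDerivAt u (w t) t)
    (hR : ∀ t ∈ I, RightLipschitzAt u t) (hdiss : ∀ t ∈ I, ⟪w t, u t⟫ ≤ 0) :
    AntitoneOn (fun t => ‖u t‖) I := by
  intro a ha b hb hab
  have hsub : Icc a b ⊆ I := hI.out ha hb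
  refine (sq_le_sq₀ (norm_nonneg _) (norm_nonneg _)).1 <|
    image_le_of_deriv_right_le_deriv_boundary (f' := fun t => 2 * ⟪w t, u t⟫)
      (B := fun _ => ‖u a‖ ^ 2) (B' := fun _ => 0) ((hu.mono hsub).norm.fun_pow 2)
      (fun t ht => ?_) le_rfl continuousOn_const (fun t _ => hasDerivWithinAt_const t _ _)
      (fun t ht => ?_) (right_mem_Icc.2 hab)
  · have htI := hsub (Ico_subset_Icc_self ht)
    simpa using (hR t htI).hasDerivWithinAt_norm_sub_sq (hw t htI) 0
  · linarith [hdiss t (hsub (Ico_subset_Icc_self ht))]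

end RightDerivative

section WeakConvergence

variable {X : Type*} [MeasurableSpace X] {μ : Measure X}

theorem inner_eq_integral_mul (f g : Lp ℝ 2 μ) : ⟪f, g⟫ = ∫ x, f x * g x ∂μ := by
  simp only [L2.inner_def, RCLike.inner_apply, conj_trivial, mul_comm]

theorem integrable_mul_of_Lp_two (f g : Lp ℝ 2 μ) : Integrable (fun x => f x * g x) μ :=
  (Lp.memLp f).integrable_mul (Lp.memLp g)

/-- Young's inequality, in the form that leaves a dominated remainder. -/
theorem abs_inner_le_add_integral_min (h g : Lp ℝ 2 μ) {η : ℝ} (hη : 0 < η) :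
    |⟪h, g⟫| ≤ η * ‖h‖ ^ 2 + ∫ x, min |h x * g x| (g x * g x / (4 * η)) ∂μ := by
  have hhg := integrable_mul_of_Lp_two h g
  have hhh := (integrable_mul_of_Lp_two h h).const_mul η
  have hmin : Integrable (fun x => min |h x * g x| (g x * g x / (4 * η))) μ :=
    hhg.abs.inf ((integrable_mul_of_Lp_two g g).div_const (4 * η))
  have hyoung (x : X) : |h x * g x| ≤ η * (h x * h x) + g x * g x / (4 * η) := by
    have hsq : 0 ≤ (2 * η * |h x| - |g x|) ^ 2 / (4 * η) := by positivity
    have hexp : (2 * η * |h x| - |g x|) ^ 2 / (4 * η) =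
        η * (h x * h x) + g x * g x / (4 * η) - |h x * g x| := by
      rw [abs_mul, ← abs_mul_abs_self (h x), ← abs_mul_abs_self (g x)]
      field_simp
      ring
    linarith
  calc |⟪h, g⟫| = |∫ x, h x * g x ∂μ| := by rw [inner_eq_integral_mul]
    _ ≤ ∫ x, |h x * g x| ∂μ := abs_integral_le_integral_abs
    _ ≤ ∫ x, (η * (h x * h x) + min |h x * g x| (g x * g x / (4 * η))) ∂μ := by
      refine integral_mono hhg.abs (hhh.add hmin) fun x => ?_
      rw [← min_add_add_left]
      exact le_min (le_add_of_nonneg_left (mul_nonneg hη.le (mul_self_nonneg _))) (hyoung x)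
    _ = η * ‖h‖ ^ 2 + ∫ x, min |h x * g x| (g x * g x / (4 * η)) ∂μ := by
      rw [integral_add hhh hmin, integral_const_mul, ← inner_eq_integral_mul,
        real_inner_self_eq_norm_sq]

theorem tendsto_inner_zero_of_norm_le_of_tendsto_ae_zero {ι : Type*} {l : Filter ι}
    [l.IsCountablyGenerated] {h : ι → Lp ℝ 2 μ} {D : ℝ} (hD : ∀ᶠ k in l, ‖h k‖ ≤ D)
    (hlim : ∀ᵐ x ∂μ, Tendsto (fun k => h k x) l (𝓝 0)) (g : Lp ℝ 2 μ) :
    Tendsto (fun k => ⟪h k, g⟫) l (𝓝 0) := by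
  have hmin {η : ℝ} (hη : 0 < η) :
      Tendsto (fun k => ∫ x, min |h k x * g x| (g x * g x / (4 * η)) ∂μ) l (𝓝 0) := by
    have hgg := (integrable_mul_of_Lp_two g g).div_const (4 * η)
    have hnonneg (x : X) : 0 ≤ g x * g x / (4 * η) :=
      div_nonneg (mul_self_nonneg _) (by positivity)
    rw [← integral_zero X ℝ (μ := μ)]
    refine tendsto_integral_filter_of_dominated_convergence _
      (.of_forall fun k => ((integrable_mul_of_Lp_two (h k) g).abs.inf hgg).aestronglyMeasurable)
      (.of_forall fun k => .of_forall fun x => ?_) hgg ?_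
    · rw [Real.norm_of_nonneg (le_min (abs_nonneg _) (hnonneg x))]
      exact min_le_right _ _
    · filter_upwards [hlim] with x hx
      simpa only [zero_mul, abs_zero, min_eq_left (hnonneg x)] using
        (hx.mul_const (g x)).abs.min (tendsto_const_nhds (x := g x * g x / (4 * η)))
  rw [Metric.tendsto_nhds]
  intro e he
  have hη : 0 < e / (2 * (D ^ 2 + 1)) := by positivity
  have hηD : e / (2 * (D ^ 2 + 1)) * D ^ 2 ≤ e / 2 := by
    rw [div_mul_eq_mul_div, div_le_div_iff₀ (by positivity) two_pos]
    nlinarith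
  filter_upwards [hD, (hmin hη).eventually_lt_const (half_pos he)] with k hk hint
  have hsq := mul_le_mul_of_nonneg_left (pow_le_pow_left₀ (norm_nonneg _) hk 2) hη.le
  rw [dist_zero_right, Real.norm_eq_abs]
  linarith [abs_inner_le_add_integral_min (h k) g hη]

theorem tendsto_inner_of_norm_le_of_tendsto_ae {ι : Type*} [Countable ι] {l : Filter ι}
    [l.IsCountablyGenerated] {q : ι → Lp ℝ 2 μ} {φ : Lp ℝ 2 μ} {D : ℝ}
    (hD : ∀ᶠ k in l, ‖q k‖ ≤ D) (hlim : ∀ᵐ x ∂μ, Tendsto (fun k => q k x) l (𝓝 (φ x)))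
    (g : Lp ℝ 2 μ) : Tendsto (fun k => ⟪q k, g⟫) l (𝓝 ⟪φ, g⟫) := by
  refine tendsto_sub_nhds_zero_iff.1 ?_
  simp only [← inner_sub_left]
  refine tendsto_inner_zero_of_norm_le_of_tendsto_ae_zero (D := D + ‖φ‖)
    (hD.mono fun k hk => (norm_sub_le _ _).trans (by gcongr)) ?_ g
  filter_upwards [hlim, ae_all_iff.2 fun k => Lp.coeFn_sub (q k) φ] with x hx hsub
  simpa only [hsub, Pi.sub_apply, sub_self] using hx.sub_const (φ x)

end WeakConvergence

section Gaps

variable {Q : Set ℝ}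

/-- `p.1 < p.2` are consecutive points of `Q`: the endpoints of a bounded component of `Qᶜ`. -/
def IsGap (Q : Set ℝ) (p : ℝ × ℝ) : Prop :=
  p.1 ∈ Q ∧ p.2 ∈ Q ∧ p.1 < p.2 ∧ Disjoint (Ioo p.1 p.2) Q

theorem exists_isGap_mem_Ioo (hQ : IsCompact Q) {a b q : ℝ} (ha : a ∈ Q) (hb : b ∈ Q)
    (hq : q ∉ Q) (hqab : q ∈ Ioo a b) : ∃ p, IsGap Q p ∧ q ∈ Ioo p.1 p.2 := by
  obtain ⟨c, ⟨hcQ, hcq⟩, hc⟩ := (hQ.inter_right isClosed_Iic).exists_isGreatest ⟨a, ha, hqab.1.le⟩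
  obtain ⟨d, ⟨hdQ, hqd⟩, hd⟩ := (hQ.inter_right isClosed_Ici).exists_isLeast ⟨b, hb, hqab.2.le⟩
  have hcq' : c < q := lt_of_le_of_ne hcq (by rintro rfl; exact hq hcQ)
  have hqd' : q < d := lt_of_le_of_ne hqd (by rintro rfl; exact hq hdQ)
  refine ⟨(c, d), ⟨hcQ, hdQ, hcq'.trans hqd', disjoint_left.2 fun r hr hrQ => ?_⟩, hcq', hqd'⟩
  rcases le_total r q with hrq | hqr
  · exact hr.1.not_ge (hc ⟨hrQ, hrq⟩)
  · exact hr.2.not_ge (hd ⟨hrQ, hqr⟩)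

theorem pairwiseDisjoint_isGap (Q : Set ℝ) :
    {p | IsGap Q p}.PairwiseDisjoint fun p => Ioo p.1 p.2 := by
  rintro ⟨a, b⟩ ⟨ha, hb, _, habQ⟩ ⟨c, d⟩ ⟨hc, hd, _, hcdQ⟩ hne
  refine disjoint_left.2 fun r hr hr' => hne ?_
  have hbd : b = d := le_antisymm
    (not_lt.1 fun h => disjoint_left.1 habQ ⟨hr.1.trans hr'.2, h⟩ hd)
    (not_lt.1 fun h => disjoint_left.1 hcdQ ⟨hr'.1.trans hr.2, h⟩ hb)
  have hac : a = c := le_antisymm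
    (not_lt.1 fun h => disjoint_left.1 hcdQ ⟨h, hr.1.trans hr'.2⟩ ha)
    (not_lt.1 fun h => disjoint_left.1 habQ ⟨h, hr'.1.trans hr.2⟩ hc)
  rw [hac, hbd]

theorem countable_isGap (Q : Set ℝ) : {p | IsGap Q p}.Countable :=
  (pairwiseDisjoint_isGap Q).countable_of_isOpen (fun _ _ => isOpen_Ioo)
    fun _ hp => nonempty_Ioo.2 hp.2.2.1

theorem iUnion_Ioo_isGap (hQ : IsCompact Q) {a b : ℝ} (ha : a ∈ Q) (hb : b ∈ Q)
    (hQab : Q ⊆ Icc a b) : ⋃ p : {p // IsGap Q p}, Ioo p.1.1 p.1.2 = Ioo a b \ Q := by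
  ext q
  simp only [mem_iUnion, Subtype.exists, exists_prop]
  constructor
  · rintro ⟨p, hp, hqp⟩
    exact ⟨⟨(hQab hp.1).1.trans_lt hqp.1, hqp.2.trans_le (hQab hp.2.1).2⟩,
      disjoint_left.1 hp.2.2.2 hqp⟩
  · exact fun ⟨hqab, hq⟩ => exists_isGap_mem_Ioo hQ ha hb hq hqab

theorem hasSum_integral_isGap (hQ : IsCompact Q) {a b : ℝ} (ha : a ∈ Q) (hb : b ∈ Q)
    (hQab : Q ⊆ Icc a b) {f : ℝ → ℝ} (hf : IntegrableOn f (Ioo a b)) :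
    HasSum (fun p : {p // IsGap Q p} => ∫ r in p.1.1..p.1.2, f r) (∫ r in Ioo a b \ Q, f r) := by
  have : Countable {p // IsGap Q p} := (countable_isGap Q).to_subtype
  have hU := iUnion_Ioo_isGap hQ ha hb hQab
  have hsum := hasSum_integral_iUnion (f := f) (μ := volume)
    (fun p : {p // IsGap Q p} => measurableSet_Ioo)
    (fun p p' hne => pairwiseDisjoint_isGap Q p.2 p'.2 (Subtype.coe_injective.ne hne))
    (by rw [hU]; exact hf.mono_set sdiff_subset)
  rw [hU] at hsum
  refine hsum.congr_fun fun p => ?_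
  rw [intervalIntegral.integral_of_le p.2.2.2.1.le, integral_Ioc_eq_integral_Ioo]

end Gaps

theorem exists_nhds_inter_subset_of_isGδ {Z : Set ℝ} (hZ : IsGδ Z) (hne : Z.Nonempty)
    {A : ℕ → Set ℝ} (hA : ∀ n, IsClosed ((↑) ⁻¹' A n : Set Z)) (hcover : Z ⊆ ⋃ n, A n) :
    ∃ n, ∃ z ∈ Z, ∀ᶠ r in 𝓝 z, r ∈ Z → r ∈ A n := by
  have := hZ.baireSpace_of_t2Space_locallyCompactSpace
  have := hne.to_subtype
  obtain ⟨n, z, hz⟩ := nonempty_interior_of_iUnion_of_closed hA <| by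
    rw [← preimage_iUnion, preimage_eq_univ_iff, Subtype.range_coe]
    exact hcover
  refine ⟨n, z, z.2, ?_⟩
  exact eventually_nhdsWithin_iff.1
    ((eventually_nhds_subtype_iff Z z _).1 (mem_interior_iff_mem_nhds.1 hz))

section Flow

variable {X : Type*} [MeasurableSpace X] {μ : Measure X} {Ω : Set X} {I : Set ℝ}
  {u w : ℝ → Lp ℝ 2 μ} {y f : ℝ → X → ℝ}

/-- A curve `u` in `L²(μ)`, over an open time interval `I`, which is only known to be differentiable
pointwise: `y` represents `u`, and at each point of the conull set `Ω` the function `y` is `C¹` in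
time with derivative `f`, which represents `w`. Each `f t` is bounded, but with no uniformity in
`t`. Every time is an anchor for the dissipativity estimate. -/
structure IsL2Flow (μ : Measure X) (Ω : Set X) (I : Set ℝ) (u w : ℝ → Lp ℝ 2 μ)
    (y f : ℝ → X → ℝ) : Prop where
  isOpen : IsOpen I
  ordConnected : I.OrdConnected
  ae_mem : ∀ᵐ x ∂μ, x ∈ Ω
  continuousOn : ContinuousOn u I
  coeFn_curve : ∀ t ∈ I, u t =ᵐ[μ] y t
  coeFn_velocity : ∀ t ∈ I, w t =ᵐ[μ] f t
  hasDerivAt : ∀ x ∈ Ω, ∀ t ∈ I, HasDerivAt (fun s => y s x) (f t x) t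
  continuousOn_velocity : ∀ x ∈ Ω, ContinuousOn (fun t => f t x) I
  bounded_velocity : ∀ t ∈ I, ∃ M, ∀ x ∈ Ω, |f t x| ≤ M
  anchor : ∀ a ∈ I, ∃ M, IsAnchor u w I M a

/-- The times at which the velocity and the anchored estimate are controlled by the constant `M`. -/
def goodTimes (Ω : Set X) (I : Set ℝ) (u w : ℝ → Lp ℝ 2 μ) (f : ℝ → X → ℝ) (M : ℝ) : Set ℝ :=
  {a | (∀ x ∈ Ω, |f a x| ≤ M) ∧ IsAnchor u w I M a}

/-- A compact set `Q` of times with extreme points `t` and `s`, all of whose points but `s` are good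
with the same constant `M`, and off which `u` is known to be right Lipschitz. -/
structure IsPortion (Ω : Set X) (I : Set ℝ) (u w : ℝ → Lp ℝ 2 μ) (f : ℝ → X → ℝ) (M t s : ℝ)
    (Q : Set ℝ) : Prop where
  pos : 0 < M
  short : M * (s - t) ≤ 1 / 2
  Icc_subset : Icc t s ⊆ I
  isCompact : IsCompact Q
  left_mem : t ∈ Q
  right_mem : s ∈ Q
  subset_Icc : Q ⊆ Icc t s
  good : ∀ a ∈ Q, a < s → a ∈ goodTimes Ω I u w f M
  rightLipschitzAt : ∀ r ∈ Ioo t s \ Q, RightLipschitzAt u r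

namespace IsL2Flow

theorem tendsto_coeFn_slope (h : IsL2Flow μ Ω I u w y f) {t : ℝ} (ht : t ∈ I) {s : ℕ → ℝ}
    (hs : Tendsto s atTop (𝓝[≠] t)) :
    ∀ᵐ x ∂μ, Tendsto (fun k => slope u t (s k) x) atTop (𝓝 (w t x)) := by
  have hsI : ∀ᶠ k in atTop, s k ∈ I :=
    (hs.mono_right nhdsWithin_le_nhds).eventually (h.isOpen.mem_nhds ht)
  have hcoe : ∀ᵐ x ∂μ, ∀ k, s k ∈ I → u (s k) x = y (s k) x :=
    ae_all_iff.2 fun k => eventually_imp_distrib_left.2 (h.coeFn_curve (s k))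
  filter_upwards [h.ae_mem, h.coeFn_curve t ht, h.coeFn_velocity t ht, hcoe,
    ae_all_iff.2 fun k => Lp.coeFn_smul (s k - t)⁻¹ (u (s k) - u t),
    ae_all_iff.2 fun k => Lp.coeFn_sub (u (s k)) (u t)] with x hx hut hwt hus hsmul hsub
  rw [hwt]
  refine ((hasDerivAt_iff_tendsto_slope.1 (h.hasDerivAt x hx t ht)).comp hs).congr' ?_
  filter_upwards [hsI] with k hk
  simp only [Function.comp_apply, slope_def_module, hsmul, Pi.smul_apply, hsub, Pi.sub_apply,
    hus k hk, hut]

theorem hasWeakRightDerivAt (h : IsL2Flow μ Ω I u w y f) {t : ℝ} (ht : t ∈ I)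
    (hR : RightLipschitzAt u t) : HasWeakRightDerivAt u (w t) t := by
  intro g
  refine HasDerivWithinAt.Ici_of_Ioi ?_
  rw [hasDerivWithinAt_iff_tendsto_slope' self_notMem_Ioi]
  refine tendsto_of_seq_tendsto fun s hs => ?_
  obtain ⟨D, hD⟩ := hR.bound
  have hbound : ∀ᶠ k in atTop, ‖slope u t (s k)‖ ≤ D := by
    filter_upwards [hs.eventually (hD.filter_mono (nhdsWithin_mono t Ioi_subset_Ici_self)),
      hs.eventually self_mem_nhdsWithin] with k hk hks
    rw [slope_def_module, norm_smul, norm_inv,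
      inv_mul_le_iff₀ (norm_pos_iff.2 (sub_ne_zero.2 hks.ne')), mul_comm]
    exact hk
  have hlim := h.tendsto_coeFn_slope ht
    (hs.mono_right (nhdsWithin_mono t fun r (hr : t < r) => hr.ne'))
  refine (tendsto_inner_of_norm_le_of_tendsto_ae hbound hlim g).congr fun k => ?_
  rw [Function.comp_apply, slope_def_module, slope_def_module, ← inner_sub_left,
    real_inner_smul_left, smul_eq_mul]

theorem integral_velocity (h : IsL2Flow μ Ω I u w y f) {a b : ℝ} (hab : a ≤ b)
    (hI : Icc a b ⊆ I) {x : X} (hx : x ∈ Ω) : ∫ r in a..b, f r x = y b x - y a x := by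
  rw [← uIcc_of_le hab] at hI
  exact intervalIntegral.integral_eq_sub_of_hasDerivAt (fun r hr => h.hasDerivAt x hx r (hI hr))
    ((h.continuousOn_velocity x hx).mono hI).intervalIntegrable

theorem isClosed_preimage_goodTimes (h : IsL2Flow μ Ω I u w y f) (M : ℝ) :
    IsClosed ((↑) ⁻¹' goodTimes Ω I u w f M : Set I) := by
  have hu : Continuous fun a : I => u a := h.continuousOn.domRestrict
  have hset : ((↑) ⁻¹' goodTimes Ω I u w f M : Set I) = (⋂ x ∈ Ω, {a : I | |f a x| ≤ M}) ∩
      ⋂ t ∈ I, {a : I | ⟪w t, u t - u a⟫ ≤ M * (‖u t - u a‖ + ‖u t - u a‖ ^ 2)} := by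
    ext a
    simp [goodTimes, IsAnchor]
  rw [hset]
  refine (isClosed_biInter fun x hx => ?_).inter (isClosed_biInter fun t _ => ?_)
  · exact isClosed_le (h.continuousOn_velocity x hx).domRestrict.abs continuous_const
  · have hdist : Continuous fun a : I => u t - u a := continuous_const.sub hu
    exact isClosed_le (continuous_const.inner hdist)
      (continuous_const.mul (hdist.norm.add (hdist.norm.pow 2)))

theorem exists_mem_goodTimes (h : IsL2Flow μ Ω I u w y f) {a : ℝ} (ha : a ∈ I) :
    ∃ n : ℕ, a ∈ goodTimes Ω I u w f (n + 1) := by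
  obtain ⟨M₁, hM₁⟩ := h.bounded_velocity a ha
  obtain ⟨M₂, hM₂⟩ := h.anchor a ha
  obtain ⟨n, hn⟩ := exists_nat_ge (max M₁ M₂)
  obtain ⟨hn₁, hn₂⟩ := max_le_iff.1 (hn.trans (le_add_of_nonneg_right zero_le_one))
  exact ⟨n, fun x hx => (hM₁ x hx).trans hn₁,
    fun t ht => (hM₂ t ht).trans (mul_le_mul_of_nonneg_right hn₂ (by positivity))⟩

theorem norm_sub_le_of_isGap (h : IsL2Flow μ Ω I u w y f) {Q : Set ℝ} {M t s : ℝ}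
    (hQ : IsPortion Ω I u w f M t s Q) {p : ℝ × ℝ} (hp : IsGap Q p) :
    ‖u p.2 - u p.1‖ ≤ 5 * M * (p.2 - p.1) := by
  obtain ⟨hp₁, hp₂, hlt, hdisj⟩ := hp
  have htp := (hQ.subset_Icc hp₁).1
  have hps := (hQ.subset_Icc hp₂).2
  have hpI : Icc p.1 p.2 ⊆ I := (Icc_subset_Icc htp hps).trans hQ.Icc_subset
  have hR : ∀ r ∈ Ioo p.1 p.2, RightLipschitzAt u r := fun r hr =>
    hQ.rightLipschitzAt r ⟨⟨htp.trans_lt hr.1, hr.2.trans_le hps⟩, disjoint_left.1 hdisj hr⟩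
  refine (hQ.good p.1 hp₁ (hlt.trans_le hps)).2.norm_sub_le hQ.pos ?_
    (Ioo_subset_Icc_self.trans hpI) (h.continuousOn.mono hpI)
    (fun r hr => h.hasWeakRightDerivAt (hpI (Ioo_subset_Icc_self hr)) (hR r hr)) hR
    (right_mem_Icc.2 hlt.le)
  exact (mul_le_mul_of_nonneg_left (sub_le_sub hps htp) hQ.pos.le).trans hQ.short

theorem integrableOn_velocity (h : IsL2Flow μ Ω I u w y f) {a b : ℝ} (hI : Icc a b ⊆ I) {x : X}
    (hx : x ∈ Ω) : IntegrableOn (fun r => f r x) (Ioo a b) :=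
  (((h.continuousOn_velocity x hx).mono hI).integrableOn_compact isCompact_Icc).mono_set
    Ioo_subset_Icc_self

theorem exists_Lp_eq_integral_diff (h : IsL2Flow μ Ω I u w y f) {Q : Set ℝ} {M t s : ℝ}
    (hQ : IsPortion Ω I u w f M t s Q) :
    ∃ σ : Lp ℝ 2 μ, ‖σ‖ ≤ 5 * M * (s - t) ∧ ∀ᵐ x ∂μ, σ x = ∫ r in Ioo t s \ Q, f r x := by
  have : Countable {p // IsGap Q p} := (countable_isGap Q).to_subtype
  have hM := hQ.pos
  have hst : t ≤ s := (hQ.subset_Icc hQ.right_mem).1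
  have hmem {r : ℝ} (hr : r ∈ Q) : r ∈ I := hQ.Icc_subset (hQ.subset_Icc hr)
  let d (p : {p // IsGap Q p}) : Lp ℝ 2 μ := u p.1.2 - u p.1.1
  have hd (p : {p // IsGap Q p}) : ‖d p‖ ≤ 5 * M * (p.1.2 - p.1.1) :=
    h.norm_sub_le_of_isGap hQ p.2
  have hlength : HasSum (fun p : {p // IsGap Q p} => 5 * M * (p.1.2 - p.1.1))
      (5 * M * volume.real (Ioo t s \ Q)) := by
    simpa using (hasSum_integral_isGap hQ.isCompact hQ.left_mem hQ.right_mem hQ.subset_Icc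
      (f := fun _ => 1) (integrableOn_const (by simp))).mul_left (5 * M)
  have hsum : ∑' p, ‖d p‖ₑ ≠ ⊤ :=
    tsum_enorm_ne_top_iff_summable_norm.2 (.of_nonneg_of_le (fun _ => norm_nonneg _) hd
      hlength.summable)
  refine ⟨∑' p, d p, (tsum_of_norm_bounded hlength hd).trans ?_, ?_⟩
  · have : volume.real (Ioo t s \ Q) ≤ s - t :=
      (measureReal_mono sdiff_subset (by simp)).trans_eq (Real.volume_real_Ioo_of_le hst)
    gcongr
  filter_upwards [Lp.hasSum_coeFn_tsum hsum, h.ae_mem,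
    ae_all_iff.2 fun p : {p // IsGap Q p} => Lp.coeFn_sub (u p.1.2) (u p.1.1),
    ae_all_iff.2 fun p : {p // IsGap Q p} => h.coeFn_curve p.1.2 (hmem p.2.2.1),
    ae_all_iff.2 fun p : {p // IsGap Q p} => h.coeFn_curve p.1.1 (hmem p.2.1)]
    with x hx hxΩ hsub hright hleft
  refine hx.unique ((hasSum_integral_isGap hQ.isCompact hQ.left_mem hQ.right_mem hQ.subset_Icc
    (h.integrableOn_velocity hQ.Icc_subset hxΩ)).congr_fun fun p => ?_)
  rw [h.integral_velocity p.2.2.2.1.le _ hxΩ, hsub, Pi.sub_apply, hright, hleft]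
  exact (Icc_subset_Icc (hQ.subset_Icc p.2.1).1 (hQ.subset_Icc p.2.2.1).2).trans hQ.Icc_subset

theorem norm_sub_le_of_isPortion [IsFiniteMeasure μ] (h : IsL2Flow μ Ω I u w y f) {Q : Set ℝ}
    {M t s : ℝ} (hQ : IsPortion Ω I u w f M t s Q) :
    ‖u s - u t‖ ≤ (5 * M + measureUnivNNReal μ ^ (2⁻¹ : ℝ) * M) * (s - t) := by
  have hst : t ≤ s := (hQ.subset_Icc hQ.right_mem).1
  obtain ⟨σ, hσ, hσx⟩ := h.exists_Lp_eq_integral_diff hQ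
  have hremainder : ‖u s - u t - σ‖ ≤ measureUnivNNReal μ ^ (2⁻¹ : ℝ) * (M * (s - t)) := by
    refine Lp.norm_le_of_ae_bound (mul_nonneg hQ.pos.le (sub_nonneg.2 hst)) ?_
    filter_upwards [hσx, h.ae_mem, h.coeFn_curve s (hQ.Icc_subset (right_mem_Icc.2 hst)),
      h.coeFn_curve t (hQ.Icc_subset (left_mem_Icc.2 hst)), Lp.coeFn_sub (u s - u t) σ,
      Lp.coeFn_sub (u s) (u t)] with x hx hxΩ hus hut hsubσ hsub
    have hint : y s x - y t x = (∫ r in Ioo t s ∩ Q, f r x) + ∫ r in Ioo t s \ Q, f r x := by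
      rw [integral_inter_add_sdiff hQ.isCompact.measurableSet
        (h.integrableOn_velocity hQ.Icc_subset hxΩ), ← integral_Ioc_eq_integral_Ioo,
        ← intervalIntegral.integral_of_le hst, h.integral_velocity hst hQ.Icc_subset hxΩ]
    rw [hsubσ, Pi.sub_apply, hsub, Pi.sub_apply, hus, hut, hx, hint, add_sub_cancel_right]
    calc ‖∫ r in Ioo t s ∩ Q, f r x‖ ≤ M * volume.real (Ioo t s ∩ Q) :=
          norm_setIntegral_le_of_norm_le_const (measure_inter_lt_top_of_left_ne_top (by simp))
            fun r hr => (hQ.good r hr.2 hr.1.2).1 x hxΩ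
      _ ≤ M * (s - t) := mul_le_mul_of_nonneg_left ((measureReal_mono inter_subset_left
          (by simp)).trans_eq (Real.volume_real_Ioo_of_le hst)) hQ.pos.le
  calc ‖u s - u t‖ ≤ ‖σ‖ + ‖u s - u t - σ‖ := norm_le_norm_add_norm_sub' _ _
    _ ≤ (5 * M + measureUnivNNReal μ ^ (2⁻¹ : ℝ) * M) * (s - t) := by linarith

theorem rightLipschitzAt_of_eventually [IsFiniteMeasure μ] (h : IsL2Flow μ Ω I u w y f)
    {P : Set ℝ} (hP : IsClosed P) {M t : ℝ} (hM : 0 < M) (htI : t ∈ I) (htP : t ∈ P)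
    (hgood : ∀ᶠ r in 𝓝 t, r ∈ P → r ∈ goodTimes Ω I u w f M)
    (hR : ∀ r ∉ P, RightLipschitzAt u r) : RightLipschitzAt u t := by
  have hshort : ∀ᶠ s in 𝓝 t, M * (s - t) ≤ 1 / 2 := by
    have : Tendsto (fun s => M * (s - t)) (𝓝 t) (𝓝 0) := by
      simpa using ((tendsto_id (x := 𝓝 t)).sub_const t).const_mul M
    exact this.eventually_le_const (by norm_num)
  obtain ⟨b, htb, hb⟩ := mem_nhdsGE_iff_exists_Ico_subset.1 <| nhdsWithin_le_nhds <|
    (hshort.and (h.isOpen.eventually_mem htI)).and hgood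
  refine IsBigO.of_bound (5 * M + measureUnivNNReal μ ^ (2⁻¹ : ℝ) * M) ?_
  filter_upwards [Ico_mem_nhdsGE htb] with s hs
  have hsub : Icc t s ⊆ Ico t b := fun r hr => ⟨hr.1, hr.2.trans_lt hs.2⟩
  rw [Real.norm_of_nonneg (sub_nonneg.2 hs.1)]
  refine h.norm_sub_le_of_isPortion (Q := insert s (P ∩ Icc t s))
    { pos := hM
      short := (hb hs).1.1
      Icc_subset := fun r hr => (hb (hsub hr)).1.2
      isCompact := (isCompact_Icc.inter_left hP).insert s
      left_mem := mem_insert_of_mem _ ⟨htP, left_mem_Icc.2 hs.1⟩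
      right_mem := mem_insert _ _
      subset_Icc := insert_subset (right_mem_Icc.2 hs.1) inter_subset_right
      good := fun a ha has => (hb (hsub (ha.resolve_left has.ne).2)).2 (ha.resolve_left has.ne).1
      rightLipschitzAt := fun r hr => hR r fun hrP =>
        hr.2 (mem_insert_of_mem _ ⟨hrP, Ioo_subset_Icc_self hr.1⟩) }

/-- The complement `P` of the interior of the set of right Lipschitz times would, by Baire, contain
a portion of uniformly good times, at which `u` is right Lipschitz after all. -/
theorem rightLipschitzAt [IsFiniteMeasure μ] (h : IsL2Flow μ Ω I u w y f) :
    ∀ t ∈ I, RightLipschitzAt u t := by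
  set P : Set ℝ := (interior {t | RightLipschitzAt u t})ᶜ
  have hR {r : ℝ} (hr : r ∉ P) : RightLipschitzAt u r :=
    interior_subset (s := {t | RightLipschitzAt u t}) (notMem_compl_iff.1 hr)
  have hP : IsClosed P := isOpen_interior.isClosed_compl
  suffices hempty : ¬(I ∩ P).Nonempty from fun t ht => hR fun htP => hempty ⟨t, ht, htP⟩
  intro hne
  obtain ⟨n, z, hz, hzgood⟩ := exists_nhds_inter_subset_of_isGδ
    (h.isOpen.isGδ.inter hP.isGδ) hne
    (fun n => (h.isClosed_preimage_goodTimes (n + 1)).preimage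
      (continuous_inclusion inter_subset_left))
    (fun a ha => mem_iUnion.2 (h.exists_mem_goodTimes ha.1))
  refine hz.2 (mem_interior_iff_mem_nhds.2 ?_)
  filter_upwards [h.isOpen.eventually_mem hz.1, hzgood.eventually_nhds] with t htI htgood
  by_cases htP : t ∈ P
  · refine h.rightLipschitzAt_of_eventually hP n.cast_add_one_pos htI htP ?_ fun r => hR
    filter_upwards [htgood, h.isOpen.eventually_mem htI] with r hr hrI hrP using hr ⟨hrI, hrP⟩
  · exact hR htP

theorem antitoneOn_norm [IsFiniteMeasure μ] (h : IsL2Flow μ Ω I u w y f)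
    (hdiss : ∀ t ∈ I, ⟪w t, u t⟫ ≤ 0) : AntitoneOn (fun t => ‖u t‖) I :=
  antitoneOn_norm_of_inner_nonpos h.ordConnected h.continuousOn
    (fun t ht => h.hasWeakRightDerivAt ht (h.rightLipschitzAt t ht)) h.rightLipschitzAt hdiss

end IsL2Flow

end Flow

section SquareIntegrableClasses

variable {L : ℝ} {g h : ℝ → ℝ}

open Classical in
/-- The class of `g` in `L²(0, L)`, with the junk value `0` if `g` is not square integrable. -/
noncomputable def toL2 (L : ℝ) (g : ℝ → ℝ) : Lp ℝ 2 (volume.restrict (Ioo 0 L)) :=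
  if hg : MemLp g 2 (volume.restrict (Ioo 0 L)) then hg.toLp g else 0

theorem coeFn_toL2 (hg : ContinuousOn g (Icc 0 L)) :
    toL2 L g =ᵐ[volume.restrict (Ioo 0 L)] g := by
  obtain ⟨C, hC⟩ := isCompact_Icc.exists_bound_of_continuousOn hg
  have hmem : MemLp g 2 (volume.restrict (Ioo 0 L)) :=
    .of_bound ((hg.mono Ioo_subset_Icc_self).aestronglyMeasurable measurableSet_Ioo) C <|
      (ae_restrict_mem measurableSet_Ioo).mono fun x hx => hC x (Ioo_subset_Icc_self hx)
  rw [toL2, dif_pos hmem]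
  exact hmem.coeFn_toLp

theorem toL2_congr (hg : ContinuousOn g (Icc 0 L)) (hgh : EqOn g h (Icc 0 L)) :
    toL2 L g = toL2 L h := by
  refine Lp.ext ?_
  filter_upwards [coeFn_toL2 hg, coeFn_toL2 (hg.congr hgh.symm),
    ae_restrict_mem measurableSet_Ioo] with x hgx hhx hx
  rw [hgx, hhx, hgh (Ioo_subset_Icc_self hx)]

theorem toL2_sub (hg : ContinuousOn g (Icc 0 L)) (hh : ContinuousOn h (Icc 0 L)) :
    toL2 L (fun x => g x - h x) = toL2 L g - toL2 L h := by
  refine Lp.ext ?_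
  filter_upwards [coeFn_toL2 hg, coeFn_toL2 hh, coeFn_toL2 (hg.fun_sub hh),
    Lp.coeFn_sub (toL2 L g) (toL2 L h)] with x hgx hhx hghx hsub
  rw [hghx, hsub, Pi.sub_apply, hgx, hhx]

theorem inner_toL2 (hL : 0 ≤ L) (hg : ContinuousOn g (Icc 0 L)) (hh : ContinuousOn h (Icc 0 L)) :
    ⟪toL2 L g, toL2 L h⟫ = ∫ x in (0 : ℝ)..L, g x * h x := by
  rw [inner_eq_integral_mul, intervalIntegral.integral_of_le hL, integral_Ioc_eq_integral_Ioo]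
  refine integral_congr_ae ?_
  filter_upwards [coeFn_toL2 hg, coeFn_toL2 hh] with x hgx hhx
  rw [hgx, hhx]

theorem norm_toL2 (hL : 0 ≤ L) (hg : ContinuousOn g (Icc 0 L)) : ‖toL2 L g‖ = L2norm L g := by
  simp only [norm_eq_sqrt_real_inner, inner_toL2 hL hg hg, L2norm, sq]

theorem continuousOn_toL2 {K : Set ℝ} (hK : IsCompact K) {y : ℝ → ℝ → ℝ}
    (hy : ContinuousOn (fun p : ℝ × ℝ => y p.1 p.2) (K ×ˢ Icc 0 L)) :
    ContinuousOn (fun t => toL2 L (y t)) K := by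
  have hslice {t : ℝ} (ht : t ∈ K) : ContinuousOn (y t) (Icc 0 L) := hy.uncurry_left t ht
  intro t ht
  rw [ContinuousWithinAt, tendsto_iff_norm_sub_tendsto_zero]
  have hunif : TendstoUniformlyOn y (y t) (𝓝[K] t) (Icc 0 L) :=
    ((hK.prod isCompact_Icc).uniformContinuousOn_of_continuous hy).tendstoUniformlyOn ht
  set m : ℝ := measureUnivNNReal (volume.restrict (Ioo 0 L)) ^ (2 : ENNReal).toReal⁻¹
  have hm : 0 < m + 1 := add_pos_of_nonneg_of_pos (by positivity) one_pos
  refine Metric.tendsto_nhds.2 fun δ hδ => ?_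
  have hδm : 0 < δ / (m + 1) := div_pos hδ hm
  filter_upwards [Metric.tendstoUniformlyOn_iff.1 hunif _ hδm, self_mem_nhdsWithin] with s hs hsK
  rw [dist_zero_right, norm_norm, ← toL2_sub (hslice hsK) (hslice ht)]
  calc ‖toL2 L (fun x => y s x - y t x)‖ ≤ m * (δ / (m + 1)) := by
        refine Lp.norm_le_of_ae_bound hδm.le ?_
        filter_upwards [coeFn_toL2 ((hslice hsK).fun_sub (hslice ht)),
          ae_restrict_mem measurableSet_Ioo] with x hx hxΩ
        rw [hx, ← dist_eq_norm, dist_comm]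
        exact (hs x (Ioo_subset_Icc_self hxΩ)).le
    _ < δ := by
        rw [mul_div_assoc', div_lt_iff₀ hm]
        linarith

end SquareIntegrableClasses

section KdVProfile

variable {L c : ℝ} {g v : ℝ → ℝ}

/-- The spatial regularity and boundary conditions of a classical solution at a fixed time. -/
structure IsKdVProfile (L : ℝ) (g : ℝ → ℝ) : Prop where
  contDiffOn : ContDiffOn ℝ 3 g (Icc 0 L)
  left : g 0 = 0
  right : g L = 0
  derivWithin_right : derivWithin g (Icc 0 L) L = 0

/-- The time derivative `-(g' + g''' + c g g')` that the KdV equation with nonlinearity `c y y_x`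
assigns to the profile `g`. -/
noncomputable def kdvVelocity (L c : ℝ) (g : ℝ → ℝ) (x : ℝ) : ℝ :=
  -(derivWithin g (Icc 0 L) x + iteratedDerivWithin 3 g (Icc 0 L) x
    + c * (g x * derivWithin g (Icc 0 L) x))

/-- The energy flux between two profiles: with `w = g - v`, a primitive of
`-(V g - V v) w - c w² v' / 2`, where `V` is the velocity `kdvVelocity L c`. -/
noncomputable def kdvEnergyFlux (L c : ℝ) (g v : ℝ → ℝ) (x : ℝ) : ℝ :=
  (g x - v x) * (iteratedDerivWithin 2 g (Icc 0 L) x - iteratedDerivWithin 2 v (Icc 0 L) x)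
    - (derivWithin g (Icc 0 L) x - derivWithin v (Icc 0 L) x) ^ 2 / 2 + (g x - v x) ^ 2 / 2
    + c * ((g x - v x) ^ 3 / 3 + (g x - v x) ^ 2 * v x / 2)

theorem hasDerivAt_iteratedDerivWithin_Icc {a b x : ℝ} {n : WithTop ℕ∞} {k : ℕ}
    (hg : ContDiffOn ℝ n g (Icc a b)) (hk : k < n) (hx : x ∈ Ioo a b) :
    HasDerivAt (iteratedDerivWithin k g (Icc a b)) (iteratedDerivWithin (k + 1) g (Icc a b) x)
      x := by
  rw [iteratedDerivWithin_succ]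
  exact (hg.differentiableOn_iteratedDerivWithin hk (uniqueDiffOn_Icc (hx.1.trans hx.2)) x
    (Ioo_subset_Icc_self hx)).hasDerivWithinAt.hasDerivAt (Icc_mem_nhds hx.1 hx.2)

namespace IsKdVProfile

theorem continuousOn_iteratedDerivWithin (hg : IsKdVProfile L g) (hL : 0 < L) {k : ℕ}
    (hk : k ≤ 3) : ContinuousOn (iteratedDerivWithin k g (Icc 0 L)) (Icc 0 L) :=
  hg.contDiffOn.continuousOn_iteratedDerivWithin (mod_cast hk) (uniqueDiffOn_Icc hL)

theorem continuousOn_derivWithin (hg : IsKdVProfile L g) (hL : 0 < L) :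
    ContinuousOn (derivWithin g (Icc 0 L)) (Icc 0 L) := by
  simpa only [iteratedDerivWithin_one] using hg.continuousOn_iteratedDerivWithin hL (k := 1)
    (by norm_num)

theorem continuousOn_kdvVelocity (hg : IsKdVProfile L g) (hL : 0 < L) :
    ContinuousOn (fun p : ℝ × ℝ => kdvVelocity L p.1 g p.2) (univ ×ˢ Icc 0 L) := by
  have hsnd : MapsTo Prod.snd ((univ : Set ℝ) ×ˢ Icc 0 L) (Icc 0 L) := fun p hp => hp.2
  have h₀ := hg.contDiffOn.continuousOn.comp continuousOn_snd hsnd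
  have h₁ := (hg.continuousOn_derivWithin hL).comp continuousOn_snd hsnd
  have h₃ := (hg.continuousOn_iteratedDerivWithin hL le_rfl).comp continuousOn_snd hsnd
  exact ((h₁.add h₃).add (continuousOn_fst.mul (h₀.mul h₁))).neg

theorem continuousOn_kdvVelocity_right (hg : IsKdVProfile L g) (hL : 0 < L) :
    ContinuousOn (kdvVelocity L c g) (Icc 0 L) :=
  (hg.continuousOn_kdvVelocity hL).uncurry_left (f := fun c => kdvVelocity L c g) c (mem_univ c)

theorem sub (hg : IsKdVProfile L g) (hv : IsKdVProfile L v) (hL : 0 ≤ L) :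
    IsKdVProfile L fun x => g x - v x where
  contDiffOn := hg.contDiffOn.sub hv.contDiffOn
  left := by rw [hg.left, hv.left, sub_zero]
  right := by rw [hg.right, hv.right, sub_zero]
  derivWithin_right := by
    rw [derivWithin_fun_sub (hg.contDiffOn.differentiableOn (by norm_num) L (right_mem_Icc.2 hL))
      (hv.contDiffOn.differentiableOn (by norm_num) L (right_mem_Icc.2 hL)),
      hg.derivWithin_right, hv.derivWithin_right, sub_zero]

theorem kdvVelocity_zero_sub (hg : IsKdVProfile L g) (hv : IsKdVProfile L v) {x : ℝ}
    (hx : x ∈ Ioo 0 L) :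
    kdvVelocity L 0 (fun x => g x - v x) x = kdvVelocity L 0 g x - kdvVelocity L 0 v x := by
  have hx' := Ioo_subset_Icc_self hx
  simp only [kdvVelocity, zero_mul, add_zero]
  rw [derivWithin_fun_sub (hg.contDiffOn.differentiableOn (by norm_num) x hx')
      (hv.contDiffOn.differentiableOn (by norm_num) x hx'),
    show (fun x => g x - v x) = g - v from rfl,
    iteratedDerivWithin_sub hx' (uniqueDiffOn_Icc (hx.1.trans hx.2)) (hg.contDiffOn x hx')
      (hv.contDiffOn x hx')]
  ring

theorem zero : IsKdVProfile L fun _ => 0 where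
  contDiffOn := contDiffOn_const
  left := rfl
  right := rfl
  derivWithin_right := by rw [derivWithin_fun_const, Pi.zero_apply]

theorem hasDerivAt_kdvEnergyFlux (hg : IsKdVProfile L g) (hv : IsKdVProfile L v) {x : ℝ}
    (hx : x ∈ Ioo 0 L) : HasDerivAt (kdvEnergyFlux L c g v)
      (-(c / 2) * ((g x - v x) ^ 2 * derivWithin v (Icc 0 L) x)
        - (kdvVelocity L c g x - kdvVelocity L c v x) * (g x - v x)) x := by
  have hderiv {k : ℕ} (hk : k < 3) {f : ℝ → ℝ} (hf : IsKdVProfile L f) :=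
    hasDerivAt_iteratedDerivWithin_Icc hf.contDiffOn (k := k) (mod_cast hk) hx
  have hg₁ := hderiv (k := 0) (by norm_num) hg
  have hv₁ := hderiv (k := 0) (by norm_num) hv
  have hg₂ := hderiv (k := 1) (by norm_num) hg
  have hv₂ := hderiv (k := 1) (by norm_num) hv
  simp only [iteratedDerivWithin_zero, zero_add, iteratedDerivWithin_one] at hg₁ hv₁ hg₂ hv₂
  have hw₁ := hg₁.fun_sub hv₁
  have hw₂ := hg₂.fun_sub hv₂
  have hw₃ := (hderiv (k := 2) (by norm_num) hg).fun_sub (hderiv (k := 2) (by norm_num) hv)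
  refine ((((hw₁.fun_mul hw₃).fun_sub ((hw₂.fun_pow 2).div_const 2)).fun_add
    ((hw₁.fun_pow 2).div_const 2)).fun_add ((((hw₁.fun_pow 3).div_const 3).fun_add
      (((hw₁.fun_pow 2).fun_mul hv₁).div_const 2)).const_mul c)).congr_deriv ?_
  simp only [kdvVelocity]
  push_cast
  ring

theorem kdvEnergyFlux_zero_le_kdvEnergyFlux_right (hg : IsKdVProfile L g)
    (hv : IsKdVProfile L v) : kdvEnergyFlux L c g v 0 ≤ kdvEnergyFlux L c g v L := by
  simp only [kdvEnergyFlux, hg.left, hg.right, hg.derivWithin_right, hv.left, hv.right,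
    hv.derivWithin_right]
  linarith [sq_nonneg (derivWithin g (Icc 0 L) 0 - derivWithin v (Icc 0 L) 0)]

theorem integral_kdvVelocity_sub_mul_sub_le (hg : IsKdVProfile L g) (hv : IsKdVProfile L v)
    (hL : 0 < L) :
    ∫ x in (0 : ℝ)..L, (kdvVelocity L c g x - kdvVelocity L c v x) * (g x - v x) ≤
      ∫ x in (0 : ℝ)..L, -(c / 2) * ((g x - v x) ^ 2 * derivWithin v (Icc 0 L) x) := by
  have hg₀ := hg.contDiffOn.continuousOn
  have hv₀ := hv.contDiffOn.continuousOn
  have hg₁ := hg.continuousOn_derivWithin hL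
  have hv₁ := hv.continuousOn_derivWithin hL
  have hg₂ := hg.continuousOn_iteratedDerivWithin hL (k := 2) (by norm_num)
  have hv₂ := hv.continuousOn_iteratedDerivWithin hL (k := 2) (by norm_num)
  have hgV := hg.continuousOn_kdvVelocity_right hL (c := c)
  have hvV := hv.continuousOn_kdvVelocity_right hL (c := c)
  have hint {f : ℝ → ℝ} (hf : ContinuousOn f (Icc 0 L)) : IntervalIntegrable f volume 0 L :=
    hf.intervalIntegrable_of_Icc hL.le
  have hflux : ContinuousOn (kdvEnergyFlux L c g v) (Icc 0 L) := by
    unfold kdvEnergyFlux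
    fun_prop
  have hFTC := intervalIntegral.integral_eq_sub_of_hasDerivAt_of_le hL.le hflux
    (fun x hx => hg.hasDerivAt_kdvEnergyFlux hv hx) (hint (by fun_prop))
  rw [intervalIntegral.integral_sub (hint (by fun_prop)) (hint (by fun_prop))] at hFTC
  linarith [hg.kdvEnergyFlux_zero_le_kdvEnergyFlux_right hv (c := c)]

theorem inner_toL2_kdvVelocity_nonpos (hg : IsKdVProfile L g) (hL : 0 < L) :
    ⟪toL2 L (kdvVelocity L c g), toL2 L g⟫ ≤ 0 := by
  rw [inner_toL2 hL.le (hg.continuousOn_kdvVelocity_right hL) hg.contDiffOn.continuousOn]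
  simpa [kdvVelocity] using hg.integral_kdvVelocity_sub_mul_sub_le (c := c) .zero hL

theorem exists_inner_toL2_kdvVelocity_sub_le (hv : IsKdVProfile L v) (hL : 0 < L) (B : ℝ) :
    ∃ M, ∀ c, |c| ≤ B → ∀ g, IsKdVProfile L g →
      ⟪toL2 L (kdvVelocity L c g) - toL2 L (kdvVelocity L c v), toL2 L g - toL2 L v⟫ ≤
        M * ‖toL2 L g - toL2 L v‖ ^ 2 := by
  obtain ⟨D, hD⟩ := isCompact_Icc.exists_bound_of_continuousOn (hv.continuousOn_derivWithin hL)
  refine ⟨B * D / 2, fun c hc g hg => ?_⟩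
  have hg₀ := hg.contDiffOn.continuousOn
  have hv₀ := hv.contDiffOn.continuousOn
  have hv₁ := hv.continuousOn_derivWithin hL
  have hgV := hg.continuousOn_kdvVelocity_right hL (c := c)
  have hvV := hv.continuousOn_kdvVelocity_right hL (c := c)
  have hint {f : ℝ → ℝ} (hf : ContinuousOn f (Icc 0 L)) : IntervalIntegrable f volume 0 L :=
    hf.intervalIntegrable_of_Icc hL.le
  rw [← toL2_sub hgV hvV, ← toL2_sub hg₀ hv₀, inner_toL2 hL.le (hgV.fun_sub hvV) (hg₀.fun_sub hv₀),
    ← real_inner_self_eq_norm_sq, inner_toL2 hL.le (hg₀.fun_sub hv₀) (hg₀.fun_sub hv₀),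
    ← intervalIntegral.integral_const_mul]
  refine (hg.integral_kdvVelocity_sub_mul_sub_le hv hL).trans <|
    intervalIntegral.integral_mono_on hL.le (hint (by fun_prop)) (hint (by fun_prop))
      fun x hx => ?_
  have hcv : -c * derivWithin v (Icc 0 L) x ≤ B * D := by
    refine (le_abs_self _).trans ?_
    rw [abs_mul, abs_neg]
    exact mul_le_mul hc (hD x hx) (abs_nonneg _) ((abs_nonneg c).trans hc)
  linarith [mul_le_mul_of_nonneg_right hcv (sq_nonneg (g x - v x))]

theorem exists_inner_toL2_kdvVelocity_le (hv : IsKdVProfile L v) (hL : 0 < L) (B : ℝ) :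
    ∃ M, ∀ c, |c| ≤ B → ∀ g, IsKdVProfile L g →
      ⟪toL2 L (kdvVelocity L c g), toL2 L g - toL2 L v⟫ ≤
        M * (‖toL2 L g - toL2 L v‖ + ‖toL2 L g - toL2 L v‖ ^ 2) := by
  obtain ⟨M₁, hM₁⟩ := (isCompact_Icc (a := -B) (b := B)).exists_bound_of_continuousOn <|
    continuousOn_toL2 (y := fun c => kdvVelocity L c v) isCompact_Icc
      ((hv.continuousOn_kdvVelocity hL).mono (prod_mono_left (subset_univ _)))
  obtain ⟨M₂, hM₂⟩ := hv.exists_inner_toL2_kdvVelocity_sub_le hL B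
  refine ⟨max M₁ M₂, fun c hc g hg => ?_⟩
  set d := toL2 L g - toL2 L v
  have hsplit : ⟪toL2 L (kdvVelocity L c g), d⟫ =
      ⟪toL2 L (kdvVelocity L c v), d⟫ +
        ⟪toL2 L (kdvVelocity L c g) - toL2 L (kdvVelocity L c v), d⟫ := by
    rw [← inner_add_left, add_sub_cancel]
  rw [hsplit, mul_add]
  refine add_le_add ?_ ?_
  · exact (real_inner_le_norm _ _).trans <| mul_le_mul_of_nonneg_right
      ((hM₁ c (abs_le.1 hc)).trans (le_max_left _ _)) (norm_nonneg _)
  · exact (hM₂ c hc g hg).trans <| mul_le_mul_of_nonneg_right (le_max_right _ _) (sq_nonneg _)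

end IsKdVProfile

end KdVProfile

section KdVSolution

variable {L T τ ε η B t : ℝ} {c c' Φ : ℝ → ℝ} {y z : ℝ → ℝ → ℝ}

/-- A classical solution of `y_t + y_x + y_xxx + c(t) y y_x = 0` on `[0,T] × [0,L]` with the KdV
boundary conditions and a bounded coefficient `c` that need not be continuous. -/
structure IsKdVSol (L T : ℝ) (c : ℝ → ℝ) (y : ℝ → ℝ → ℝ) : Prop where
  profile : ∀ t ∈ Icc 0 T, IsKdVProfile L (y t)
  continuousOn : ContinuousOn (fun p : ℝ × ℝ => y p.1 p.2) (Icc 0 T ×ˢ Icc 0 L)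
  hasDerivAt : ∀ x ∈ Ioo 0 L, ∀ t ∈ Ioo 0 T,
    HasDerivAt (fun s => y s x) (kdvVelocity L (c t) (y t) x) t
  continuousOn_velocity : ∀ x ∈ Ioo 0 L,
    ContinuousOn (fun t => kdvVelocity L (c t) (y t) x) (Ioo 0 T)
  bounded_coeff : ∃ B, ∀ t ∈ Ioo 0 T, |c t| ≤ B

theorem antitoneOn_Icc_of_antitoneOn_Ioo {φ : ℝ → ℝ} {a b : ℝ} (hφ : ContinuousOn φ (Icc a b))
    (hanti : AntitoneOn φ (Ioo a b)) : AntitoneOn φ (Icc a b) := by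
  rcases le_or_gt b a with hba | hab
  · exact (subsingleton_Icc_of_ge hba).antitoneOn φ
  rw [← Ioc_insert_left hab.le, ← Ioo_insert_right hab]
  have hright : AntitoneOn φ (insert b (Ioo a b)) :=
    (hanti.dual_right.insert_of_continuousWithinAt
      (mem_closure_iff_clusterPt.1 (by rw [closure_Ioo hab.ne]; exact right_mem_Icc.2 hab.le))
      ((hφ b (right_mem_Icc.2 hab.le)).mono Ioo_subset_Icc_self)).dual_right
  rw [Ioo_insert_right hab] at hright ⊢
  exact (hright.dual_right.insert_of_continuousWithinAt
    (mem_closure_iff_clusterPt.1 (by rw [closure_Ioc hab.ne]; exact left_mem_Icc.2 hab.le))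
    ((hφ a (left_mem_Icc.2 hab.le)).mono Ioc_subset_Icc_self)).dual_right

theorem IsModifiedKdVSol.isKdVSol (hy : IsModifiedKdVSol L T ε Φ y) (hT : 0 < T)
    (hε : 0 < ε) (hΦ : ∀ r ∈ Ici (0 : ℝ), |Φ r| ≤ B) :
    IsKdVSol L T (fun t => Φ (L2norm L (y t) / ε)) y := by
  obtain ⟨hspace, htime, hcont, heq, hbdry⟩ := hy
  have hvelocity {t x : ℝ} (ht : t ∈ Ioo 0 T) (hx : x ∈ Ioo 0 L) :
      derivWithin (fun s => y s x) (Icc 0 T) t =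
        kdvVelocity L (Φ (L2norm L (y t) / ε)) (y t) x := by
    rw [kdvVelocity]
    linarith [heq t ht x hx]
  exact {
    profile := fun t ht => ⟨hspace t ht, (hbdry t ht).1, (hbdry t ht).2.1, (hbdry t ht).2.2⟩
    continuousOn := hcont
    hasDerivAt := fun x hx t ht => by
      rw [← hvelocity ht hx]
      exact ((htime x (Ioo_subset_Icc_self hx)).differentiableOn one_ne_zero t
        (Ioo_subset_Icc_self ht)).hasDerivWithinAt.hasDerivAt (Icc_mem_nhds ht.1 ht.2)
    continuousOn_velocity := fun x hx =>
      (((htime x (Ioo_subset_Icc_self hx)).continuousOn_derivWithin (uniqueDiffOn_Icc hT)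
        le_rfl).mono Ioo_subset_Icc_self).congr fun t ht => (hvelocity ht hx).symm
    bounded_coeff := ⟨B, fun t _ => hΦ _ (div_nonneg (Real.sqrt_nonneg _) hε.le)⟩ }

theorem IsLinearKdVSol.isModifiedKdVSol_zero (hz : IsLinearKdVSol L T z) :
    IsModifiedKdVSol L T ε 0 z := by
  simpa only [IsModifiedKdVSol, Pi.zero_apply, zero_mul, add_zero, IsLinearKdVSol] using hz

theorem IsLinearKdVSol.isKdVSol (hz : IsLinearKdVSol L T z) (hT : 0 < T) :
    IsKdVSol L T 0 z :=
  hz.isModifiedKdVSol_zero.isKdVSol hT one_pos (B := 0) fun _ _ => abs_zero.le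

namespace IsKdVSol

theorem sub (hy : IsKdVSol L T 0 y) (hz : IsKdVSol L T 0 z) (hL : 0 ≤ L) :
    IsKdVSol L T 0 fun t x => y t x - z t x where
  profile t ht := (hy.profile t ht).sub (hz.profile t ht) hL
  continuousOn := hy.continuousOn.sub hz.continuousOn
  hasDerivAt x hx t ht := by
    have ht' := Ioo_subset_Icc_self ht
    rw [Pi.zero_apply, (hy.profile t ht').kdvVelocity_zero_sub (hz.profile t ht') hx]
    exact (hy.hasDerivAt x hx t ht).sub (hz.hasDerivAt x hx t ht)
  continuousOn_velocity x hx :=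
    ((hy.continuousOn_velocity x hx).sub (hz.continuousOn_velocity x hx)).congr fun t ht =>
      (hy.profile t (Ioo_subset_Icc_self ht)).kdvVelocity_zero_sub
        (hz.profile t (Ioo_subset_Icc_self ht)) hx
  bounded_coeff := ⟨0, fun _ _ => abs_zero.le⟩

theorem mono (hy : IsKdVSol L T c y) (hτ : τ ≤ T) : IsKdVSol L τ c y where
  profile t ht := hy.profile t (Icc_subset_Icc_right hτ ht)
  continuousOn := hy.continuousOn.mono (prod_mono_left (Icc_subset_Icc_right hτ))
  hasDerivAt x hx t ht := hy.hasDerivAt x hx t (Ioo_subset_Ioo_right hτ ht)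
  continuousOn_velocity x hx := (hy.continuousOn_velocity x hx).mono (Ioo_subset_Ioo_right hτ)
  bounded_coeff := hy.bounded_coeff.imp fun _ hB t ht => hB t (Ioo_subset_Ioo_right hτ ht)

theorem congr_coeff (hy : IsKdVSol L T c y) (hc : EqOn c c' (Ioo 0 T)) :
    IsKdVSol L T c' y where
  profile := hy.profile
  continuousOn := hy.continuousOn
  hasDerivAt x hx t ht := hc ht ▸ hy.hasDerivAt x hx t ht
  continuousOn_velocity x hx := (hy.continuousOn_velocity x hx).congr fun t ht => by
    simp only [hc ht]
  bounded_coeff := hy.bounded_coeff.imp fun _ hB t ht => hc ht ▸ hB t ht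

theorem continuousOn_toL2 (hy : IsKdVSol L T c y) :
    ContinuousOn (fun t => toL2 L (y t)) (Icc 0 T) :=
  _root_.continuousOn_toL2 isCompact_Icc hy.continuousOn

theorem isL2Flow (hy : IsKdVSol L T c y) (hL : 0 < L) :
    IsL2Flow (volume.restrict (Ioo 0 L)) (Ioo 0 L) (Ioo 0 T) (fun t => toL2 L (y t))
      (fun t => toL2 L (kdvVelocity L (c t) (y t))) y fun t => kdvVelocity L (c t) (y t) where
  isOpen := isOpen_Ioo
  ordConnected := ordConnected_Ioo
  ae_mem := ae_restrict_mem measurableSet_Ioo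
  continuousOn := hy.continuousOn_toL2.mono Ioo_subset_Icc_self
  coeFn_curve t ht := coeFn_toL2 (hy.profile t (Ioo_subset_Icc_self ht)).contDiffOn.continuousOn
  coeFn_velocity t ht := coeFn_toL2 <|
    (hy.profile t (Ioo_subset_Icc_self ht)).continuousOn_kdvVelocity_right hL
  hasDerivAt := hy.hasDerivAt
  continuousOn_velocity := hy.continuousOn_velocity
  bounded_velocity t ht := by
    obtain ⟨M, hM⟩ := isCompact_Icc.exists_bound_of_continuousOn <|
      (hy.profile t (Ioo_subset_Icc_self ht)).continuousOn_kdvVelocity_right hL (c := c t)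
    exact ⟨M, fun x hx => hM x (Ioo_subset_Icc_self hx)⟩
  anchor a ha := by
    obtain ⟨B, hB⟩ := hy.bounded_coeff
    obtain ⟨M, hM⟩ :=
      (hy.profile a (Ioo_subset_Icc_self ha)).exists_inner_toL2_kdvVelocity_le hL B
    exact ⟨M, fun t ht => hM (c t) (hB t ht) (y t) (hy.profile t (Ioo_subset_Icc_self ht))⟩

theorem antitoneOn_norm_toL2 (hy : IsKdVSol L T c y) (hL : 0 < L) :
    AntitoneOn (fun t => ‖toL2 L (y t)‖) (Icc 0 T) := by
  have hanti : AntitoneOn (fun t => ‖toL2 L (y t)‖) (Ioo 0 T) :=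
    (hy.isL2Flow hL).antitoneOn_norm fun t ht =>
      (hy.profile t (Ioo_subset_Icc_self ht)).inner_toL2_kdvVelocity_nonpos hL
  exact antitoneOn_Icc_of_antitoneOn_Ioo hy.continuousOn_toL2.norm hanti

theorem toL2_sub (hy : IsKdVSol L T c y) (hz : IsKdVSol L T c' z) (ht : t ∈ Icc 0 T) :
    toL2 L (fun x => y t x - z t x) = toL2 L (y t) - toL2 L (z t) :=
  _root_.toL2_sub (hy.profile t ht).contDiffOn.continuousOn
    (hz.profile t ht).contDiffOn.continuousOn

/-- Since the norm of `y` decreases, it is at least `η` throughout `[0, t]`, where `y` is therefore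
a solution of the linear equation, as is `z`. -/
theorem toL2_eq_of_le_norm (hy : IsKdVSol L T c y) (hz : IsKdVSol L T 0 z) (hL : 0 < L)
    (hc : ∀ t ∈ Icc 0 T, η ≤ ‖toL2 L (y t)‖ → c t = 0) (h₀ : toL2 L (y 0) = toL2 L (z 0))
    (ht : t ∈ Icc 0 T) (hηt : η ≤ ‖toL2 L (y t)‖) : toL2 L (y t) = toL2 L (z t) := by
  have hlin : IsKdVSol L t 0 y := (hy.mono ht.2).congr_coeff fun s hs =>
    have hsT : s ∈ Icc 0 T := ⟨hs.1.le, hs.2.le.trans ht.2⟩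
    hc s hsT <| hηt.trans <| hy.antitoneOn_norm_toL2 hL hsT ht hs.2.le
  have hzt : IsKdVSol L t 0 z := hz.mono ht.2
  have hmono := (hlin.sub hzt hL.le).antitoneOn_norm_toL2 hL (left_mem_Icc.2 ht.1)
    (right_mem_Icc.2 ht.1) ht.1
  simp only [hlin.toL2_sub hzt (left_mem_Icc.2 ht.1),
    hlin.toL2_sub hzt (right_mem_Icc.2 ht.1), h₀, sub_self, norm_zero] at hmono
  exact sub_eq_zero.1 (norm_le_zero_iff.1 hmono)

theorem norm_linear_le_of_norm_le (hy : IsKdVSol L T c y) (hz : IsKdVSol L T 0 z) (hL : 0 < L)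
    (hc : ∀ t ∈ Icc 0 T, η ≤ ‖toL2 L (y t)‖ → c t = 0) (h₀ : toL2 L (y 0) = toL2 L (z 0))
    (ht : t ∈ Icc 0 T) (hηt : ‖toL2 L (y t)‖ ≤ η) : ‖toL2 L (z t)‖ ≤ η := by
  suffices hτ : ∃ τ ∈ Icc 0 t, ‖toL2 L (y τ)‖ ≤ η ∧ toL2 L (y τ) = toL2 L (z τ) by
    obtain ⟨τ, hτ, hle, heq⟩ := hτ
    rw [heq] at hle
    exact (hz.antitoneOn_norm_toL2 hL ⟨hτ.1, hτ.2.trans ht.2⟩ ht hτ.2).trans hle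
  rcases le_total ‖toL2 L (y 0)‖ η with h0η | h0η
  · exact ⟨0, left_mem_Icc.2 ht.1, h0η, h₀⟩
  · obtain ⟨τ, hτ, hτη⟩ := intermediate_value_Icc' ht.1
      (hy.continuousOn_toL2.mono (Icc_subset_Icc_right ht.2)).norm ⟨hηt, h0η⟩
    exact ⟨τ, hτ, hτη.le,
      hy.toL2_eq_of_le_norm hz hL hc h₀ ⟨hτ.1, hτ.2.trans ht.2⟩ hτη.ge⟩

theorem norm_toL2_sub_le (hy : IsKdVSol L T c y) (hz : IsKdVSol L T 0 z) (hL : 0 < L)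
    (hη : 0 ≤ η) (hc : ∀ t ∈ Icc 0 T, η ≤ ‖toL2 L (y t)‖ → c t = 0)
    (h₀ : toL2 L (y 0) = toL2 L (z 0)) (ht : t ∈ Icc 0 T) :
    ‖toL2 L (y t) - toL2 L (z t)‖ ≤ 2 * η := by
  rcases le_total η ‖toL2 L (y t)‖ with hηt | hηt
  · rw [hy.toL2_eq_of_le_norm hz hL hc h₀ ht hηt, sub_self, norm_zero]
    linarith
  · linarith [norm_sub_le (toL2 L (y t)) (toL2 L (z t)),
      hy.norm_linear_le_of_norm_le hz hL hc h₀ ht hηt]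

end IsKdVSol

theorem IsModifiedKdVSol.norm_toL2_sub_le (hy : IsModifiedKdVSol L T ε Φ y)
    (hz : IsLinearKdVSol L T z) (hL : 0 < L) (hT : 0 < T) (hε : 0 < ε)
    (hΦ : ∀ r ∈ Ici (0 : ℝ), |Φ r| ≤ B) (hΦ₁ : ∀ r ∈ Ici (1 : ℝ), Φ r = 0)
    (h₀ : EqOn (y 0) (z 0) (Icc 0 L)) (ht : t ∈ Icc 0 T) :
    ‖toL2 L (y t) - toL2 L (z t)‖ ≤ 2 * ε := by
  have hslice {s : ℝ} (hs : s ∈ Icc 0 T) : ContinuousOn (y s) (Icc 0 L) := (hy.1 s hs).continuousOn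
  refine (hy.isKdVSol hT hε hΦ).norm_toL2_sub_le (hz.isKdVSol hT) hL hε.le (fun s hs hεs => ?_)
    (toL2_congr (hslice (left_mem_Icc.2 hT.le)) h₀) ht
  rw [norm_toL2 hL.le (hslice hs)] at hεs
  exact hΦ₁ _ ((one_le_div hε).2 hεs)

end KdVSolution

theorem modifiedKdV_remainder_difference_bounded_general {L T ε B t : ℝ} {Φ : ℝ → ℝ}
    {y ybar z zbar : ℝ → ℝ → ℝ} (hL : 0 < L) (hT : 0 < T) (hε : 0 < ε)
    (hΦ : ∀ r ∈ Ici (0 : ℝ), |Φ r| ≤ B) (hΦ₁ : ∀ r ∈ Ici (1 : ℝ), Φ r = 0)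
    (hy : IsModifiedKdVSol L T ε Φ y) (hybar : IsModifiedKdVSol L T ε Φ ybar)
    (hz : IsLinearKdVSol L T z) (hzbar : IsLinearKdVSol L T zbar)
    (hyz : EqOn (y 0) (z 0) (Icc 0 L)) (hyzbar : EqOn (ybar 0) (zbar 0) (Icc 0 L))
    (ht : t ∈ Icc 0 T) :
    L2norm L (fun x => (y t x - z t x) - (ybar t x - zbar t x)) ≤ 4 * ε := by
  have hyt := (hy.1 t ht).continuousOn
  have hybart := (hybar.1 t ht).continuousOn
  have hzt := (hz.1 t ht).continuousOn
  have hzbart := (hzbar.1 t ht).continuousOn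
  rw [← norm_toL2 hL.le ((hyt.fun_sub hzt).fun_sub (hybart.fun_sub hzbart)),
    toL2_sub (hyt.fun_sub hzt) (hybart.fun_sub hzbart), toL2_sub hyt hzt, toL2_sub hybart hzbart]
  linarith [norm_sub_le (toL2 L (y t) - toL2 L (z t)) (toL2 L (ybar t) - toL2 L (zbar t)),
    hy.norm_toL2_sub_le hz hL hT hε hΦ hΦ₁ hyz ht,
    hybar.norm_toL2_sub_le hzbar hL hT hε hΦ hΦ₁ hyzbar ht]

/-- uniform boundedness of the difference of nonlinear remainders.
For solutions `y, ȳ` of the modified KdV system and `z, z̄` of the linearized KdV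
system with respective initial data `y₀, ȳ₀`, setting
`Δ(t,·) = (y(t,·) − z(t,·)) − (ȳ(t,·) − z̄(t,·))`, there is a constant `C > 0`
independent of `ε ∈ (0,1]` and of the data such that `‖Δ(t,·)‖_{L²(0,L)} ≤ C` for
all `t ∈ [0,T]`. -/
theorem modifiedKdV_remainder_difference_bounded (L T : ℝ) (hL : 0 < L) (hT : 0 < T)
    (Φ : ℝ → ℝ) (hΦ : IsCutoff Φ) :
    ∃ C > 0, ∀ ε ∈ Ioc (0:ℝ) 1, ∀ y₀ ybar₀ : ℝ → ℝ,
      ∀ y ybar z zbar : ℝ → ℝ → ℝ,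
      IsModifiedKdVSol L T ε Φ y → IsModifiedKdVSol L T ε Φ ybar →
      IsLinearKdVSol L T z → IsLinearKdVSol L T zbar →
      (∀ x ∈ Icc (0:ℝ) L, y 0 x = y₀ x) →
      (∀ x ∈ Icc (0:ℝ) L, ybar 0 x = ybar₀ x) →
      (∀ x ∈ Icc (0:ℝ) L, z 0 x = y₀ x) →
      (∀ x ∈ Icc (0:ℝ) L, zbar 0 x = ybar₀ x) →
      ∀ t ∈ Icc (0:ℝ) T,
        L2norm L (fun x => (y t x - z t x) - (ybar t x - zbar t x)) ≤ C := by
  obtain ⟨-, hΦ01, -, hΦ₁, -⟩ := hΦ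
  refine ⟨4, by norm_num, fun ε hε y₀ ybar₀ y ybar z zbar hy hybar hz hzbar hy₀ hybar₀ hz₀ hzbar₀
    t ht => ?_⟩
  have hΦ (r : ℝ) (hr : r ∈ Ici 0) : |Φ r| ≤ 1 :=
    abs_le.2 ⟨neg_one_lt_zero.le.trans (hΦ01 r hr).1, (hΦ01 r hr).2⟩
  have hbound := modifiedKdV_remainder_difference_bounded_general hL hT hε.1 hΦ hΦ₁
    hy hybar hz hzbar (fun x hx => (hy₀ x hx).trans (hz₀ x hx).symm)
    (fun x hx => (hybar₀ x hx).trans (hzbar₀ x hx).symm) ht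
  linarith [hε.2]
end

section
/- Let L > 0 and T > 0. There exist ε₀ ∈ (0,1] and a function C̃ : (0,ε₀] → (0,∞) with C̃(ε) → 0 as ε → 0⁺, such that for every ε ∈ (0,ε₀], every pair of initial data y₀, ȳ₀ ∈ L²(0,L), every pair of classical solutions y, ȳ of the modified KdV system (with cutoff Φ_ε) on [0,T] with y(0,·) = y₀, ȳ(0,·) = ȳ₀, and every pair of classical solutions z, z̄ of the linearized KdV system on [0,T] with z(0,·) = y₀, z̄(0,·) = ȳ₀, one has, for all t ∈ [0,T], ‖(y(t,·) − z(t,·)) − (ȳ(t,·) − z̄(t,·))‖_{L²(0,L)} ≤ C̃(ε) ‖y₀ − ȳ₀‖_{L²(0,L)}. (I.e. the nonlinear remainder map R(t) : y₀ ↦ y(t,·) − z(t,·) is globally Lipschitz with a Lipschitz constant tending to 0 as ε → 0⁺.) -/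
open Set Real MeasureTheory Filter

/-!
The weight `1 + x` turns the third-order operator into a dissipative one: up to an exponential
damping, the weighted energy of a solution with flux `q` decreases at rate `‖uₓ‖²` up to `O(‖q‖²)`.
The flux `Φ_ε(‖y‖) y² / 2` vanishes once `‖y‖ ≥ ε`, so the fluxes of two solutions `y`, `ȳ` with
difference `w = y - ȳ` differ by `O(ε ‖wₓ‖ + m ‖w‖)`, where `m` is the size of those of `yₓ`, `ȳₓ`
for which `‖y‖ ≤ ε` or `‖ȳ‖ ≤ ε` respectively. The first term is absorbed by the dissipation of `w`.
For the second, the saturated energies `ε² E / (E + ε²)` of `y` and `ȳ` decrease at rate `≳ m²` and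
are at most `ε²` for all data, so the time integral of `m²` is `O(ε²)`. Hence the Gronwall factor
for `w` is bounded, and the remainder, which starts at zero and is driven by the flux difference,
has energy `O(ε²) ‖y₀ - ȳ₀‖²`.

Classical solutions are only assumed differentiable in time pointwise in `x`. Differentiating the
energy requires that `t ↦ u(t)` is locally Lipschitz in `L²`, which follows from Baire's theorem:
otherwise the velocity is bounded on a portion of the closed set of bad times, whereas the energy
estimate bounds the increments across the gaps of this set.
-/

namespace KdV

open scoped Topology NNReal

section L2Norm

variable {L B : ℝ} {f g : ℝ → ℝ}

lemma L2norm_nonneg (L : ℝ) (f : ℝ → ℝ) : 0 ≤ L2norm L f :=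
  Real.sqrt_nonneg _

lemma L2norm_sq (hL : 0 ≤ L) (f : ℝ → ℝ) : L2norm L f ^ 2 = ∫ x in (0:ℝ)..L, f x ^ 2 :=
  Real.sq_sqrt (intervalIntegral.integral_nonneg hL fun _ _ => sq_nonneg _)

lemma L2norm_congr (hL : 0 ≤ L) (hfg : EqOn f g (Icc 0 L)) : L2norm L f = L2norm L g := by
  unfold L2norm
  rw [intervalIntegral.integral_congr (g := fun x => g x ^ 2) fun x hx => ?_]
  simp only [hfg (uIcc_of_le hL ▸ hx)]

lemma L2norm_zero (L : ℝ) : L2norm L 0 = 0 := by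
  simp [L2norm]

lemma L2norm_sub_comm (L : ℝ) (f g : ℝ → ℝ) : L2norm L (f - g) = L2norm L (g - f) := by
  simp only [L2norm, Pi.sub_apply, sub_sq_comm]

lemma L2norm_const_mul (L c : ℝ) (f : ℝ → ℝ) :
    L2norm L (fun x => c * f x) = |c| * L2norm L f := by
  simp only [L2norm, mul_pow, intervalIntegral.integral_const_mul, Real.sqrt_mul (sq_nonneg c),
    Real.sqrt_sq_eq_abs]

lemma L2norm_const (L c : ℝ) : L2norm L (fun _ => c) = √L * |c| := by
  rw [L2norm, intervalIntegral.integral_const, smul_eq_mul, sub_zero,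
    Real.sqrt_mul' L (sq_nonneg c), Real.sqrt_sq_eq_abs]

lemma L2norm_mono (hL : 0 ≤ L) (hf : ContinuousOn f (Icc 0 L)) (hg : ContinuousOn g (Icc 0 L))
    (hfg : ∀ x ∈ Icc 0 L, |f x| ≤ |g x|) : L2norm L f ≤ L2norm L g :=
  Real.sqrt_le_sqrt <| intervalIntegral.integral_mono_on hL
    ((hf.pow 2).intervalIntegrable_of_Icc hL) ((hg.pow 2).intervalIntegrable_of_Icc hL)
    fun x hx => sq_le_sq.2 (hfg x hx)

lemma L2norm_le_of_abs_le (hL : 0 ≤ L) (hf : ContinuousOn f (Icc 0 L))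
    (hB : ∀ x ∈ Icc 0 L, |f x| ≤ B) : L2norm L f ≤ √L * B := by
  have hB0 : 0 ≤ B := (abs_nonneg _).trans (hB 0 (left_mem_Icc.2 hL))
  have h := L2norm_mono hL hf (continuousOn_const (c := B)) fun x hx =>
    (hB x hx).trans (le_abs_self B)
  rwa [L2norm_const, abs_of_nonneg hB0] at h

lemma L2norm_mul_le (hL : 0 ≤ L) (hf : ContinuousOn f (Icc 0 L)) (hg : ContinuousOn g (Icc 0 L))
    (hB : ∀ x ∈ Icc 0 L, |f x| ≤ B) : L2norm L (f * g) ≤ B * L2norm L g := by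
  have hB0 : 0 ≤ B := (abs_nonneg _).trans (hB 0 (left_mem_Icc.2 hL))
  have h := L2norm_mono hL (hf.mul hg) (hg.const_mul B) fun x hx => by
    rw [Pi.mul_apply, abs_mul, abs_mul, abs_of_nonneg hB0]
    exact mul_le_mul_of_nonneg_right (hB x hx) (abs_nonneg _)
  rwa [L2norm_const_mul, abs_of_nonneg hB0] at h

lemma memLp_of_continuousOn (hf : ContinuousOn f (Icc 0 L)) (p : ENNReal) :
    MemLp f p (volume.restrict (Ioc 0 L)) := by
  obtain ⟨C, hC⟩ := isCompact_Icc.exists_bound_of_continuousOn hf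
  refine MemLp.of_bound ((hf.mono Ioc_subset_Icc_self).aestronglyMeasurable measurableSet_Ioc) C ?_
  exact (ae_restrict_mem measurableSet_Ioc).mono fun x hx => hC x (Ioc_subset_Icc_self hx)

lemma L2norm_eq_lpNorm (hL : 0 ≤ L) (hf : ContinuousOn f (Icc 0 L)) :
    L2norm L f = lpNorm f 2 (volume.restrict (Ioc 0 L)) := by
  rw [lpNorm_eq_integral_norm_rpow_toReal two_ne_zero ENNReal.ofNat_ne_top
    (memLp_of_continuousOn hf 2).aestronglyMeasurable, L2norm, Real.sqrt_eq_rpow,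
    intervalIntegral.integral_of_le hL]
  simp

lemma L2norm_add_le (hL : 0 ≤ L) (hf : ContinuousOn f (Icc 0 L)) (hg : ContinuousOn g (Icc 0 L)) :
    L2norm L (f + g) ≤ L2norm L f + L2norm L g := by
  rw [L2norm_eq_lpNorm hL hf, L2norm_eq_lpNorm hL hg, L2norm_eq_lpNorm hL (hf.add hg)]
  exact lpNorm_add_le (memLp_of_continuousOn hf 2) one_le_two

lemma L2norm_sub_le (hL : 0 ≤ L) (hf : ContinuousOn f (Icc 0 L)) (hg : ContinuousOn g (Icc 0 L)) :
    L2norm L (f - g) ≤ L2norm L f + L2norm L g := by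
  rw [L2norm_eq_lpNorm hL hf, L2norm_eq_lpNorm hL hg, L2norm_eq_lpNorm hL (hf.sub hg)]
  exact lpNorm_sub_le (memLp_of_continuousOn hf 2) one_le_two

lemma abs_L2norm_sub_le (hL : 0 ≤ L) (hf : ContinuousOn f (Icc 0 L))
    (hg : ContinuousOn g (Icc 0 L)) : |L2norm L f - L2norm L g| ≤ L2norm L (f - g) := by
  have h₁ := L2norm_add_le hL (hf.sub hg) hg
  have h₂ := L2norm_add_le hL (hg.sub hf) hf
  rw [sub_add_cancel] at h₁ h₂
  rw [L2norm_sub_comm L g f] at h₂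
  exact abs_le.2 ⟨by linarith, by linarith⟩

lemma L2norm_le_of_tendsto (hL : 0 ≤ L) {u : ℕ → ℝ → ℝ} {C : ℝ}
    (hu : ∀ n, ContinuousOn (u n) (Icc 0 L)) (hf : ContinuousOn f (Icc 0 L))
    (hlim : ∀ x ∈ Icc 0 L, Tendsto (fun n => u n x) atTop (𝓝 (f x)))
    (hC : ∀ n, L2norm L (u n) ≤ C) : L2norm L f ≤ C := by
  have hFatou := Lp.eLpNorm_lim_le_liminf_eLpNorm (p := 2)
    (fun n => (memLp_of_continuousOn (hu n) 2).aestronglyMeasurable) f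
    ((ae_restrict_mem measurableSet_Ioc).mono fun x hx => hlim x (Ioc_subset_Icc_self hx))
  have hbound (n : ℕ) : eLpNorm (u n) 2 (volume.restrict (Ioc 0 L)) ≤ ENNReal.ofReal C := by
    rw [← ofReal_lpNorm (memLp_of_continuousOn (hu n) 2), ← L2norm_eq_lpNorm hL (hu n)]
    exact ENNReal.ofReal_le_ofReal (hC n)
  have hC0 : 0 ≤ C := (L2norm_nonneg L _).trans (hC 0)
  rw [L2norm_eq_lpNorm hL hf, ← toReal_eLpNorm (memLp_of_continuousOn hf 2).aestronglyMeasurable]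
  refine ENNReal.toReal_le_of_le_ofReal hC0 (hFatou.trans ?_)
  exact (liminf_le_liminf (Eventually.of_forall hbound)).trans (liminf_const _).le

lemma sq_integral_le (hL : 0 ≤ L) (hf : ContinuousOn f (Icc 0 L)) :
    (∫ x in (0:ℝ)..L, f x) ^ 2 ≤ L * L2norm L f ^ 2 := by
  rw [L2norm_sq hL]
  rcases hL.eq_or_lt with rfl | hLpos
  · simp
  set m := (∫ x in (0:ℝ)..L, f x) / L with hm
  have hmean : ∫ x in (0:ℝ)..L, f x = m * L := by rw [hm, div_mul_cancel₀ _ hLpos.ne']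
  have hvar : 0 ≤ ∫ x in (0:ℝ)..L, (f x ^ 2 - 2 * m * f x + m ^ 2) :=
    intervalIntegral.integral_nonneg hL fun x _ => by nlinarith [sq_nonneg (f x - m)]
  rw [intervalIntegral.integral_add
      (ContinuousOn.intervalIntegrable_of_Icc hL (by fun_prop)) intervalIntegrable_const,
    intervalIntegral.integral_sub
      (ContinuousOn.intervalIntegrable_of_Icc hL (by fun_prop))
      (ContinuousOn.intervalIntegrable_of_Icc hL (by fun_prop)),
    intervalIntegral.integral_const_mul, intervalIntegral.integral_const, hmean] at hvar
  rw [hmean]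
  simp only [sub_zero, smul_eq_mul] at hvar
  nlinarith

lemma hasDerivAt_derivWithin_of_contDiffOn (hf : ContDiffOn ℝ 1 f (Icc 0 L)) {x : ℝ}
    (hx : x ∈ Ioo 0 L) : HasDerivAt f (derivWithin f (Icc 0 L) x) x :=
  (hf.differentiableOn one_ne_zero x (Ioo_subset_Icc_self hx)).hasDerivWithinAt.hasDerivAt
    (Icc_mem_nhds hx.1 hx.2)

lemma continuousOn_derivWithin (hL : 0 < L) (hf : ContDiffOn ℝ 1 f (Icc 0 L)) :
    ContinuousOn (derivWithin f (Icc 0 L)) (Icc 0 L) :=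
  hf.continuousOn_derivWithin (uniqueDiffOn_Icc hL) le_rfl

lemma abs_le_sqrt_mul_L2norm_derivWithin (hL : 0 < L) (hf : ContDiffOn ℝ 1 f (Icc 0 L))
    (h0 : f 0 = 0) {x : ℝ} (hx : x ∈ Icc 0 L) :
    |f x| ≤ √L * L2norm L (derivWithin f (Icc 0 L)) := by
  have hsub : Icc 0 x ⊆ Icc 0 L := Icc_subset_Icc le_rfl hx.2
  have hf' : ContinuousOn (derivWithin f (Icc 0 L)) (Icc 0 L) :=
    continuousOn_derivWithin hL hf
  have hftc : ∫ s in (0:ℝ)..x, derivWithin f (Icc 0 L) s = f x := by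
    rw [intervalIntegral.integral_eq_sub_of_hasDerivAt_of_le hx.1 (hf.continuousOn.mono hsub)
      (fun s hs => ?_) ((hf'.mono hsub).intervalIntegrable_of_Icc hx.1), h0, sub_zero]
    exact hasDerivAt_derivWithin_of_contDiffOn hf ⟨hs.1, hs.2.trans_le hx.2⟩
  have hmono : L2norm x (derivWithin f (Icc 0 L)) ≤ L2norm L (derivWithin f (Icc 0 L)) :=
    Real.sqrt_le_sqrt <| intervalIntegral.integral_mono_interval le_rfl hx.1 hx.2
      (Eventually.of_forall fun _ => sq_nonneg _) ((hf'.pow 2).intervalIntegrable_of_Icc hL.le)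
  refine abs_le_of_sq_le_sq ?_ (by positivity [L2norm_nonneg L (derivWithin f (Icc 0 L))])
  calc f x ^ 2 ≤ x * L2norm x (derivWithin f (Icc 0 L)) ^ 2 :=
        hftc ▸ sq_integral_le hx.1 (hf'.mono hsub)
    _ ≤ L * L2norm L (derivWithin f (Icc 0 L)) ^ 2 :=
        mul_le_mul hx.2 (pow_le_pow_left₀ (L2norm_nonneg _ _) hmono 2) (sq_nonneg _) hL.le
    _ = (√L * L2norm L (derivWithin f (Icc 0 L))) ^ 2 := by rw [mul_pow, Real.sq_sqrt hL.le]

end L2Norm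

section RightDerivative

/-- `f` has a right derivative at `t`, and this derivative is at most `c`. -/
def HasRightDerivLE (f : ℝ → ℝ) (c t : ℝ) : Prop :=
  ∃ f', HasDerivWithinAt f f' (Ici t) t ∧ f' ≤ c

variable {f : ℝ → ℝ} {α β : ℝ}

lemma HasRightDerivLE.mono {c d t : ℝ} (h : HasRightDerivLE f c t) (hcd : c ≤ d) :
    HasRightDerivLE f d t := by
  obtain ⟨f', hf', hc⟩ := h
  exact ⟨f', hf', hc.trans hcd⟩

lemma le_of_hasRightDerivLE_zero (hαβ : α ≤ β) (hf : ContinuousOn f (Icc α β))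
    (hf' : ∀ t ∈ Ioo α β, HasRightDerivLE f 0 t) : f β ≤ f α := by
  rcases hαβ.eq_or_lt with rfl | hαβ
  · exact le_rfl
  choose! f' hderiv hnonpos using hf'
  have hle : ∀ c ∈ Ioo α β, f β ≤ f c := fun c hc =>
    image_le_of_deriv_right_le_deriv_boundary (B := fun _ => f c)
      (hf.mono (Icc_subset_Icc_left hc.1.le))
      (fun t ht => hderiv t ⟨hc.1.trans_le ht.1, ht.2⟩) le_rfl continuousOn_const
      (fun t _ => hasDerivWithinAt_const t _ (f c))
      (fun t ht => hnonpos t ⟨hc.1.trans_le ht.1, ht.2⟩) (right_mem_Icc.2 hc.2.le)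
  have hlim : Tendsto f (𝓝[Ioo α β] α) (𝓝 (f α)) :=
    (hf α (left_mem_Icc.2 hαβ.le)).mono Ioo_subset_Icc_self
  rw [nhdsWithin_Ioo_eq_nhdsGT hαβ] at hlim
  exact ge_of_tendsto hlim (mem_of_superset (Ioo_mem_nhdsGT hαβ) hle)

lemma le_exp_mul_of_hasRightDerivLE {k e : ℝ} (hk : 0 ≤ k) (he : 0 ≤ e) (hαβ : α ≤ β)
    (hf : ContinuousOn f (Icc α β))
    (hf' : ∀ t ∈ Ioo α β, HasRightDerivLE f (k * f t + e) t) :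
    f β ≤ exp (k * (β - α)) * (f α + e * (β - α)) := by
  have hmono : exp (-(k * (β - α))) * f β - e * (β - α)
      ≤ exp (-(k * (α - α))) * f α - e * (α - α) := by
    refine le_of_hasRightDerivLE_zero (f := fun t => exp (-(k * (t - α))) * f t - e * (t - α)) hαβ
      (by fun_prop) fun t ht => ?_
    obtain ⟨f', hderiv, hle⟩ := hf' t ht
    have hid : HasDerivWithinAt (fun t => t - α) 1 (Ici t) t :=
      (hasDerivWithinAt_id t _).sub_const α
    refine ⟨_, (((hid.const_mul k).neg.exp).mul hderiv).sub (hid.const_mul e), ?_⟩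
    have hexp : exp (-(k * (t - α))) ≤ 1 :=
      exp_le_one_iff.2 (neg_nonpos.2 (mul_nonneg hk (sub_nonneg.2 ht.1.le)))
    calc exp (-(k * (t - α))) * -(k * 1) * f t + exp (-(k * (t - α))) * f' - e * 1
        ≤ exp (-(k * (t - α))) * -(k * 1) * f t + exp (-(k * (t - α))) * (k * f t + e) - e * 1 := by
          gcongr
      _ = (exp (-(k * (t - α))) - 1) * e := by ring
      _ ≤ 0 := mul_nonpos_of_nonpos_of_nonneg (sub_nonpos.2 hexp) he
  rw [sub_self, mul_zero, neg_zero, exp_zero, one_mul, mul_zero, sub_zero,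
    sub_le_iff_le_add, exp_neg, inv_mul_le_iff₀ (exp_pos _)] at hmono
  exact hmono

/-- The functional `b + (η + G) * exp G * a` is nonincreasing: the decrease of `G` absorbs the
growth rate `μ`, and the dissipation `n` of `a` absorbs the source `η * n` of `b`. -/
lemma le_add_of_hasRightDerivLE_of_absorbing {a b G : ℝ → ℝ} {η g : ℝ} (hη : 0 ≤ η) (hαβ : α ≤ β)
    (ha : ContinuousOn a (Icc α β)) (hb : ContinuousOn b (Icc α β))
    (hG : ContinuousOn G (Icc α β)) (ha0 : ∀ t ∈ Icc α β, 0 ≤ a t)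
    (hG0 : ∀ t ∈ Icc α β, 0 ≤ G t) (hGg : G α ≤ g)
    (hrate : ∀ t ∈ Ioo α β, ∃ μ n : ℝ, 0 ≤ μ ∧ 0 ≤ n ∧
      HasRightDerivLE a (-n + μ * a t) t ∧ HasRightDerivLE b (η * n + μ * a t) t ∧
      HasRightDerivLE G (-μ) t) :
    b β ≤ b α + (η + g) * exp g * a α := by
  have hmono : b β + (η + G β) * (exp (G β) * a β) ≤ b α + (η + G α) * (exp (G α) * a α) := by
    refine le_of_hasRightDerivLE_zero (f := fun t => b t + (η + G t) * (exp (G t) * a t)) hαβ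
      (by fun_prop) fun t ht => ?_
    obtain ⟨μ, n, hμ, hn, ⟨a', ha', hle_a⟩, ⟨b', hb', hle_b⟩, ⟨G', hG', hle_G⟩⟩ := hrate t ht
    have hat := ha0 t (Ioo_subset_Icc_self ht)
    have hGt := hG0 t (Ioo_subset_Icc_self ht)
    refine ⟨_, hb'.add ((hG'.const_add η).mul (hG'.exp.mul ha')), ?_⟩
    calc b' + (G' * (exp (G t) * a t) + (η + G t) * (exp (G t) * G' * a t + exp (G t) * a'))
        = b' + exp (G t) * (G' * ((1 + η + G t) * a t) + (η + G t) * a') := by ring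
      _ ≤ (η * n + μ * a t)
          + exp (G t) * (-μ * ((1 + η + G t) * a t) + (η + G t) * (-n + μ * a t)) := by gcongr
      _ = (1 - exp (G t)) * (η * n + μ * a t) - exp (G t) * (G t * n) := by ring
      _ ≤ 0 := sub_nonpos.2 <| (mul_nonpos_of_nonpos_of_nonneg
          (sub_nonpos.2 (one_le_exp hGt)) (by positivity)).trans (by positivity)
  have hGβ := hG0 β (right_mem_Icc.2 hαβ)
  have hGα := hG0 α (left_mem_Icc.2 hαβ)
  calc b β ≤ b β + (η + G β) * (exp (G β) * a β) :=
        le_add_of_nonneg_right (by positivity [ha0 β (right_mem_Icc.2 hαβ)])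
    _ ≤ b α + (η + G α) * (exp (G α) * a α) := hmono
    _ ≤ b α + (η + g) * (exp g * a α) := by
        have := ha0 α (left_mem_Icc.2 hαβ)
        have : 0 ≤ η + G α := by positivity
        exact add_le_add_right (mul_le_mul (by gcongr) (by gcongr) (by positivity)
          (this.trans (by gcongr))) _
    _ = b α + (η + g) * exp g * a α := by ring

end RightDerivative

section EnergyDerivative

lemma tendsto_integral_abs_of_integral_sq_le {α ι : Type*} [MeasurableSpace α] {μ : Measure α}
    [IsFiniteMeasure μ] {l : Filter ι} [l.IsCountablyGenerated] {g : ι → α → ℝ} {C : ℝ}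
    (hg : ∀ᶠ i in l, MemLp (g i) 2 μ) (hC : ∀ᶠ i in l, ∫ x, g i x ^ 2 ∂μ ≤ C)
    (hlim : ∀ᵐ x ∂μ, Tendsto (fun i => g i x) l (𝓝 0)) :
    Tendsto (fun i => ∫ x, |g i x| ∂μ) l (𝓝 0) := by
  have htrunc (K : ℝ) (hK : 0 < K) : Tendsto (fun i => ∫ x, min |g i x| K ∂μ) l (𝓝 0) := by
    have h := tendsto_integral_filter_of_dominated_convergence (l := l) (μ := μ)
      (F := fun i x => min |g i x| K) (f := fun _ => 0) (fun _ => K)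
      (hg.mono fun i hi => hi.aestronglyMeasurable.norm.inf aestronglyMeasurable_const)
      (Eventually.of_forall fun i => Eventually.of_forall fun x => by
        rw [Real.norm_of_nonneg (le_min (abs_nonneg _) hK.le)]
        exact min_le_right _ _)
      (integrable_const K) (hlim.mono fun x hx => by
        simpa [hK.le] using hx.abs.min (tendsto_const_nhds (x := K)))
    simpa using h
  refine tendsto_order.2 ⟨fun a ha => Eventually.of_forall fun i => ha.trans_le
    (integral_nonneg fun x => abs_nonneg _), fun a ha => ?_⟩
  set K : ℝ := 2 * (|C| + 1) / a with hK
  have hK0 : 0 < K := by positivity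
  filter_upwards [hg, hC, (tendsto_order.1 (htrunc K hK0)).2 (a / 2) (half_pos ha)]
    with i hgi hCi hi
  have hsplit (y : ℝ) : |y| ≤ min |y| K + K⁻¹ * y ^ 2 := by
    rcases le_total |y| K with h | h
    · rw [min_eq_left h]
      exact le_add_of_nonneg_right (by positivity)
    · rw [min_eq_right h, ← sq_abs, inv_mul_eq_div, ← sub_nonneg]
      have : |y| ≤ |y| ^ 2 / K := (le_div_iff₀ hK0).2 (by nlinarith [abs_nonneg y])
      linarith
  have hint : Integrable (fun x => |g i x|) μ := (hgi.integrable one_le_two).abs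
  have hint_min : Integrable (fun x => min |g i x| K) μ := hint.inf (integrable_const K)
  calc ∫ x, |g i x| ∂μ ≤ ∫ x, (min |g i x| K + K⁻¹ * g i x ^ 2) ∂μ :=
        integral_mono hint (hint_min.add (hgi.integrable_sq.const_mul _)) fun x => hsplit _
    _ = ∫ x, min |g i x| K ∂μ + K⁻¹ * ∫ x, g i x ^ 2 ∂μ := by
        rw [integral_add hint_min (hgi.integrable_sq.const_mul _), integral_const_mul]
    _ < a / 2 + K⁻¹ * (|C| + 1) := add_lt_add hi <| by
        gcongr
        linarith [le_abs_self C]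
    _ = a := by rw [hK]; field_simp; ring

/-- The curve `u` is Lipschitz to the right of time `t`, as a curve in `L²(0,L)`. -/
def IsRightL2LipschitzAt (L : ℝ) (u : ℝ → ℝ → ℝ) (t : ℝ) : Prop :=
  ∃ C, ∀ᶠ s in 𝓝[>] t, L2norm L (u s - u t) ≤ C * (s - t)

variable {L t : ℝ} {u v : ℝ → ℝ → ℝ} {u' : ℝ → ℝ}

lemma IsRightL2LipschitzAt.sub (hL : 0 ≤ L)
    (hcu : ∀ᶠ s in 𝓝[≥] t, ContinuousOn (u s) (Icc 0 L))
    (hcv : ∀ᶠ s in 𝓝[≥] t, ContinuousOn (v s) (Icc 0 L))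
    (hu : IsRightL2LipschitzAt L u t) (hv : IsRightL2LipschitzAt L v t) :
    IsRightL2LipschitzAt L (u - v) t := by
  obtain ⟨Cu, hu⟩ := hu
  obtain ⟨Cv, hv⟩ := hv
  refine ⟨Cu + Cv, ?_⟩
  have hle : 𝓝[>] t ≤ 𝓝[≥] t := nhdsWithin_mono t Ioi_subset_Ici_self
  filter_upwards [hu, hv, hle hcu, hle hcv] with s hus hvs hcus hcvs
  calc L2norm L ((u - v) s - (u - v) t)
      = L2norm L ((u s - u t) - (v s - v t)) := by
        rw [Pi.sub_apply, Pi.sub_apply, sub_sub_sub_comm]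
    _ ≤ L2norm L (u s - u t) + L2norm L (v s - v t) :=
        L2norm_sub_le hL (hcus.sub (hcu.self_of_nhdsWithin self_mem_Ici))
          (hcvs.sub (hcv.self_of_nhdsWithin self_mem_Ici))
    _ ≤ (Cu + Cv) * (s - t) := by linarith

lemma continuousOn_slope {s : ℝ} (hs : ContinuousOn (u s) (Icc 0 L))
    (ht : ContinuousOn (u t) (Icc 0 L)) : ContinuousOn (slope u t s) (Icc 0 L) :=
  (hs.sub ht).const_smul _

lemma IsRightL2LipschitzAt.exists_L2norm_slope_le (hu : IsRightL2LipschitzAt L u t) :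
    ∃ C, ∀ᶠ s in 𝓝[>] t, L2norm L (slope u t s) ≤ C := by
  obtain ⟨C, hC⟩ := hu
  refine ⟨C, ?_⟩
  filter_upwards [hC, self_mem_nhdsWithin] with s hs hts
  have hpos : 0 < s - t := sub_pos.2 hts
  calc L2norm L (slope u t s) = (s - t)⁻¹ * L2norm L (u s - u t) := by
        rw [← abs_of_pos (inv_pos.2 hpos), ← L2norm_const_mul]
        rfl
    _ ≤ C := (inv_mul_le_iff₀ hpos).2 (by linarith)

lemma tendsto_integral_abs_slope_sub (hL : 0 ≤ L)
    (hcu : ∀ᶠ s in 𝓝[≥] t, ContinuousOn (u s) (Icc 0 L)) (hu' : ContinuousOn u' (Icc 0 L))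
    (hd : ∀ x ∈ Ioo 0 L, HasDerivWithinAt (fun s => u s x) (u' x) (Ici t) t)
    (hu : IsRightL2LipschitzAt L u t) :
    Tendsto (fun s => ∫ x in (0:ℝ)..L, |slope u t s x - u' x|) (𝓝[>] t) (𝓝 0) := by
  obtain ⟨C, hC⟩ := hu.exists_L2norm_slope_le
  have hcut := hcu.self_of_nhdsWithin self_mem_Ici
  have hcont : ∀ᶠ s in 𝓝[>] t, ContinuousOn (slope u t s) (Icc 0 L) :=
    (hcu.filter_mono (nhdsWithin_mono t Ioi_subset_Ici_self)).mono fun s hs =>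
      continuousOn_slope hs hcut
  simp only [intervalIntegral.integral_of_le hL]
  refine tendsto_integral_abs_of_integral_sq_le (C := (C + L2norm L u') ^ 2) ?_ ?_ ?_
  · filter_upwards [hcont] with s hs using memLp_of_continuousOn (hs.sub hu') 2
  · filter_upwards [hcont, hC] with s hs hCs
    have h := (L2norm_sub_le hL hs hu').trans (add_le_add_left hCs _)
    rw [← intervalIntegral.integral_of_le hL]
    exact (L2norm_sq hL _).symm.trans_le (pow_le_pow_left₀ (L2norm_nonneg _ _) h 2)
  · rw [Measure.restrict_congr_set Ioo_ae_eq_Ioc.symm]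
    filter_upwards [ae_restrict_mem measurableSet_Ioo] with x hx
    have h := (hasDerivWithinAt_iff_tendsto_slope' self_notMem_Ioi).1
      ((hd x hx).mono Ioi_subset_Ici_self)
    exact (sub_self (u' x)) ▸ h.sub_const (u' x)

variable {ρ : ℝ → ℝ}

lemma slope_integral_mul_sq (hL : 0 ≤ L) (hρ : ContinuousOn ρ (Icc 0 L))
    (hu' : ContinuousOn u' (Icc 0 L)) {s : ℝ} (hs : ContinuousOn (u s) (Icc 0 L))
    (ht : ContinuousOn (u t) (Icc 0 L)) (hst : s ≠ t) :
    slope (fun s => ∫ x in (0:ℝ)..L, ρ x * u s x ^ 2) t s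
        - ∫ x in (0:ℝ)..L, ρ x * (2 * u t x * u' x)
      = ∫ x in (0:ℝ)..L, (2 * ρ x * u t x * (slope u t s x - u' x)
          + (s - t) * ρ x * slope u t s x ^ 2) := by
  rw [slope_def_field, div_eq_inv_mul,
    ← intervalIntegral.integral_sub (ContinuousOn.intervalIntegrable_of_Icc hL (by fun_prop))
      (ContinuousOn.intervalIntegrable_of_Icc hL (by fun_prop)),
    ← intervalIntegral.integral_const_mul,
    ← intervalIntegral.integral_sub (ContinuousOn.intervalIntegrable_of_Icc hL (by fun_prop))
      (ContinuousOn.intervalIntegrable_of_Icc hL (by fun_prop))]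
  have hne := sub_ne_zero.2 hst
  congr 1 with x
  simp only [slope, vsub_eq_sub, Pi.smul_apply, Pi.sub_apply, smul_eq_mul]
  field_simp
  ring

lemma abs_integral_slope_error_le (hL : 0 ≤ L) {A B : ℝ} {s : ℝ} {f f' d : ℝ → ℝ}
    (hρ : ContinuousOn ρ (Icc 0 L)) (hf' : ContinuousOn f' (Icc 0 L))
    (hf : ContinuousOn f (Icc 0 L)) (hdc : ContinuousOn d (Icc 0 L))
    (hA : ∀ x ∈ Icc 0 L, |2 * ρ x * f x| ≤ A) (hB : ∀ x ∈ Icc 0 L, |ρ x| ≤ B) (hst : t ≤ s) :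
    |∫ x in (0:ℝ)..L, (2 * ρ x * f x * (d x - f' x) + (s - t) * ρ x * d x ^ 2)|
      ≤ A * (∫ x in (0:ℝ)..L, |d x - f' x|) + (s - t) * B * L2norm L d ^ 2 := by
  have hst' : 0 ≤ s - t := sub_nonneg.2 hst
  rw [L2norm_sq hL, ← intervalIntegral.integral_const_mul, ← intervalIntegral.integral_const_mul,
    ← intervalIntegral.integral_add (ContinuousOn.intervalIntegrable_of_Icc hL (by fun_prop))
      (ContinuousOn.intervalIntegrable_of_Icc hL (by fun_prop))]
  refine (intervalIntegral.abs_integral_le_integral_abs hL).trans <|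
    intervalIntegral.integral_mono_on hL (ContinuousOn.intervalIntegrable_of_Icc hL (by fun_prop))
      (ContinuousOn.intervalIntegrable_of_Icc hL (by fun_prop)) fun x hx => ?_
  refine (abs_add_le _ _).trans ?_
  rw [abs_mul _ (d x - f' x), abs_mul _ (d x ^ 2), abs_mul (s - t), abs_of_nonneg hst', abs_sq]
  gcongr
  exacts [hA x hx, hB x hx]

lemma IsRightL2LipschitzAt.hasDerivWithinAt_integral_mul_sq (hL : 0 ≤ L)
    (hρ : ContinuousOn ρ (Icc 0 L)) (hcu : ∀ᶠ s in 𝓝[≥] t, ContinuousOn (u s) (Icc 0 L))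
    (hu' : ContinuousOn u' (Icc 0 L))
    (hd : ∀ x ∈ Ioo 0 L, HasDerivWithinAt (fun s => u s x) (u' x) (Ici t) t)
    (hu : IsRightL2LipschitzAt L u t) :
    HasDerivWithinAt (fun s => ∫ x in (0:ℝ)..L, ρ x * u s x ^ 2)
      (∫ x in (0:ℝ)..L, ρ x * (2 * u t x * u' x)) (Ici t) t := by
  have hcut := hcu.self_of_nhdsWithin self_mem_Ici
  obtain ⟨C, hC⟩ := hu.exists_L2norm_slope_le
  obtain ⟨A, hA⟩ := isCompact_Icc.exists_bound_of_continuousOn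
    (f := fun x => 2 * ρ x * u t x) ((hρ.const_mul 2).mul hcut)
  obtain ⟨B, hB⟩ := isCompact_Icc.exists_bound_of_continuousOn hρ
  have hB0 : 0 ≤ B := (norm_nonneg _).trans (hB 0 (left_mem_Icc.2 hL))
  have herror : Tendsto (fun s => A * (∫ x in (0:ℝ)..L, |slope u t s x - u' x|)
      + (s - t) * B * C ^ 2) (𝓝[>] t) (𝓝 0) := by
    have hst : Tendsto (fun s => s - t) (𝓝[>] t) (𝓝 0) :=
      tendsto_nhdsWithin_of_tendsto_nhds ((continuous_sub_right t).tendsto' t 0 (sub_self t))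
    simpa using ((tendsto_integral_abs_slope_sub hL hcu hu' hd hu).const_mul A).add
      ((hst.mul_const B).mul_const (C ^ 2))
  rw [← hasDerivWithinAt_Ioi_iff_Ici, hasDerivWithinAt_iff_tendsto_slope' self_notMem_Ioi,
    tendsto_iff_dist_tendsto_zero]
  refine squeeze_zero' (Eventually.of_forall fun _ => dist_nonneg) ?_ herror
  filter_upwards [hcu.filter_mono (nhdsWithin_mono t Ioi_subset_Ici_self), hC,
    self_mem_nhdsWithin] with s hcus hCs hts
  have hst : 0 ≤ s - t := sub_nonneg.2 (mem_Ioi.1 hts).le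
  rw [Real.dist_eq, slope_integral_mul_sq hL hρ hu' hcus hcut (mem_Ioi.1 hts).ne']
  refine (abs_integral_slope_error_le hL hρ hu' hcut (continuousOn_slope hcus hcut) hA hB
    (mem_Ioi.1 hts).le).trans ?_
  gcongr
  exact L2norm_nonneg L _

/-- The energy `∫₀ᴸ (1 + x) u(t,x)² dx` damped by `exp (-2t)`. The increasing weight makes the
third-order operator dissipate `‖∂ₓu‖²`, and the damping absorbs the resulting growth. -/
noncomputable def dampedEnergy (L : ℝ) (u : ℝ → ℝ → ℝ) (t : ℝ) : ℝ :=
  exp (-(2 * t)) * ∫ x in (0:ℝ)..L, (1 + x) * u t x ^ 2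

lemma dampedEnergy_nonneg (hL : 0 ≤ L) (u : ℝ → ℝ → ℝ) (t : ℝ) : 0 ≤ dampedEnergy L u t :=
  mul_nonneg (exp_pos _).le <| intervalIntegral.integral_nonneg hL fun x hx =>
    mul_nonneg (by linarith [hx.1]) (sq_nonneg _)

lemma L2norm_sq_le_dampedEnergy (hL : 0 ≤ L) (hut : ContinuousOn (u t) (Icc 0 L)) :
    exp (-(2 * t)) * L2norm L (u t) ^ 2 ≤ dampedEnergy L u t := by
  rw [L2norm_sq hL]
  refine mul_le_mul_of_nonneg_left (intervalIntegral.integral_mono_on hL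
    ((hut.pow 2).intervalIntegrable_of_Icc hL)
    (ContinuousOn.intervalIntegrable_of_Icc hL (by fun_prop)) fun x hx => ?_) (exp_pos _).le
  exact le_mul_of_one_le_left (sq_nonneg _) (by linarith [hx.1])

lemma dampedEnergy_le_L2norm_sq (hL : 0 ≤ L) (hut : ContinuousOn (u t) (Icc 0 L)) :
    dampedEnergy L u t ≤ exp (-(2 * t)) * ((1 + L) * L2norm L (u t) ^ 2) := by
  rw [L2norm_sq hL, ← intervalIntegral.integral_const_mul]
  refine mul_le_mul_of_nonneg_left (intervalIntegral.integral_mono_on hL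
    (ContinuousOn.intervalIntegrable_of_Icc hL (by fun_prop))
    (ContinuousOn.intervalIntegrable_of_Icc hL (by fun_prop)) fun x hx => ?_) (exp_pos _).le
  exact mul_le_mul_of_nonneg_right (by linarith [hx.2]) (sq_nonneg _)

lemma continuousOn_dampedEnergy (hL : 0 ≤ L) {s : Set ℝ}
    (hu : ContinuousOn (fun p : ℝ × ℝ => u p.1 p.2) (s ×ˢ Icc 0 L)) :
    ContinuousOn (dampedEnergy L u) s := by
  refine ContinuousOn.mul (by fun_prop) (continuousOn_iff_continuous_domRestrict.2 ?_)
  have hcont : Continuous fun p : s × ℝ => (1 + p.2) * u p.1 (projIcc 0 L hL p.2) ^ 2 := by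
    have hproj : Continuous fun p : s × ℝ => u p.1 (projIcc 0 L hL p.2) :=
      hu.comp_continuous (f := fun p : s × ℝ => ((p.1 : ℝ), (projIcc 0 L hL p.2 : ℝ)))
        (by fun_prop) fun p => ⟨p.1.2, (projIcc 0 L hL p.2).2⟩
    exact (continuous_const.add continuous_snd).mul (hproj.pow 2)
  refine (intervalIntegral.continuous_parametric_intervalIntegral_of_continuous'
    (f := fun (t : s) x => (1 + x) * u t (projIcc 0 L hL x) ^ 2) hcont 0 L).congr
    fun t => intervalIntegral.integral_congr fun x hx => ?_
  rw [uIcc_of_le hL] at hx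
  simp only [projIcc_of_mem hL hx]

end EnergyDerivative

section EnergyInequality

variable {L T t : ℝ} {f g q r : ℝ → ℝ}

/-- The spatial profiles of KdV solutions: `C³` functions on `[0,L]` with the boundary conditions
`f(0) = f(L) = f'(L) = 0`. -/
structure IsKdVProfile (L : ℝ) (f : ℝ → ℝ) : Prop where
  contDiffOn : ContDiffOn ℝ 3 f (Icc 0 L)
  left_eq_zero : f 0 = 0
  right_eq_zero : f L = 0
  derivWithin_right_eq_zero : derivWithin f (Icc 0 L) L = 0

/-- The velocity `-(f' + f''' + q')` which the KdV equation with flux `q` assigns to the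
profile `f`. -/
noncomputable def kdvRate (L : ℝ) (f q : ℝ → ℝ) (x : ℝ) : ℝ :=
  -(derivWithin f (Icc 0 L) x + iteratedDerivWithin 3 f (Icc 0 L) x + derivWithin q (Icc 0 L) x)

/-- The factor with which a flux enters the energy inequality. -/
def fluxConst (L : ℝ) : ℝ := 1 + (1 + L) ^ 2

lemma fluxConst_nonneg (L : ℝ) : 0 ≤ fluxConst L := by
  unfold fluxConst
  positivity

lemma hasDerivAt_iteratedDerivWithin (hL : 0 < L) {n : ℕ} (hf : ContDiffOn ℝ (n + 1) f (Icc 0 L))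
    {x : ℝ} (hx : x ∈ Ioo 0 L) :
    HasDerivAt (iteratedDerivWithin n f (Icc 0 L))
      (iteratedDerivWithin (n + 1) f (Icc 0 L) x) x := by
  rw [iteratedDerivWithin_succ]
  exact ((hf.differentiableOn_iteratedDerivWithin (by exact_mod_cast n.lt_succ_self)
    (uniqueDiffOn_Icc hL)) x (Ioo_subset_Icc_self hx)).hasDerivWithinAt.hasDerivAt
      (Icc_mem_nhds hx.1 hx.2)

lemma derivWithin_sub_of_contDiffOn (hf : ContDiffOn ℝ 1 f (Icc 0 L))
    (hg : ContDiffOn ℝ 1 g (Icc 0 L)) {x : ℝ} (hx : x ∈ Icc 0 L) :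
    derivWithin (f - g) (Icc 0 L) x = derivWithin f (Icc 0 L) x - derivWithin g (Icc 0 L) x :=
  derivWithin_sub (hf.differentiableOn one_ne_zero x hx) (hg.differentiableOn one_ne_zero x hx)

lemma L2norm_derivWithin_sub_comm (hL : 0 ≤ L) (hf : ContDiffOn ℝ 1 f (Icc 0 L))
    (hg : ContDiffOn ℝ 1 g (Icc 0 L)) :
    L2norm L (derivWithin (g - f) (Icc 0 L)) = L2norm L (derivWithin (f - g) (Icc 0 L)) := by
  rw [L2norm_congr hL (f := derivWithin (g - f) (Icc 0 L)) fun x hx =>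
      derivWithin_sub_of_contDiffOn hg hf hx,
    L2norm_congr hL (f := derivWithin (f - g) (Icc 0 L)) fun x hx =>
      derivWithin_sub_of_contDiffOn hf hg hx]
  exact L2norm_sub_comm L _ _

namespace IsKdVProfile

lemma contDiffOn_one (hf : IsKdVProfile L f) : ContDiffOn ℝ 1 f (Icc 0 L) :=
  hf.contDiffOn.of_le (by norm_num)

lemma continuousOn (hf : IsKdVProfile L f) : ContinuousOn f (Icc 0 L) :=
  hf.contDiffOn.continuousOn

lemma sub (hL : 0 ≤ L) (hf : IsKdVProfile L f) (hg : IsKdVProfile L g) :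
    IsKdVProfile L (f - g) where
  contDiffOn := hf.contDiffOn.sub hg.contDiffOn
  left_eq_zero := by simp [hf.left_eq_zero, hg.left_eq_zero]
  right_eq_zero := by simp [hf.right_eq_zero, hg.right_eq_zero]
  derivWithin_right_eq_zero := by
    rw [derivWithin_sub_of_contDiffOn hf.contDiffOn_one hg.contDiffOn_one (right_mem_Icc.2 hL),
      hf.derivWithin_right_eq_zero, hg.derivWithin_right_eq_zero, sub_zero]

lemma continuousOn_kdvRate (hL : 0 < L) (hf : IsKdVProfile L f)
    (hq : ContDiffOn ℝ 1 q (Icc 0 L)) : ContinuousOn (kdvRate L f q) (Icc 0 L) :=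
  (((continuousOn_derivWithin hL hf.contDiffOn_one).add
    (hf.contDiffOn.continuousOn_iteratedDerivWithin le_rfl (uniqueDiffOn_Icc hL))).add
    (continuousOn_derivWithin hL hq)).neg

lemma kdvRate_sub (hL : 0 < L) (hf : IsKdVProfile L f) (hg : IsKdVProfile L g)
    (hq : ContDiffOn ℝ 1 q (Icc 0 L)) (hr : ContDiffOn ℝ 1 r (Icc 0 L)) {x : ℝ}
    (hx : x ∈ Icc 0 L) : kdvRate L (f - g) (q - r) x = kdvRate L f q x - kdvRate L g r x := by
  rw [kdvRate, kdvRate, kdvRate,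
    derivWithin_sub_of_contDiffOn hf.contDiffOn_one hg.contDiffOn_one hx,
    derivWithin_sub_of_contDiffOn hq hr hx, iteratedDerivWithin_sub hx (uniqueDiffOn_Icc hL)
      (hf.contDiffOn x hx) (hg.contDiffOn x hx)]
  ring

lemma integral_mul_kdvRate_eq (hL : 0 < L) (hf : IsKdVProfile L f)
    (hq : ContDiffOn ℝ 1 q (Icc 0 L)) :
    ∫ x in (0:ℝ)..L, (1 + x) * (2 * f x * kdvRate L f q x)
      = (∫ x in (0:ℝ)..L, (f x ^ 2 - 3 * derivWithin f (Icc 0 L) x ^ 2 + 2 * f x * q x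
          + 2 * (1 + x) * derivWithin f (Icc 0 L) x * q x)) - derivWithin f (Icc 0 L) 0 ^ 2 := by
  set f₁ := derivWithin f (Icc 0 L)
  set f₂ := iteratedDerivWithin 2 f (Icc 0 L)
  have hf₁ : iteratedDerivWithin 1 f (Icc 0 L) = f₁ := funext fun x => by simp [f₁]
  have hc := hf.continuousOn
  have hc₁ : ContinuousOn f₁ (Icc 0 L) := continuousOn_derivWithin hL hf.contDiffOn_one
  have hc₂ : ContinuousOn f₂ (Icc 0 L) :=
    hf.contDiffOn.continuousOn_iteratedDerivWithin (by norm_num) (uniqueDiffOn_Icc hL)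
  have hcq := hq.continuousOn
  have hcr := hf.continuousOn_kdvRate hL hq
  have hFTC := intervalIntegral.integral_eq_sub_of_hasDerivAt_of_le hL.le
    (f := fun x => (1 + x) * f x ^ 2 + 2 * (1 + x) * f x * f₂ x - 2 * f x * f₁ x
      - (1 + x) * f₁ x ^ 2 + 2 * (1 + x) * f x * q x)
    (f' := fun x => (f x ^ 2 - 3 * f₁ x ^ 2 + 2 * f x * q x + 2 * (1 + x) * f₁ x * q x)
      - (1 + x) * (2 * f x * kdvRate L f q x))
    (by fun_prop)
    (fun x hx => by
      have hd := hasDerivAt_derivWithin_of_contDiffOn hf.contDiffOn_one hx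
      have hd₁ := hasDerivAt_iteratedDerivWithin (n := 1) hL (hf.contDiffOn.of_le (by norm_num)) hx
      have hd₂ := hasDerivAt_iteratedDerivWithin (n := 2) hL (hf.contDiffOn.of_le (by norm_num)) hx
      have hdq := hasDerivAt_derivWithin_of_contDiffOn hq hx
      have hw : HasDerivAt (fun x : ℝ => 1 + x) 1 x := (hasDerivAt_id x).const_add 1
      rw [hf₁] at hd₁
      refine (((((hw.mul (hd.pow 2)).add (((hw.const_mul 2).mul hd).mul hd₂)).sub
        ((hd.const_mul 2).mul hd₁)).sub (hw.mul (hd₁.pow 2))).add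
        (((hw.const_mul 2).mul hd).mul hdq)).congr_deriv ?_
      simp only [Pi.mul_apply, Pi.pow_apply, kdvRate]
      ring)
    (ContinuousOn.intervalIntegrable_of_Icc hL.le (by fun_prop))
  rw [intervalIntegral.integral_sub (ContinuousOn.intervalIntegrable_of_Icc hL.le (by fun_prop))
    (ContinuousOn.intervalIntegrable_of_Icc hL.le (by fun_prop))] at hFTC
  simp only [hf.left_eq_zero, hf.right_eq_zero, f₁, hf.derivWithin_right_eq_zero] at hFTC
  linarith

lemma integral_mul_kdvRate_le (hL : 0 < L) (hf : IsKdVProfile L f)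
    (hq : ContDiffOn ℝ 1 q (Icc 0 L)) :
    ∫ x in (0:ℝ)..L, (1 + x) * (2 * f x * kdvRate L f q x)
      ≤ 2 * L2norm L f ^ 2 - 2 * L2norm L (derivWithin f (Icc 0 L)) ^ 2
        + fluxConst L * L2norm L q ^ 2 := by
  set f₁ := derivWithin f (Icc 0 L)
  have hc := hf.continuousOn
  have hc₁ : ContinuousOn f₁ (Icc 0 L) := continuousOn_derivWithin hL hf.contDiffOn_one
  have hcq := hq.continuousOn
  calc ∫ x in (0:ℝ)..L, (1 + x) * (2 * f x * kdvRate L f q x)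
      ≤ ∫ x in (0:ℝ)..L, (f x ^ 2 - 3 * f₁ x ^ 2 + 2 * f x * q x + 2 * (1 + x) * f₁ x * q x) := by
        rw [hf.integral_mul_kdvRate_eq hL hq]
        exact sub_le_self _ (sq_nonneg _)
    _ ≤ ∫ x in (0:ℝ)..L, (2 * f x ^ 2 - 2 * f₁ x ^ 2 + fluxConst L * q x ^ 2) := by
        refine intervalIntegral.integral_mono_on hL.le
          (ContinuousOn.intervalIntegrable_of_Icc hL.le (by fun_prop))
          (ContinuousOn.intervalIntegrable_of_Icc hL.le (by fun_prop)) fun x hx => ?_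
        have hweight : (1 + x) ^ 2 ≤ (1 + L) ^ 2 :=
          pow_le_pow_left₀ (by linarith [hx.1]) (by linarith [hx.2]) 2
        rw [fluxConst]
        nlinarith [sq_nonneg (f x - q x), sq_nonneg (f₁ x - (1 + x) * q x),
          mul_le_mul_of_nonneg_right hweight (sq_nonneg (q x))]
    _ = _ := by
        rw [intervalIntegral.integral_add
            (ContinuousOn.intervalIntegrable_of_Icc hL.le (by fun_prop))
            (ContinuousOn.intervalIntegrable_of_Icc hL.le (by fun_prop)),
          intervalIntegral.integral_sub
            (ContinuousOn.intervalIntegrable_of_Icc hL.le (by fun_prop))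
            (ContinuousOn.intervalIntegrable_of_Icc hL.le (by fun_prop))]
        simp only [intervalIntegral.integral_const_mul, L2norm_sq hL.le]

end IsKdVProfile

lemma IsKdVProfile.hasRightDerivLE_dampedEnergy {u : ℝ → ℝ → ℝ} {h : ℝ → ℝ} (hL : 0 < L)
    (hcu : ∀ᶠ s in 𝓝[≥] t, ContinuousOn (u s) (Icc 0 L)) (hut : IsKdVProfile L (u t))
    (hq : ContDiffOn ℝ 1 q (Icc 0 L)) (hh : ContinuousOn h (Icc 0 L))
    (hd : ∀ x ∈ Ioo 0 L,
      HasDerivWithinAt (fun s => u s x) (kdvRate L (u t) q x + h x) (Ici t) t)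
    (hLip : IsRightL2LipschitzAt L u t) :
    HasRightDerivLE (dampedEnergy L u)
      (exp (-(2 * t)) * (fluxConst L * L2norm L q ^ 2
        - 2 * L2norm L (derivWithin (u t) (Icc 0 L)) ^ 2
        + ∫ x in (0:ℝ)..L, (1 + x) * (2 * u t x * h x))) t := by
  have hc := hut.continuousOn
  have hcr := hut.continuousOn_kdvRate hL hq
  have hdE := hLip.hasDerivWithinAt_integral_mul_sq (ρ := fun x => 1 + x) hL.le (by fun_prop) hcu
    (hcr.add hh) hd
  have hdexp : HasDerivWithinAt (fun s => exp (-(2 * s))) (exp (-(2 * t)) * -(2 * 1)) (Ici t) t :=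
    ((hasDerivWithinAt_id t _).const_mul 2).neg.exp
  refine ⟨_, hdexp.mul hdE, ?_⟩
  have hsplit : ∫ x in (0:ℝ)..L, (1 + x) * (2 * u t x * (kdvRate L (u t) q + h) x)
      = (∫ x in (0:ℝ)..L, (1 + x) * (2 * u t x * kdvRate L (u t) q x))
        + ∫ x in (0:ℝ)..L, (1 + x) * (2 * u t x * h x) := by
    rw [← intervalIntegral.integral_add
      (ContinuousOn.intervalIntegrable_of_Icc hL.le (by fun_prop))
      (ContinuousOn.intervalIntegrable_of_Icc hL.le (by fun_prop))]
    simp only [Pi.add_apply, mul_add]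
  have hweight : L2norm L (u t) ^ 2 ≤ ∫ x in (0:ℝ)..L, (1 + x) * u t x ^ 2 :=
    le_of_mul_le_mul_left (L2norm_sq_le_dampedEnergy hL.le hc) (exp_pos _)
  have hstatic := hut.integral_mul_kdvRate_le hL hq
  rw [hsplit, mul_assoc, ← mul_add]
  exact mul_le_mul_of_nonneg_left (by linarith) (exp_pos _).le

/-- A classical solution of `u_t + u_x + u_xxx + q_x = 0` with the KdV boundary conditions, where
the flux `q` is an arbitrary `C¹` function of space at every time. Differences of solutions of the
modified and of the linear equation are of this form. -/
structure IsKdVSolWithFlux (L T : ℝ) (u q : ℝ → ℝ → ℝ) : Prop where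
  profile : ∀ t ∈ Icc 0 T, IsKdVProfile L (u t)
  contDiffOn_time : ∀ x ∈ Icc 0 L, ContDiffOn ℝ 1 (fun s => u s x) (Icc 0 T)
  continuousOn : ContinuousOn (fun p : ℝ × ℝ => u p.1 p.2) (Icc 0 T ×ˢ Icc 0 L)
  contDiffOn_flux : ∀ t ∈ Icc 0 T, ContDiffOn ℝ 1 (q t) (Icc 0 L)
  hasDerivAt : ∀ t ∈ Ioo 0 T, ∀ x ∈ Ioo 0 L,
    HasDerivAt (fun s => u s x) (kdvRate L (u t) (q t) x) t

namespace IsKdVSolWithFlux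

variable {u v q r : ℝ → ℝ → ℝ}

lemma sub (hL : 0 < L) (hu : IsKdVSolWithFlux L T u q) (hv : IsKdVSolWithFlux L T v r) :
    IsKdVSolWithFlux L T (u - v) (q - r) where
  profile t ht := (hu.profile t ht).sub hL.le (hv.profile t ht)
  contDiffOn_time x hx := (hu.contDiffOn_time x hx).sub (hv.contDiffOn_time x hx)
  continuousOn := hu.continuousOn.sub hv.continuousOn
  contDiffOn_flux t ht := (hu.contDiffOn_flux t ht).sub (hv.contDiffOn_flux t ht)
  hasDerivAt t ht x hx := by
    have ht' := Ioo_subset_Icc_self ht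
    rw [Pi.sub_apply, Pi.sub_apply, (hu.profile t ht').kdvRate_sub hL (hv.profile t ht')
      (hu.contDiffOn_flux t ht') (hv.contDiffOn_flux t ht') (Ioo_subset_Icc_self hx)]
    exact (hu.hasDerivAt t ht x hx).sub (hv.hasDerivAt t ht x hx)

lemma eventually_continuousOn (hu : IsKdVSolWithFlux L T u q) (ht : t ∈ Ioo 0 T) :
    ∀ᶠ s in 𝓝[≥] t, ContinuousOn (u s) (Icc 0 L) :=
  mem_of_superset (mem_nhdsWithin_of_mem_nhds (Icc_mem_nhds ht.1 ht.2)) fun s hs =>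
    (hu.profile s hs).continuousOn

lemma hasRightDerivLE_dampedEnergy (hL : 0 < L) (hu : IsKdVSolWithFlux L T u q) (ht : t ∈ Ioo 0 T)
    (hLip : IsRightL2LipschitzAt L u t) :
    HasRightDerivLE (dampedEnergy L u)
      (exp (-(2 * t)) * (fluxConst L * L2norm L (q t) ^ 2
        - 2 * L2norm L (derivWithin (u t) (Icc 0 L)) ^ 2)) t := by
  have ht' := Ioo_subset_Icc_self ht
  have h := (hu.profile t ht').hasRightDerivLE_dampedEnergy (h := fun _ => 0) hL
    (hu.eventually_continuousOn ht) (hu.contDiffOn_flux t ht') continuousOn_const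
    (fun x hx => by simpa using (hu.hasDerivAt t ht x hx).hasDerivWithinAt) hLip
  simpa using h

end IsKdVSolWithFlux

end EnergyInequality

section RightLipschitz

variable {L T t t' M n : ℝ} {u q : ℝ → ℝ → ℝ}

lemma integral_mul_forcing_le {w h : ℝ → ℝ} {τ : ℝ} (hL : 0 ≤ L) (hτ : 0 < τ)
    (hw : ContinuousOn w (Icc 0 L)) (hh : ContinuousOn h (Icc 0 L))
    (hn : ∀ x ∈ Ioo 0 L, |h x| ≤ n) :
    ∫ x in (0:ℝ)..L, (1 + x) * (2 * w x * h x)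
      ≤ 1 / τ * (∫ x in (0:ℝ)..L, (1 + x) * w x ^ 2) + (1 + L) * L * n ^ 2 * τ := by
  calc ∫ x in (0:ℝ)..L, (1 + x) * (2 * w x * h x)
      ≤ ∫ x in (0:ℝ)..L, (1 / τ * ((1 + x) * w x ^ 2) + (1 + L) * n ^ 2 * τ) := by
        refine intervalIntegral.integral_mono_on_of_le_Ioo hL
          (ContinuousOn.intervalIntegrable_of_Icc hL (by fun_prop))
          (ContinuousOn.intervalIntegrable_of_Icc hL (by fun_prop)) fun x hx => ?_
        have hsq : h x ^ 2 ≤ n ^ 2 := sq_le_sq.2 ((hn x hx).trans (le_abs_self n))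
        have hyoung : 2 * w x * h x ≤ 1 / τ * w x ^ 2 + n ^ 2 * τ := by
          have hcompl : 1 / τ * (w x - τ * h x) ^ 2
              = 1 / τ * w x ^ 2 - 2 * w x * h x + h x ^ 2 * τ := by field_simp; ring
          have hpos : 0 ≤ 1 / τ * (w x - τ * h x) ^ 2 := by positivity
          linarith [mul_le_mul_of_nonneg_right hsq hτ.le]
        have hnτ : 0 ≤ n ^ 2 * τ := by positivity
        calc (1 + x) * (2 * w x * h x) ≤ (1 + x) * (1 / τ * w x ^ 2 + n ^ 2 * τ) :=
              mul_le_mul_of_nonneg_left hyoung (by linarith [hx.1])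
          _ ≤ 1 / τ * ((1 + x) * w x ^ 2) + (1 + L) * n ^ 2 * τ := by
              linarith [mul_le_mul_of_nonneg_right hx.2.le hnτ]
    _ = _ := by
        rw [intervalIntegral.integral_add (ContinuousOn.intervalIntegrable_of_Icc hL (by fun_prop))
          intervalIntegrable_const, intervalIntegral.integral_const_mul,
          intervalIntegral.integral_const, sub_zero, smul_eq_mul]
        ring

namespace IsKdVSolWithFlux

lemma hasRightDerivLE_dampedEnergy_sub_const (hL : 0 < L) (hu : IsKdVSolWithFlux L T u q)
    {a s τ : ℝ} (ha : a ∈ Icc 0 T) (hs : s ∈ Ioo 0 T) (hτ : 0 < τ)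
    (hM : L2norm L (q s - q a) ≤ M * L2norm L (u s - u a))
    (hn : ∀ x ∈ Ioo 0 L, |kdvRate L (u a) (q a) x| ≤ n) (hLip : IsRightL2LipschitzAt L u s) :
    HasRightDerivLE (dampedEnergy L fun r => u r - u a)
      ((fluxConst L * M ^ 2 + 1 / τ) * dampedEnergy L (fun r => u r - u a) s
        + (1 + L) * L * n ^ 2 * τ) s := by
  have hs' := Ioo_subset_Icc_self hs
  have hpa := hu.profile a ha
  have hps := hu.profile s hs'
  have hqa := hu.contDiffOn_flux a ha
  have hqs := hu.contDiffOn_flux s hs'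
  have hw := (hps.sub hL.le hpa).continuousOn
  have hh := hpa.continuousOn_kdvRate hL hqa
  refine (IsKdVProfile.hasRightDerivLE_dampedEnergy (q := q s - q a) hL
    ((hu.eventually_continuousOn hs).mono fun r hr => hr.sub hpa.continuousOn)
    (hps.sub hL.le hpa) (hqs.sub hqa) hh (fun x hx => ?_) ?_).mono ?_
  · have hrate := hps.kdvRate_sub hL hpa hqs hqa (Ioo_subset_Icc_self hx)
    rw [hrate, sub_add_cancel]
    exact ((hu.hasDerivAt s hs x hx).sub_const (u a x)).hasDerivWithinAt
  · simpa only [IsRightL2LipschitzAt, sub_sub_sub_cancel_right] using hLip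
  · have hforce := integral_mul_forcing_le hL.le hτ hw hh hn
    have hflux : L2norm L (q s - q a) ^ 2 ≤ M ^ 2 * L2norm L (u s - u a) ^ 2 := by
      rw [← mul_pow]
      exact pow_le_pow_left₀ (L2norm_nonneg L _) hM 2
    have hK := fluxConst_nonneg L
    have hexp : exp (-(2 * s)) ≤ 1 := exp_le_one_iff.2 (by linarith [hs.1])
    calc exp (-(2 * s)) * (fluxConst L * L2norm L (q s - q a) ^ 2
          - 2 * L2norm L (derivWithin (u s - u a) (Icc 0 L)) ^ 2
          + ∫ x in (0:ℝ)..L, (1 + x) * (2 * (u s - u a) x * kdvRate L (u a) (q a) x))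
        ≤ exp (-(2 * s)) * (fluxConst L * (M ^ 2 * L2norm L (u s - u a) ^ 2)
          + (1 / τ * (∫ x in (0:ℝ)..L, (1 + x) * (u s - u a) x ^ 2)
            + (1 + L) * L * n ^ 2 * τ)) := by
          refine mul_le_mul_of_nonneg_left ?_ (exp_pos _).le
          linarith [mul_le_mul_of_nonneg_left hflux hK,
            sq_nonneg (L2norm L (derivWithin (u s - u a) (Icc 0 L)))]
      _ = fluxConst L * M ^ 2 * (exp (-(2 * s)) * L2norm L (u s - u a) ^ 2)
          + 1 / τ * dampedEnergy L (fun r => u r - u a) s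
          + exp (-(2 * s)) * ((1 + L) * L * n ^ 2 * τ) := by rw [dampedEnergy]; ring
      _ ≤ _ := by
          have hlow := mul_le_mul_of_nonneg_left
            (L2norm_sq_le_dampedEnergy (u := fun r => u r - u a) hL.le hw)
            (by positivity : 0 ≤ fluxConst L * M ^ 2)
          linarith [mul_le_mul_of_nonneg_right hexp
            (by positivity : 0 ≤ (1 + L) * L * n ^ 2 * τ)]

lemma L2norm_sub_sq_le_of_velocity_bound (hL : 0 < L) (hu : IsKdVSolWithFlux L T u q)
    (hM : ∀ s ∈ Icc 0 T, ∀ a ∈ Icc 0 T, L2norm L (q s - q a) ≤ M * L2norm L (u s - u a))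
    {a b : ℝ} (ha : 0 < a) (hab : a < b) (hb : b < T)
    (hLip : ∀ s ∈ Ioo a b, IsRightL2LipschitzAt L u s)
    (hn : ∀ x ∈ Ioo 0 L, |kdvRate L (u a) (q a) x| ≤ n) :
    L2norm L (u b - u a) ^ 2
      ≤ exp (2 * T + (fluxConst L * M ^ 2 * T + 1)) * ((1 + L) * L) * (n * (b - a)) ^ 2 := by
  have hk : 0 ≤ fluxConst L * M ^ 2 := mul_nonneg (fluxConst_nonneg L) (sq_nonneg M)
  have hτ : 0 < b - a := sub_pos.2 hab
  have haT : a ∈ Icc 0 T := ⟨ha.le, by linarith⟩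
  have hbT : b ∈ Icc 0 T := ⟨by linarith, hb.le⟩
  have hcont : ContinuousOn (dampedEnergy L fun r => u r - u a) (Icc a b) :=
    continuousOn_dampedEnergy hL.le <| ContinuousOn.sub
      (hu.continuousOn.mono (prod_mono_left (Icc_subset_Icc ha.le hb.le)))
      ((hu.profile a haT).continuousOn.comp continuousOn_snd fun p hp => hp.2)
  have hgronwall := le_exp_mul_of_hasRightDerivLE (by positivity) (by positivity) hab.le hcont
    fun s hs =>
      have hs' : s ∈ Ioo 0 T := ⟨ha.trans hs.1, hs.2.trans hb⟩
      hu.hasRightDerivLE_dampedEnergy_sub_const hL haT hs' hτ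
        (hM s (Ioo_subset_Icc_self hs') a haT) hn (hLip s hs)
  have hstart : dampedEnergy L (fun r => u r - u a) a = 0 := by simp [dampedEnergy]
  have hrate : (fluxConst L * M ^ 2 + 1 / (b - a)) * (b - a) ≤ fluxConst L * M ^ 2 * T + 1 := by
    rw [add_mul, one_div_mul_cancel hτ.ne']
    linarith [mul_le_mul_of_nonneg_left (by linarith : b - a ≤ T) hk]
  have hlow := L2norm_sq_le_dampedEnergy (u := fun r => u r - u a) (t := b) hL.le
    ((hu.profile b hbT).continuousOn.sub (hu.profile a haT).continuousOn)
  rw [hstart, zero_add] at hgronwall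
  calc L2norm L (u b - u a) ^ 2
      = exp (2 * b) * (exp (-(2 * b)) * L2norm L (u b - u a) ^ 2) := by
        rw [← mul_assoc, ← exp_add, add_neg_cancel, exp_zero, one_mul]
    _ ≤ exp (2 * T) * (exp (fluxConst L * M ^ 2 * T + 1)
          * ((1 + L) * L * n ^ 2 * (b - a) * (b - a))) := by
        refine mul_le_mul (exp_le_exp.2 (by linarith)) (hlow.trans (hgronwall.trans ?_))
          (by positivity) (exp_pos _).le
        exact mul_le_mul_of_nonneg_right (exp_le_exp.2 hrate) (by positivity)
    _ = _ := by
        rw [exp_add (2 * T)]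
        ring

lemma L2norm_sub_le_of_velocity_bound (hL : 0 < L) (hu : IsKdVSolWithFlux L T u q)
    (hM : ∀ s ∈ Icc 0 T, ∀ a ∈ Icc 0 T, L2norm L (q s - q a) ≤ M * L2norm L (u s - u a))
    {a b : ℝ} (ha : 0 < a) (hab : a < b) (hb : b < T)
    (hLip : ∀ s ∈ Ioo a b, IsRightL2LipschitzAt L u s) (hn₀ : 0 ≤ n)
    (hn : ∀ x ∈ Ioo 0 L, |kdvRate L (u a) (q a) x| ≤ n) :
    L2norm L (u b - u a)
      ≤ √(exp (2 * T + (fluxConst L * M ^ 2 * T + 1)) * ((1 + L) * L)) * n * (b - a) := by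
  have hsq := sqrt_le_sqrt (hu.L2norm_sub_sq_le_of_velocity_bound hL hM ha hab hb hLip hn)
  rwa [sqrt_sq (L2norm_nonneg L _), sqrt_mul (by positivity),
    sqrt_sq (mul_nonneg hn₀ (sub_nonneg.2 hab.le)), ← mul_assoc] at hsq

end IsKdVSolWithFlux

lemma rel_of_short_steps_of_gaps {r : ℝ → ℝ → Prop} {S : Set ℝ} {δ : ℝ} (hδ : 0 < δ)
    (hS : IsClosed S) (htS : t ∈ S) (hSt' : ∀ s ∈ S, s ≤ t') (hrefl : ∀ a, r a a)
    (htrans : ∀ {a b c}, r a b → r b c → r a c)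
    (hshort : ∀ a ∈ S, ∀ b ∈ Icc a t', b ≤ a + δ → r a b)
    (hgap : ∀ a ∈ S, ∀ b ∈ Ioc a t', Disjoint (Ioo a b) S → r a b) : r t t' := by
  suffices h : ∀ n : ℕ, ∀ p ∈ S, t' - n * δ ≤ p → r p t' by
    obtain ⟨n, hn⟩ := exists_nat_ge ((t' - t) / δ)
    exact h n t htS (by linarith [(div_le_iff₀ hδ).1 hn])
  intro n
  induction n with
  | zero =>
    intro p hp hpt
    rw [(hSt' p hp).antisymm (by simpa using hpt)]
    exact hrefl t'
  | succ n ih =>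
    intro p hp hpt
    rcases le_total t' (p + δ) with hnear | hfar
    · exact hshort p hp t' ⟨hSt' p hp, le_rfl⟩ hnear
    -- Step to the last point `a` of `S` up to `p + δ`, then across the gap to the next point `b`.
    obtain ⟨a, ⟨haS, hpa, hap⟩, hamax⟩ := (isCompact_Icc.inter_left hS).exists_isGreatest
      (s := S ∩ Icc p (p + δ)) ⟨p, hp, le_rfl, by linarith⟩
    obtain ⟨b, ⟨hbS, hpb, hbt⟩, hbmin⟩ := (isCompact_Icc.inter_left
      ((isClosed_singleton (x := t')).union hS)).exists_isLeast
      (s := ({t'} ∪ S) ∩ Icc (p + δ) t') ⟨t', .inl rfl, hfar, le_rfl⟩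
    have hpa' : r p a := hshort p hp a ⟨hpa, hSt' a haS⟩ hap
    have hab : r a b := by
      rcases (hap.trans hpb).eq_or_lt with rfl | hab
      · exact hrefl a
      refine hgap a haS b ⟨hab, hbt⟩ (disjoint_left.2 fun s hs hsS => ?_)
      rcases le_total s (p + δ) with h | h
      · exact (hamax ⟨hsS, hpa.trans hs.1.le, h⟩).not_gt hs.1
      · exact (hbmin ⟨.inr hsS, h, hSt' s hsS⟩).not_gt hs.2
    have hbt' : r b t' := by
      rcases hbS with rfl | hbS
      · exact hrefl b
      · exact ih b hbS (by push_cast at hpt; linarith)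
    exact htrans (htrans hpa' hab) hbt'

/-- The increment of `u` over `[a,b]` is the sum of a part of `L²` norm at most `C (b - a)` and a
part which is at most `N (b - a)` at the points of `E`. -/
def HasSplitIncrement (L : ℝ) (u : ℝ → ℝ → ℝ) (E : Set ℝ) (C N a b : ℝ) : Prop :=
  ∃ Γ : ℝ → ℝ, ContinuousOn Γ (Icc 0 L) ∧ L2norm L Γ ≤ C * (b - a) ∧
    ∀ x ∈ E, |u b x - u a x - Γ x| ≤ N * (b - a)

namespace HasSplitIncrement

variable {E : Set ℝ} {C N a b c : ℝ}

lemma of_abs_le (hC : 0 ≤ C) (hab : a ≤ b) (h : ∀ x ∈ E, |u b x - u a x| ≤ N * (b - a)) :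
    HasSplitIncrement L u E C N a b :=
  ⟨0, continuousOn_const, by simpa [L2norm_zero] using mul_nonneg hC (sub_nonneg.2 hab),
    by simpa using h⟩

lemma of_L2norm_le (hN : 0 ≤ N) (hab : a ≤ b) (hc : ContinuousOn (u b - u a) (Icc 0 L))
    (h : L2norm L (u b - u a) ≤ C * (b - a)) : HasSplitIncrement L u E C N a b :=
  ⟨u b - u a, hc, h, fun x _ => by simpa using mul_nonneg hN (sub_nonneg.2 hab)⟩

lemma trans (hL : 0 ≤ L) (hab : HasSplitIncrement L u E C N a b)
    (hbc : HasSplitIncrement L u E C N b c) : HasSplitIncrement L u E C N a c := by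
  obtain ⟨Γ₁, hc₁, hn₁, h₁⟩ := hab
  obtain ⟨Γ₂, hc₂, hn₂, h₂⟩ := hbc
  refine ⟨Γ₁ + Γ₂, hc₁.add hc₂, (L2norm_add_le hL hc₁ hc₂).trans (by linarith), fun x hx => ?_⟩
  calc |u c x - u a x - (Γ₁ + Γ₂) x|
      = |(u b x - u a x - Γ₁ x) + (u c x - u b x - Γ₂ x)| := by
        rw [Pi.add_apply]; ring_nf
    _ ≤ N * (b - a) + N * (c - b) := (abs_add_le _ _).trans (add_le_add (h₁ x hx) (h₂ x hx))
    _ = N * (c - a) := by ring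

end HasSplitIncrement

lemma L2norm_le_of_forall_splitting {w : ℝ → ℝ} {E : ℕ → Set ℝ} {C N : ℝ} (hL : 0 ≤ L)
    (hN : 0 ≤ N) (hw : ContinuousOn w (Icc 0 L))
    (hE : ∀ x ∈ Icc 0 L, ∀ᶠ k in atTop, x ∈ E k)
    (h : ∀ k, ∃ Γ : ℝ → ℝ, ContinuousOn Γ (Icc 0 L) ∧ L2norm L Γ ≤ C ∧
      ∀ x ∈ E k, |w x - Γ x| ≤ N) : L2norm L w ≤ C + √L * N := by
  choose Γ hΓc hΓn hΓ using h
  have hwabs : L2norm L w ≤ L2norm L fun x => |w x| :=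
    L2norm_mono hL hw hw.abs fun x _ => (abs_abs (w x)).ge
  refine hwabs.trans (L2norm_le_of_tendsto hL (u := fun k x => min |w x| (|Γ k x| + N))
    (fun k => hw.abs.inf ((hΓc k).abs.add continuousOn_const)) hw.abs (fun x hx => ?_)
    fun k => ?_)
  · refine tendsto_nhds_of_eventually_eq ((hE x hx).mono fun k hk => min_eq_left ?_)
    linarith [hΓ k x hk, abs_sub_abs_le_abs_sub (w x) (Γ k x)]
  · calc L2norm L (fun x => min |w x| (|Γ k x| + N))
        ≤ L2norm L ((fun x => |Γ k x|) + fun _ => N) := by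
          refine L2norm_mono hL (hw.abs.inf ((hΓc k).abs.add continuousOn_const))
            ((hΓc k).abs.add continuousOn_const) fun x _ => ?_
          rw [abs_of_nonneg (le_min (abs_nonneg _) (by positivity))]
          exact (min_le_right _ _).trans (le_abs_self _)
      _ ≤ L2norm L (fun x => |Γ k x|) + L2norm L fun _ => N :=
          L2norm_add_le hL (hΓc k).abs continuousOn_const
      _ ≤ C + √L * N := by
          rw [L2norm_const, abs_of_nonneg hN]
          exact add_le_add_left ((L2norm_mono hL (hΓc k).abs (hΓc k)
            fun x _ => (abs_abs _).le).trans (hΓn k)) _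

end RightLipschitz

section Baire

lemma exists_eventually_forall_le_of_pointwise_bounded {X ι : Type*} [TopologicalSpace X]
    [BaireSpace X] [Nonempty X] {f : ι → X → ℝ} (hf : ∀ i, Continuous (f i))
    (hbdd : ∀ x, ∃ C, ∀ i, f i x ≤ C) :
    ∃ n : ℕ, ∃ p : X, ∀ᶠ x in 𝓝 p, ∀ i, f i x ≤ n := by
  obtain ⟨n, p, hp⟩ := nonempty_interior_of_iUnion_of_closed
    (f := fun n : ℕ => {x | ∀ i, f i x ≤ n})
    (fun n => by
      simp only [Set.ofPred_forall]
      exact isClosed_iInter fun i => isClosed_le (hf i) continuous_const)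
    (eq_univ_of_forall fun x => by
      obtain ⟨C, hC⟩ := hbdd x
      obtain ⟨n, hn⟩ := exists_nat_ge C
      exact mem_iUnion.2 ⟨n, fun i => (hC i).trans hn⟩)
  exact ⟨n, p, mem_interior_iff_mem_nhds.1 hp⟩

end Baire

section VelocityBound

variable {L T t t' x δ n : ℝ} {u : ℝ → ℝ → ℝ}

/-- The points of `[0,L]` at which the time derivative of `u` varies by at most `1` over time
intervals of length `δ`. -/
def slowlyVaryingSet (L T : ℝ) (u : ℝ → ℝ → ℝ) (δ : ℝ) : Set ℝ :=
  {x ∈ Icc 0 L | ∀ a ∈ Icc 0 T, ∀ b ∈ Icc 0 T, |a - b| ≤ δ →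
    |derivWithin (fun s => u s x) (Icc 0 T) a - derivWithin (fun s => u s x) (Icc 0 T) b| ≤ 1}

lemma eventually_mem_slowlyVaryingSet (hT : 0 < T) (hx : x ∈ Icc 0 L)
    (hd : ContDiffOn ℝ 1 (fun s => u s x) (Icc 0 T)) :
    ∀ᶠ k : ℕ in atTop, x ∈ slowlyVaryingSet L T u (1 / ((k : ℝ) + 1)) := by
  obtain ⟨δ, hδ, hmod⟩ := Metric.uniformContinuousOn_iff_le.1
    (isCompact_Icc.uniformContinuousOn_of_continuous (continuousOn_derivWithin hT hd)) 1 one_pos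
  filter_upwards [tendsto_one_div_add_atTop_nhds_zero_nat.eventually_le_const hδ] with k hk
  exact ⟨hx, fun a ha b hb hab => hmod a ha b hb (hab.trans hk)⟩

lemma abs_sub_le_of_mem_slowlyVaryingSet {a b : ℝ} (hx : x ∈ slowlyVaryingSet L T u δ)
    (hd : ContDiffOn ℝ 1 (fun s => u s x) (Icc 0 T)) (ha : 0 ≤ a) (hab : a ≤ b) (hb : b ≤ T)
    (hδ : b ≤ a + δ) (hn : |derivWithin (fun s => u s x) (Icc 0 T) a| ≤ n) :
    |u b x - u a x| ≤ (n + 1) * (b - a) := by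
  have hsub : Icc a b ⊆ Icc 0 T := Icc_subset_Icc ha hb
  have hmvt := (convex_Icc a b).norm_image_sub_le_of_norm_hasDerivWithin_le (C := n + 1)
    (fun s hs => ((hd.differentiableOn one_ne_zero s (hsub hs)).hasDerivWithinAt).mono hsub)
    (fun s hs => ?_) (left_mem_Icc.2 hab) (right_mem_Icc.2 hab)
  · rwa [norm_eq_abs, norm_eq_abs, abs_of_nonneg (sub_nonneg.2 hab)] at hmvt
  · have hvar := hx.2 s (hsub hs) a (hsub (left_mem_Icc.2 hab)) (by
      rw [abs_of_nonneg (sub_nonneg.2 hs.1)]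
      linarith [hs.2])
    rw [norm_eq_abs]
    linarith [abs_sub_abs_le_abs_sub (derivWithin (fun s => u s x) (Icc 0 T) s)
      (derivWithin (fun s => u s x) (Icc 0 T) a)]

lemma L2norm_sub_le_of_velocity_bound_on_closed {S : Set ℝ} {C : ℝ} (hL : 0 ≤ L) (hT : 0 < T)
    (hc : ∀ s ∈ Icc 0 T, ContinuousOn (u s) (Icc 0 L))
    (hd : ∀ x ∈ Icc 0 L, ContDiffOn ℝ 1 (fun s => u s x) (Icc 0 T))
    (hS : IsClosed S) (htS : t ∈ S) (hSsub : S ⊆ Icc t t') (ht : 0 ≤ t) (ht' : t' ≤ T)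
    (hn₀ : 0 ≤ n) (hn : ∀ s ∈ S, ∀ x ∈ Icc 0 L, |derivWithin (fun r => u r x) (Icc 0 T) s| ≤ n)
    (hC : 0 ≤ C) (hgap : ∀ a ∈ S, ∀ b ∈ Ioc a t', Disjoint (Ioo a b) S →
      L2norm L (u b - u a) ≤ C * (b - a)) :
    L2norm L (u t' - u t) ≤ (C + √L * (n + 1)) * (t' - t) := by
  have htt' : t ≤ t' := (hSsub htS).2
  have hmem {s : ℝ} (hs : s ∈ Icc t t') : s ∈ Icc 0 T := ⟨ht.trans hs.1, hs.2.trans ht'⟩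
  have hsplit (δ : ℝ) (hδ : 0 < δ) :
      HasSplitIncrement L u (slowlyVaryingSet L T u δ) C (n + 1) t t' := by
    refine rel_of_short_steps_of_gaps
      (r := HasSplitIncrement L u (slowlyVaryingSet L T u δ) C (n + 1)) hδ hS htS
      (fun s hs => (hSsub hs).2) (fun a => .of_abs_le hC le_rfl (by simp))
      (fun hab hbc => hab.trans hL hbc) (fun a ha b hb hbδ => ?_) fun a ha b hb hdisj => ?_
    · refine .of_abs_le hC hb.1 fun x hx => ?_
      exact abs_sub_le_of_mem_slowlyVaryingSet hx (hd x hx.1) (hmem (hSsub ha)).1 hb.1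
        (hb.2.trans ht') hbδ (hn a ha x hx.1)
    · have hbt : b ∈ Icc t t' := ⟨(hSsub ha).1.trans hb.1.le, hb.2⟩
      exact .of_L2norm_le (by positivity) hb.1.le ((hc b (hmem hbt)).sub
        (hc a (hmem (hSsub ha)))) (hgap a ha b hb hdisj)
  calc L2norm L (u t' - u t) ≤ C * (t' - t) + √L * ((n + 1) * (t' - t)) :=
        L2norm_le_of_forall_splitting hL (mul_nonneg (by positivity) (sub_nonneg.2 htt'))
          ((hc t' (hmem (right_mem_Icc.2 htt'))).sub (hc t (hmem (left_mem_Icc.2 htt'))))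
          (fun x hx => eventually_mem_slowlyVaryingSet hT hx (hd x hx))
          fun k => hsplit _ Nat.one_div_pos_of_nat
    _ = _ := by ring

end VelocityBound

namespace IsKdVSolWithFlux

variable {L T t M n : ℝ} {u q : ℝ → ℝ → ℝ}

lemma derivWithin_time_eq (hu : IsKdVSolWithFlux L T u q) (ht : t ∈ Ioo 0 T) {x : ℝ}
    (hx : x ∈ Ioo 0 L) :
    derivWithin (fun s => u s x) (Icc 0 T) t = kdvRate L (u t) (q t) x :=
  (hu.hasDerivAt t ht x hx).hasDerivWithinAt.derivWithin
    (uniqueDiffOn_Icc (ht.1.trans ht.2) t (Ioo_subset_Icc_self ht))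

lemma exists_abs_derivWithin_time_le (hL : 0 < L) (hu : IsKdVSolWithFlux L T u q)
    (ht : t ∈ Ioo 0 T) :
    ∃ C, ∀ x ∈ Icc 0 L, |derivWithin (fun s => u s x) (Icc 0 T) t| ≤ C := by
  have ht' := Ioo_subset_Icc_self ht
  obtain ⟨C, hC⟩ := isCompact_Icc.exists_bound_of_continuousOn
    ((hu.profile t ht').continuousOn_kdvRate hL (hu.contDiffOn_flux t ht'))
  have hboundary {x : ℝ} (hx : ∀ s ∈ Icc 0 T, u s x = 0) :
      |derivWithin (fun s => u s x) (Icc 0 T) t| ≤ C := by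
    rw [derivWithin_congr hx (hx t ht')]
    simpa using (norm_nonneg _).trans (hC 0 (left_mem_Icc.2 hL.le))
  refine ⟨C, fun x hx => ?_⟩
  rcases hx.1.eq_or_lt with rfl | h0
  · exact hboundary fun s hs => (hu.profile s hs).left_eq_zero
  rcases hx.2.eq_or_lt with rfl | h1
  · exact hboundary fun s hs => (hu.profile s hs).right_eq_zero
  · rw [hu.derivWithin_time_eq ht ⟨h0, h1⟩]
    exact hC x hx

lemma isRightL2LipschitzAt_of_velocity_bound (hL : 0 < L) (hu : IsKdVSolWithFlux L T u q)
    (hM : ∀ s ∈ Icc 0 T, ∀ a ∈ Icc 0 T, L2norm L (q s - q a) ≤ M * L2norm L (u s - u a))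
    {S : Set ℝ} (hS : IsClosed S) (hLip : ∀ s ∈ Ioo 0 T, s ∉ S → IsRightL2LipschitzAt L u s)
    (ht : t ∈ Ioo 0 T) (htS : t ∈ S) (hn₀ : 0 ≤ n)
    (hn : ∀ᶠ s in 𝓝 t, s ∈ S → ∀ x ∈ Icc 0 L, |derivWithin (fun r => u r x) (Icc 0 T) s| ≤ n) :
    IsRightL2LipschitzAt L u t := by
  obtain ⟨l, r, htlr, hlr⟩ := mem_nhds_iff_exists_Ioo_subset.1 hn
  set C := √(exp (2 * T + (fluxConst L * M ^ 2 * T + 1)) * ((1 + L) * L)) * n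
  refine ⟨C + √L * (n + 1), ?_⟩
  filter_upwards [Ioo_mem_nhdsGT (lt_min htlr.2 ht.2)] with t' ht'
  have ht'r : t' < r := ht'.2.trans_le (min_le_left _ _)
  have ht'T : t' < T := ht'.2.trans_le (min_le_right _ _)
  have hvel : ∀ s ∈ S ∩ Icc t t', ∀ x ∈ Icc 0 L,
      |derivWithin (fun r => u r x) (Icc 0 T) s| ≤ n := fun s hs =>
    hlr ⟨htlr.1.trans_le hs.2.1, hs.2.2.trans_lt ht'r⟩ hs.1
  refine L2norm_sub_le_of_velocity_bound_on_closed hL.le (ht.1.trans ht.2)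
    (fun s hs => (hu.profile s hs).continuousOn) hu.contDiffOn_time (hS.inter isClosed_Icc)
    ⟨htS, le_rfl, ht'.1.le⟩ inter_subset_right ht.1.le ht'T.le hn₀ hvel (by positivity)
    fun a ha b hb hdisj => ?_
  have haT : a ∈ Ioo 0 T := ⟨ht.1.trans_le ha.2.1, ha.2.2.trans_lt ht'T⟩
  refine hu.L2norm_sub_le_of_velocity_bound hL hM haT.1 hb.1 (hb.2.trans_lt ht'T)
    (fun s hs => hLip s ⟨haT.1.trans hs.1, (hs.2.trans_le hb.2).trans ht'T⟩ fun hsS => ?_) hn₀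
    fun x hx => ?_
  · exact disjoint_left.1 hdisj hs ⟨hsS, ha.2.1.trans hs.1.le, hs.2.le.trans hb.2⟩
  · rw [← hu.derivWithin_time_eq haT hx]
    exact hvel a ha x (Ioo_subset_Icc_self hx)

lemma exists_eventually_abs_derivWithin_time_le (hL : 0 < L) (hu : IsKdVSolWithFlux L T u q)
    {P : Set ℝ} (hP : IsLocallyClosed P) (hPT : P ⊆ Ioo 0 T) (hne : P.Nonempty) :
    ∃ n : ℕ, ∃ p ∈ P, ∀ᶠ s in 𝓝 p, s ∈ P → ∀ x ∈ Icc 0 L,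
      |derivWithin (fun r => u r x) (Icc 0 T) s| ≤ n := by
  obtain ⟨t, ht⟩ := hne
  have : LocallyCompactSpace P := hP.locallyCompactSpace
  have : Nonempty P := ⟨t, ht⟩
  obtain ⟨n, p, hp⟩ := exists_eventually_forall_le_of_pointwise_bounded
    (f := fun (x : Icc 0 L) (s : P) => |derivWithin (fun r => u r x) (Icc 0 T) s|)
    (fun x => (continuousOn_iff_continuous_domRestrict.1 <|
      (continuousOn_derivWithin ((hPT ht).1.trans (hPT ht).2) (hu.contDiffOn_time x x.2)).mono
        (hPT.trans Ioo_subset_Icc_self)).abs)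
    (fun s => by
      obtain ⟨C, hC⟩ := hu.exists_abs_derivWithin_time_le hL (hPT s.2)
      exact ⟨C, fun x => hC x x.2⟩)
  refine ⟨n, p, p.2, eventually_nhdsWithin_iff.1 ?_⟩
  rw [← map_nhds_subtype_val, eventually_map]
  exact hp.mono fun s hs x hx => hs ⟨x, hx⟩

/-- By Baire's theorem the velocity is locally bounded somewhere on the closed set of bad times,
while the energy estimate bounds the increments across the complementary intervals of good times. -/
lemma isRightL2LipschitzAt (hL : 0 < L) (hu : IsKdVSolWithFlux L T u q)
    (hM : ∀ s ∈ Icc 0 T, ∀ a ∈ Icc 0 T, L2norm L (q s - q a) ≤ M * L2norm L (u s - u a))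
    (ht : t ∈ Ioo 0 T) : IsRightL2LipschitzAt L u t := by
  set R : Set ℝ := {s | IsRightL2LipschitzAt L u s}
  set P : Set ℝ := Ioo 0 T ∩ (interior R)ᶜ
  by_contra hbad
  have hclosed : IsClosed (interior R)ᶜ := isOpen_interior.isClosed_compl
  obtain ⟨n, p, hpP, hn⟩ := hu.exists_eventually_abs_derivWithin_time_le hL (P := P)
    (isOpen_Ioo.isLocallyClosed.inter hclosed.isLocallyClosed) inter_subset_left
    ⟨t, ht, fun h => hbad (interior_subset (s := R) h)⟩
  refine hpP.2 (mem_interior_iff_mem_nhds.2 ?_)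
  have hgood {s : ℝ} (hs : s ∉ (interior R)ᶜ) : s ∈ R := interior_subset (notMem_compl_iff.1 hs)
  filter_upwards [isOpen_Ioo.eventually_mem hpP.1, hn.eventually_nhds] with s hs hns
  by_cases hsR : s ∈ interior R
  · exact interior_subset hsR
  refine hu.isRightL2LipschitzAt_of_velocity_bound hL hM hclosed (fun a _ ha => hgood ha) hs hsR
    n.cast_nonneg ?_
  filter_upwards [hns, isOpen_Ioo.eventually_mem hs] with a ha haT haS
  exact ha ⟨haT, haS⟩

end IsKdVSolWithFlux

section Cutoff

variable {Φ : ℝ → ℝ} {Λ : ℝ≥0} {ε a b : ℝ}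

lemma exists_lipschitzOnWith_of_isCutoff (hΦ : IsCutoff Φ) :
    ∃ Λ : ℝ≥0, LipschitzOnWith Λ Φ (Ici 0) := by
  obtain ⟨hsmooth, -, -, hzero, -⟩ := hΦ
  obtain ⟨C, hC⟩ := isCompact_Icc.exists_bound_of_continuousOn (s := Icc (0:ℝ) 1)
    (hsmooth.continuous_deriv (by norm_cast)).continuousOn
  have hC₀ : 0 ≤ C := (norm_nonneg _).trans (hC 0 ⟨le_rfl, zero_le_one⟩)
  refine ⟨⟨C, hC₀⟩, (convex_Ici 0).lipschitzOnWith_of_nnnorm_deriv_le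
    (fun r _ => hsmooth.differentiable (by simp) r) fun r hr => ?_⟩
  change ‖deriv Φ r‖ ≤ C
  rcases le_or_gt r 1 with hr1 | hr1
  · exact hC r ⟨hr, hr1⟩
  · have hloc : Φ =ᶠ[𝓝 r] fun _ => 0 := by
      filter_upwards [Ioi_mem_nhds hr1] with s hs using hzero s (Ioi_subset_Ici_self hs)
    simpa [hloc.deriv_eq] using hC₀

lemma abs_cutoff_le (hΦ : LipschitzOnWith Λ Φ (Ici 0)) (hΦ₁ : ∀ r ∈ Ici 1, Φ r = 0) (ha : 0 ≤ a) :
    |Φ a| ≤ Λ := by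
  rcases le_total 1 a with h | h
  · simp [hΦ₁ a h]
  · have hdist := hΦ.dist_le_mul a ha 1 (mem_Ici.2 zero_le_one)
    rw [hΦ₁ 1 self_mem_Ici, dist_zero_right, norm_eq_abs, dist_eq, abs_sub_comm,
      abs_of_nonneg (sub_nonneg.2 h)] at hdist
    exact hdist.trans (mul_le_of_le_one_right Λ.2 (by linarith))

lemma abs_cutoff_div_sub_le (hΦ : LipschitzOnWith Λ Φ (Ici 0)) (hε : 0 < ε) (ha : 0 ≤ a)
    (hb : 0 ≤ b) : |Φ (a / ε) - Φ (b / ε)| ≤ Λ / ε * |a - b| := by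
  have hdist := hΦ.dist_le_mul (a / ε) (by exact div_nonneg ha hε.le) (b / ε)
    (by exact div_nonneg hb hε.le)
  rwa [dist_eq, dist_eq, ← sub_div, abs_div, abs_of_pos hε, mul_div_assoc', mul_div_right_comm]
    at hdist

end Cutoff

section Flux

variable {L ε B : ℝ} {Φ f g : ℝ → ℝ} {Λ : ℝ≥0}

/-- The flux `Φ_ε(‖f‖) f² / 2`, whose derivative is the nonlinear term of the modified KdV
equation. -/
noncomputable def convectiveFlux (L ε : ℝ) (Φ f : ℝ → ℝ) (x : ℝ) : ℝ :=
  Φ (L2norm L f / ε) / 2 * f x ^ 2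

/-- The norm `‖f'‖` for profiles `f` in the region `‖f‖ ≤ ε` where the cutoff is active, and zero
outside it. -/
noncomputable def activeGradient (L ε : ℝ) (f : ℝ → ℝ) : ℝ :=
  open Classical in if L2norm L f ≤ ε then L2norm L (derivWithin f (Icc 0 L)) else 0

lemma contDiffOn_convectiveFlux (hf : ContDiffOn ℝ 1 f (Icc 0 L)) :
    ContDiffOn ℝ 1 (convectiveFlux L ε Φ f) (Icc 0 L) :=
  contDiffOn_const.mul (hf.pow 2)

lemma derivWithin_convectiveFlux (hf : ContDiffOn ℝ 1 f (Icc 0 L)) {x : ℝ} (hx : x ∈ Ioo 0 L) :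
    derivWithin (convectiveFlux L ε Φ f) (Icc 0 L) x
      = Φ (L2norm L f / ε) * (f x * derivWithin f (Icc 0 L) x) := by
  have hd := ((hasDerivAt_derivWithin_of_contDiffOn hf hx).pow 2).const_mul
    (Φ (L2norm L f / ε) / 2)
  refine (hd.hasDerivWithinAt.derivWithin
    (uniqueDiffOn_Icc (hx.1.trans hx.2) x (Ioo_subset_Icc_self hx))).trans ?_
  push_cast
  ring

lemma convectiveFlux_eq_zero (hΦ₁ : ∀ r ∈ Ici 1, Φ r = 0) (hε : 0 < ε) (hf : ε ≤ L2norm L f) :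
    convectiveFlux L ε Φ f = 0 := by
  ext x
  simp [convectiveFlux, hΦ₁ (L2norm L f / ε) ((one_le_div hε).2 hf)]

lemma L2norm_convectiveFlux_sub_le (hL : 0 ≤ L) (hf : ContinuousOn f (Icc 0 L))
    (hg : ContinuousOn g (Icc 0 L)) :
    L2norm L (convectiveFlux L ε Φ f - convectiveFlux L ε Φ g)
      ≤ |Φ (L2norm L f / ε)| / 2 * L2norm L ((f - g) * (f + g))
        + |Φ (L2norm L f / ε) - Φ (L2norm L g / ε)| / 2 * L2norm L (g * g) := by
  set α := Φ (L2norm L f / ε)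
  set β := Φ (L2norm L g / ε)
  have hsplit : convectiveFlux L ε Φ f - convectiveFlux L ε Φ g
      = (fun x => α / 2 * ((f - g) * (f + g)) x) + fun x => (α - β) / 2 * (g * g) x := by
    ext x
    simp only [Pi.sub_apply, Pi.add_apply, Pi.mul_apply, convectiveFlux, α, β]
    ring
  have hfg : ContinuousOn ((f - g) * (f + g)) (Icc 0 L) := (hf.sub hg).mul (hf.add hg)
  calc L2norm L (convectiveFlux L ε Φ f - convectiveFlux L ε Φ g)
      ≤ L2norm L (fun x => α / 2 * ((f - g) * (f + g)) x)
        + L2norm L (fun x => (α - β) / 2 * (g * g) x) := by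
        rw [hsplit]
        exact L2norm_add_le hL (continuousOn_const.mul hfg) (continuousOn_const.mul (hg.mul hg))
    _ = _ := by
        rw [L2norm_const_mul, L2norm_const_mul, abs_div, abs_div, abs_two]

lemma L2norm_convectiveFlux_sub_le_of_abs_le (hΦ : LipschitzOnWith Λ Φ (Ici 0))
    (hΦ₁ : ∀ r ∈ Ici 1, Φ r = 0) (hL : 0 ≤ L) (hε : 0 < ε) (hf : ContinuousOn f (Icc 0 L))
    (hg : ContinuousOn g (Icc 0 L)) (hfB : ∀ x ∈ Icc 0 L, |f x| ≤ B)
    (hgB : ∀ x ∈ Icc 0 L, |g x| ≤ B) :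
    L2norm L (convectiveFlux L ε Φ f - convectiveFlux L ε Φ g)
      ≤ (Λ * B + Λ / ε * (√L * B ^ 2)) * L2norm L (f - g) := by
  have hB : 0 ≤ B := (abs_nonneg _).trans (hfB 0 (left_mem_Icc.2 hL))
  have hprod : L2norm L ((f - g) * (f + g)) ≤ 2 * B * L2norm L (f - g) := by
    rw [mul_comm]
    refine L2norm_mul_le hL (hf.add hg) (hf.sub hg) fun x hx => ?_
    exact (abs_add_le _ _).trans (by linarith [hfB x hx, hgB x hx])
  have hsq : L2norm L (g * g) ≤ √L * B ^ 2 := by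
    refine L2norm_le_of_abs_le hL (hg.mul hg) fun x hx => ?_
    rw [Pi.mul_apply, abs_mul, sq]
    exact mul_le_mul (hgB x hx) (hgB x hx) (abs_nonneg _) hB
  have hα := abs_cutoff_le hΦ hΦ₁ (div_nonneg (L2norm_nonneg L f) hε.le)
  have hαβ : |Φ (L2norm L f / ε) - Φ (L2norm L g / ε)| ≤ Λ / ε * L2norm L (f - g) :=
    (abs_cutoff_div_sub_le hΦ hε (L2norm_nonneg L f) (L2norm_nonneg L g)).trans <|
      mul_le_mul_of_nonneg_left (abs_L2norm_sub_le hL hf hg) (by positivity)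
  have hd := L2norm_nonneg L (f - g)
  calc _ ≤ _ := L2norm_convectiveFlux_sub_le hL hf hg
    _ ≤ Λ / 2 * (2 * B * L2norm L (f - g))
        + Λ / ε * L2norm L (f - g) / 2 * (√L * B ^ 2) := by
        have := L2norm_nonneg L ((f - g) * (f + g))
        have := L2norm_nonneg L (g * g)
        gcongr
    _ ≤ _ := by
        have : 0 ≤ Λ / ε * L2norm L (f - g) * (√L * B ^ 2) := by positivity
        linarith

lemma abs_cutoff_mul_L2norm_le (hΦ : LipschitzOnWith Λ Φ (Ici 0)) (hΦ₁ : ∀ r ∈ Ici 1, Φ r = 0)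
    (hL : 0 < L) (hε : 0 < ε) (hf : ContDiffOn ℝ 1 f (Icc 0 L)) (hg : ContDiffOn ℝ 1 g (Icc 0 L))
    (hf₀ : f 0 = 0) (hg₀ : g 0 = 0) (hgf : L2norm L g ≤ L2norm L f) :
    |Φ (L2norm L f / ε)| / 2 * L2norm L ((f - g) * (f + g))
      ≤ √L * Λ * (ε * L2norm L (derivWithin (f - g) (Icc 0 L))) := by
  set d := L2norm L (derivWithin (f - g) (Icc 0 L))
  have hd : 0 ≤ d := L2norm_nonneg L _
  rcases le_or_gt ε (L2norm L f) with h | h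
  · rw [hΦ₁ (L2norm L f / ε) ((one_le_div hε).2 h), abs_zero, zero_div, zero_mul]
    positivity
  have hΛ := abs_cutoff_le hΦ hΦ₁ (div_nonneg (L2norm_nonneg L f) hε.le)
  have hsum : L2norm L (f + g) ≤ 2 * ε :=
    (L2norm_add_le hL.le hf.continuousOn hg.continuousOn).trans (by linarith)
  have hprod : L2norm L ((f - g) * (f + g)) ≤ √L * d * L2norm L (f + g) :=
    L2norm_mul_le hL.le (hf.sub hg).continuousOn (hf.add hg).continuousOn fun x hx =>
      abs_le_sqrt_mul_L2norm_derivWithin hL (hf.sub hg) (by simp [hf₀, hg₀]) hx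
  calc |Φ (L2norm L f / ε)| / 2 * L2norm L ((f - g) * (f + g))
      ≤ Λ / 2 * (√L * d * (2 * ε)) :=
        mul_le_mul (by gcongr) (hprod.trans (by gcongr)) (L2norm_nonneg L _) (by positivity)
    _ = √L * Λ * (ε * d) := by ring

lemma abs_cutoff_sub_mul_L2norm_le (hΦ : LipschitzOnWith Λ Φ (Ici 0)) (hL : 0 < L) (hε : 0 < ε)
    (hf : ContinuousOn f (Icc 0 L)) (hg : ContDiffOn ℝ 1 g (Icc 0 L)) (hg₀ : g 0 = 0)
    (hgε : L2norm L g ≤ ε) :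
    |Φ (L2norm L f / ε) - Φ (L2norm L g / ε)| / 2 * L2norm L (g * g)
      ≤ √L * Λ * (L2norm L (derivWithin g (Icc 0 L)) * L2norm L (f - g)) := by
  set m := L2norm L (derivWithin g (Icc 0 L))
  have hm : 0 ≤ m := L2norm_nonneg L _
  have hfg : 0 ≤ L2norm L (f - g) := L2norm_nonneg L _
  have hsq : L2norm L (g * g) ≤ √L * m * ε :=
    (L2norm_mul_le hL.le hg.continuousOn hg.continuousOn fun x hx =>
      abs_le_sqrt_mul_L2norm_derivWithin hL hg hg₀ hx).trans (by gcongr)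
  have hαβ : |Φ (L2norm L f / ε) - Φ (L2norm L g / ε)| ≤ Λ / ε * L2norm L (f - g) :=
    (abs_cutoff_div_sub_le hΦ hε (L2norm_nonneg L f) (L2norm_nonneg L g)).trans <|
      mul_le_mul_of_nonneg_left (abs_L2norm_sub_le hL.le hf hg.continuousOn) (by positivity)
  calc _ ≤ Λ / ε * L2norm L (f - g) * (√L * m * ε) :=
        mul_le_mul ((half_le_self (abs_nonneg _)).trans hαβ) hsq (L2norm_nonneg L _)
          (by positivity)
    _ = √L * Λ * (m * L2norm L (f - g)) := by field_simp

/-- With `‖g‖ ≤ ‖f‖`, the cutoff at `f` controls `f + g` by `2ε`, and the difference of the cutoffs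
multiplies the smaller profile only. -/
lemma L2norm_convectiveFlux_sub_le_of_le (hΦ : LipschitzOnWith Λ Φ (Ici 0))
    (hΦ₁ : ∀ r ∈ Ici 1, Φ r = 0) (hL : 0 < L) (hε : 0 < ε) (hf : ContDiffOn ℝ 1 f (Icc 0 L))
    (hg : ContDiffOn ℝ 1 g (Icc 0 L)) (hf₀ : f 0 = 0) (hg₀ : g 0 = 0)
    (hgf : L2norm L g ≤ L2norm L f) :
    L2norm L (convectiveFlux L ε Φ f - convectiveFlux L ε Φ g)
      ≤ √L * Λ * (ε * L2norm L (derivWithin (f - g) (Icc 0 L))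
        + activeGradient L ε g * L2norm L (f - g)) := by
  rcases lt_or_ge ε (L2norm L g) with hactive | hactive
  · rw [convectiveFlux_eq_zero hΦ₁ hε hactive.le,
      convectiveFlux_eq_zero hΦ₁ hε (hactive.le.trans hgf), sub_zero, L2norm_zero, activeGradient,
      if_neg hactive.not_ge, zero_mul, add_zero]
    positivity [L2norm_nonneg L (derivWithin (f - g) (Icc 0 L))]
  rw [activeGradient, if_pos hactive, mul_add]
  exact (L2norm_convectiveFlux_sub_le hL.le hf.continuousOn hg.continuousOn).trans
    (add_le_add (abs_cutoff_mul_L2norm_le hΦ hΦ₁ hL hε hf hg hf₀ hg₀ hgf)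
      (abs_cutoff_sub_mul_L2norm_le hΦ hL hε hf.continuousOn hg hg₀ hactive))

lemma L2norm_convectiveFlux_sub_sq_le (hΦ : LipschitzOnWith Λ Φ (Ici 0))
    (hΦ₁ : ∀ r ∈ Ici 1, Φ r = 0) (hL : 0 < L) (hε : 0 < ε) (hf : ContDiffOn ℝ 1 f (Icc 0 L))
    (hg : ContDiffOn ℝ 1 g (Icc 0 L)) (hf₀ : f 0 = 0) (hg₀ : g 0 = 0) :
    L2norm L (convectiveFlux L ε Φ f - convectiveFlux L ε Φ g) ^ 2
      ≤ 2 * L * Λ ^ 2 * (ε ^ 2 * L2norm L (derivWithin (f - g) (Icc 0 L)) ^ 2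
        + (activeGradient L ε f ^ 2 + activeGradient L ε g ^ 2) * L2norm L (f - g) ^ 2) := by
  wlog hgf : L2norm L g ≤ L2norm L f generalizing f g
  · have h := this hg hf hg₀ hf₀ (le_of_not_ge hgf)
    rwa [L2norm_sub_comm, L2norm_sub_comm L g f, L2norm_derivWithin_sub_comm hL.le hf hg,
      add_comm (activeGradient L ε g ^ 2)] at h
  set d := L2norm L (derivWithin (f - g) (Icc 0 L))
  set w := L2norm L (f - g)
  set m := activeGradient L ε g
  calc L2norm L (convectiveFlux L ε Φ f - convectiveFlux L ε Φ g) ^ 2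
      ≤ (√L * Λ * (ε * d + m * w)) ^ 2 := pow_le_pow_left₀ (L2norm_nonneg L _)
        (L2norm_convectiveFlux_sub_le_of_le hΦ hΦ₁ hL hε hf hg hf₀ hg₀ hgf) 2
    _ = L * Λ ^ 2 * (ε * d + m * w) ^ 2 := by rw [mul_pow, mul_pow, sq_sqrt hL.le]
    _ ≤ L * Λ ^ 2 * (2 * ((ε * d) ^ 2 + (m * w) ^ 2)) := by
        gcongr
        exact add_sq_le
    _ = 2 * L * Λ ^ 2 * (ε ^ 2 * d ^ 2 + (0 + m ^ 2) * w ^ 2) := by ring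
    _ ≤ _ := by
        gcongr
        exact sq_nonneg _

lemma L2norm_convectiveFlux_sq_le (hΦ : LipschitzOnWith Λ Φ (Ici 0))
    (hΦ₁ : ∀ r ∈ Ici 1, Φ r = 0) (hL : 0 < L) (hε : 0 < ε) (hf : ContDiffOn ℝ 1 f (Icc 0 L))
    (hf₀ : f 0 = 0) :
    L2norm L (convectiveFlux L ε Φ f) ^ 2
      ≤ L * Λ ^ 2 * ε ^ 2 * L2norm L (derivWithin f (Icc 0 L)) ^ 2 := by
  have hzero : activeGradient L ε 0 = 0 := by
    simp [activeGradient, derivWithin_zero, L2norm_zero]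
  have hflux : convectiveFlux L ε Φ 0 = 0 := by
    ext x
    simp [convectiveFlux]
  have h := L2norm_convectiveFlux_sub_le_of_le (g := 0) hΦ hΦ₁ hL hε hf contDiffOn_const hf₀ rfl
    ((L2norm_zero L).trans_le (L2norm_nonneg L f))
  rw [hflux, hzero, sub_zero, sub_zero, zero_mul, add_zero] at h
  calc _ ≤ (√L * Λ * (ε * L2norm L (derivWithin f (Icc 0 L)))) ^ 2 :=
        pow_le_pow_left₀ (L2norm_nonneg L _) h 2
    _ = _ := by rw [mul_pow, mul_pow, sq_sqrt hL.le]; ring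

end Flux

section Solutions

variable {L T ε t : ℝ} {Φ : ℝ → ℝ} {y z : ℝ → ℝ → ℝ} {Λ : ℝ≥0}

lemma isKdVSolWithFlux_of_isModifiedKdVSol (hy : IsModifiedKdVSol L T ε Φ y) :
    IsKdVSolWithFlux L T y (fun t => convectiveFlux L ε Φ (y t)) := by
  obtain ⟨hspace, htime, hcont, hpde, hbdry⟩ := hy
  have hspace_one (t) (ht : t ∈ Icc 0 T) : ContDiffOn ℝ 1 (y t) (Icc 0 L) :=
    (hspace t ht).of_le (by norm_num)
  refine ⟨fun t ht => ⟨hspace t ht, (hbdry t ht).1, (hbdry t ht).2.1, (hbdry t ht).2.2⟩, htime,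
    hcont, fun t ht => contDiffOn_convectiveFlux (hspace_one t ht), fun t ht x hx => ?_⟩
  refine (hasDerivAt_derivWithin_of_contDiffOn (htime x (Ioo_subset_Icc_self hx)) ht).congr_deriv ?_
  rw [kdvRate, derivWithin_convectiveFlux (hspace_one t (Ioo_subset_Icc_self ht)) hx]
  linarith [hpde t ht x hx]

lemma isKdVSolWithFlux_of_isLinearKdVSol (hz : IsLinearKdVSol L T z) :
    IsKdVSolWithFlux L T z 0 := by
  obtain ⟨hspace, htime, hcont, hpde, hbdry⟩ := hz
  refine ⟨fun t ht => ⟨hspace t ht, (hbdry t ht).1, (hbdry t ht).2.1, (hbdry t ht).2.2⟩, htime,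
    hcont, fun _ _ => contDiffOn_const, fun t ht x hx => ?_⟩
  refine (hasDerivAt_derivWithin_of_contDiffOn (htime x (Ioo_subset_Icc_self hx)) ht).congr_deriv ?_
  rw [kdvRate, Pi.zero_apply, derivWithin_zero, Pi.zero_apply]
  linarith [hpde t ht x hx]

lemma isRightL2LipschitzAt_of_isModifiedKdVSol (hΦ : LipschitzOnWith Λ Φ (Ici 0))
    (hΦ₁ : ∀ r ∈ Ici 1, Φ r = 0) (hL : 0 < L) (hε : 0 < ε) (hy : IsModifiedKdVSol L T ε Φ y)
    (ht : t ∈ Ioo 0 T) : IsRightL2LipschitzAt L y t := by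
  have hy' := isKdVSolWithFlux_of_isModifiedKdVSol hy
  obtain ⟨B, hB⟩ := (isCompact_Icc.prod isCompact_Icc).exists_bound_of_continuousOn hy'.continuousOn
  exact hy'.isRightL2LipschitzAt hL (fun s hs a ha =>
    L2norm_convectiveFlux_sub_le_of_abs_le hΦ hΦ₁ hL.le hε (hy'.profile s hs).continuousOn
      (hy'.profile a ha).continuousOn (fun x hx => hB (s, x) ⟨hs, hx⟩)
      fun x hx => hB (a, x) ⟨ha, hx⟩) ht

lemma isRightL2LipschitzAt_of_isLinearKdVSol (hL : 0 < L) (hz : IsLinearKdVSol L T z)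
    (ht : t ∈ Ioo 0 T) : IsRightL2LipschitzAt L z t :=
  (isKdVSolWithFlux_of_isLinearKdVSol hz).isRightL2LipschitzAt (M := 0) hL
    (fun _ _ _ _ => by simp [L2norm_zero]) ht

end Solutions

section Saturation

variable {f h : ℝ → ℝ} {a b t ε : ℝ}

lemma HasRightDerivLE.add (hf : HasRightDerivLE f a t) (hh : HasRightDerivLE h b t) :
    HasRightDerivLE (f + h) (a + b) t := by
  obtain ⟨f', hf', hfa⟩ := hf
  obtain ⟨h', hh', hhb⟩ := hh
  exact ⟨f' + h', hf'.add hh', add_le_add hfa hhb⟩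

lemma HasRightDerivLE.const_mul {κ : ℝ} (hκ : 0 ≤ κ) (hf : HasRightDerivLE f a t) :
    HasRightDerivLE (fun s => κ * f s) (κ * a) t := by
  obtain ⟨f', hf', hfa⟩ := hf
  exact ⟨κ * f', hf'.const_mul κ, mul_le_mul_of_nonneg_left hfa hκ⟩

/-- The increasing map `r ↦ ε² r / (r + ε²)`, comparable to `r` for `r ≲ ε²` and bounded by `ε²`:
a saturated energy has size `ε²` whatever the data. -/
noncomputable def saturate (ε r : ℝ) : ℝ := ε ^ 2 * r / (r + ε ^ 2)

lemma saturate_nonneg {r : ℝ} (hr : 0 ≤ r) : 0 ≤ saturate ε r := by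
  unfold saturate
  positivity

lemma saturate_le_sq {r : ℝ} (hr : 0 ≤ r) : saturate ε r ≤ ε ^ 2 := by
  rw [saturate, mul_div_assoc]
  exact mul_le_of_le_one_right (sq_nonneg ε)
    (div_le_one_of_le₀ (le_add_of_nonneg_right (sq_nonneg ε)) (by positivity))

lemma HasRightDerivLE.saturate (hε : 0 < ε) (hft : 0 ≤ f t) (hf : HasRightDerivLE f a t) :
    HasRightDerivLE (fun s => saturate ε (f s)) ((ε ^ 2 / (f t + ε ^ 2)) ^ 2 * a) t := by
  obtain ⟨f', hf', hfa⟩ := hf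
  have hpos : 0 < f t + ε ^ 2 := by positivity
  refine ⟨(ε ^ 2 / (f t + ε ^ 2)) ^ 2 * f', ?_, by gcongr⟩
  refine ((hf'.const_mul (ε ^ 2)).div (hf'.add_const (ε ^ 2)) hpos.ne').congr_deriv ?_
  field_simp
  ring

end Saturation

section Remainder

variable {L T ε t : ℝ} {Φ : ℝ → ℝ} {y ybar z zbar : ℝ → ℝ → ℝ} {Λ : ℝ≥0}

/-- The constant with which the convective flux enters the energy inequality for differences of
solutions. -/
noncomputable def couplingConst (L Λ : ℝ) : ℝ := 2 * fluxConst L * L * Λ ^ 2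

/-- A lower bound on `[0,T]` for the ratio between the decay rate of the saturated energy of a
solution and the square of its active gradient. -/
noncomputable def absorptionConst (L T : ℝ) : ℝ := exp (-(2 * T)) / (2 + L) ^ 2

/-- The squared Lipschitz constant of the remainder map is at most this constant times `ε²`. -/
noncomputable def remainderConst (L T Λ : ℝ) : ℝ :=
  exp (2 * T) * (1 + L) *
    (couplingConst L Λ + 2 * couplingConst L Λ / absorptionConst L T) *
      exp (2 * couplingConst L Λ / absorptionConst L T)

/-- The exponentially damped squared norm of the spatial derivative of `u`. -/
noncomputable def dampedDissipation (L : ℝ) (u : ℝ → ℝ → ℝ) (t : ℝ) : ℝ :=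
  exp (-(2 * t)) * L2norm L (derivWithin (u t) (Icc 0 L)) ^ 2

/-- The growth rate of the energy of the difference of two solutions with profiles `f` and `g`. -/
noncomputable def couplingRate (L ε Λ : ℝ) (f g : ℝ → ℝ) : ℝ :=
  couplingConst L Λ * (activeGradient L ε f ^ 2 + activeGradient L ε g ^ 2)

lemma couplingConst_nonneg (hL : 0 ≤ L) (Λ : ℝ) : 0 ≤ couplingConst L Λ := by
  unfold couplingConst fluxConst
  positivity

lemma absorptionConst_pos (hL : 0 ≤ L) (T : ℝ) : 0 < absorptionConst L T := by
  unfold absorptionConst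
  positivity

lemma dampedDissipation_nonneg (L : ℝ) (u : ℝ → ℝ → ℝ) (t : ℝ) : 0 ≤ dampedDissipation L u t := by
  unfold dampedDissipation
  positivity

lemma couplingRate_nonneg (hL : 0 ≤ L) (ε Λ : ℝ) (f g : ℝ → ℝ) : 0 ≤ couplingRate L ε Λ f g :=
  mul_nonneg (couplingConst_nonneg hL Λ) (by positivity)

lemma hasRightDerivLE_dampedEnergy_of_isModifiedKdVSol (hΦ : LipschitzOnWith Λ Φ (Ici 0))
    (hΦ₁ : ∀ r ∈ Ici 1, Φ r = 0) (hL : 0 < L) (hε : 0 < ε) (hsmall : couplingConst L Λ * ε ^ 2 ≤ 1)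
    (hy : IsModifiedKdVSol L T ε Φ y) (ht : t ∈ Ioo 0 T) :
    HasRightDerivLE (dampedEnergy L y) (-dampedDissipation L y t) t := by
  have hy' := isKdVSolWithFlux_of_isModifiedKdVSol hy
  have hyt := hy'.profile t (Ioo_subset_Icc_self ht)
  refine (hy'.hasRightDerivLE_dampedEnergy hL ht
    (isRightL2LipschitzAt_of_isModifiedKdVSol hΦ hΦ₁ hL hε hy ht)).mono ?_
  set d := L2norm L (derivWithin (y t) (Icc 0 L))
  have hflux : fluxConst L * L2norm L (convectiveFlux L ε Φ (y t)) ^ 2 ≤ d ^ 2 := by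
    have hK := fluxConst_nonneg L
    calc fluxConst L * L2norm L (convectiveFlux L ε Φ (y t)) ^ 2
        ≤ fluxConst L * (L * Λ ^ 2 * ε ^ 2 * d ^ 2) := by
          gcongr
          exact L2norm_convectiveFlux_sq_le hΦ hΦ₁ hL hε hyt.contDiffOn_one hyt.left_eq_zero
      _ = couplingConst L Λ * ε ^ 2 / 2 * d ^ 2 := by rw [couplingConst]; ring
      _ ≤ d ^ 2 := mul_le_of_le_one_left (sq_nonneg d) (by linarith)
  calc _ ≤ exp (-(2 * t)) * -d ^ 2 := mul_le_mul_of_nonneg_left (by linarith) (exp_pos _).le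
    _ = -dampedDissipation L y t := by rw [dampedDissipation]; ring

lemma hasRightDerivLE_saturate_dampedEnergy (hΦ : LipschitzOnWith Λ Φ (Ici 0))
    (hΦ₁ : ∀ r ∈ Ici 1, Φ r = 0) (hL : 0 < L) (hε : 0 < ε) (hsmall : couplingConst L Λ * ε ^ 2 ≤ 1)
    (hy : IsModifiedKdVSol L T ε Φ y) (ht : t ∈ Ioo 0 T) :
    HasRightDerivLE (fun s => saturate ε (dampedEnergy L y s))
      (-(absorptionConst L T * activeGradient L ε (y t) ^ 2)) t := by
  set E := dampedEnergy L y t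
  have hE : 0 ≤ E := dampedEnergy_nonneg hL.le y t
  have hdecay := hasRightDerivLE_dampedEnergy_of_isModifiedKdVSol hΦ hΦ₁ hL hε hsmall hy ht
  refine (HasRightDerivLE.saturate (f := dampedEnergy L y) hε hE hdecay).mono ?_
  rw [mul_neg, neg_le_neg_iff, dampedDissipation, activeGradient]
  split_ifs with hactive
  swap
  · rw [zero_pow two_ne_zero, mul_zero]
    positivity
  have hE_le : E ≤ (1 + L) * ε ^ 2 := by
    refine (dampedEnergy_le_L2norm_sq hL.le ((isKdVSolWithFlux_of_isModifiedKdVSol hy).profile t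
      (Ioo_subset_Icc_self ht)).continuousOn).trans ?_
    refine (mul_le_of_le_one_left (by positivity)
      (exp_le_one_iff.2 (by linarith [ht.1]))).trans ?_
    gcongr
    exact L2norm_nonneg L _
  have hratio : 1 / (2 + L) ≤ ε ^ 2 / (E + ε ^ 2) := by
    rw [div_le_div_iff₀ (by positivity) (by positivity)]
    linarith
  calc absorptionConst L T * L2norm L (derivWithin (y t) (Icc 0 L)) ^ 2
      = (1 / (2 + L)) ^ 2 * (exp (-(2 * T)) * L2norm L (derivWithin (y t) (Icc 0 L)) ^ 2) := by
        rw [absorptionConst]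
        field_simp
    _ ≤ _ := by
        gcongr
        exact ht.2.le

lemma exp_mul_convectiveFlux_sub_sq_le (hΦ : LipschitzOnWith Λ Φ (Ici 0))
    (hΦ₁ : ∀ r ∈ Ici 1, Φ r = 0) (hL : 0 < L) (hε : 0 < ε) (hy : IsKdVProfile L (y t))
    (hybar : IsKdVProfile L (ybar t)) :
    exp (-(2 * t)) * (fluxConst L
        * L2norm L (convectiveFlux L ε Φ (y t) - convectiveFlux L ε Φ (ybar t)) ^ 2)
      ≤ couplingConst L Λ * ε ^ 2 * dampedDissipation L (y - ybar) t
        + couplingRate L ε Λ (y t) (ybar t) * dampedEnergy L (y - ybar) t := by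
  have hK := fluxConst_nonneg L
  have hflux := L2norm_convectiveFlux_sub_sq_le hΦ hΦ₁ hL hε hy.contDiffOn_one
    hybar.contDiffOn_one hy.left_eq_zero hybar.left_eq_zero
  set M := activeGradient L ε (y t) ^ 2 + activeGradient L ε (ybar t) ^ 2
  set d := L2norm L (derivWithin (y t - ybar t) (Icc 0 L))
  set w := L2norm L (y t - ybar t)
  have henergy : exp (-(2 * t)) * w ^ 2 ≤ dampedEnergy L (y - ybar) t :=
    L2norm_sq_le_dampedEnergy (u := y - ybar) hL.le (hy.continuousOn.sub hybar.continuousOn)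
  calc _ ≤ exp (-(2 * t)) * (fluxConst L * (2 * L * Λ ^ 2 * (ε ^ 2 * d ^ 2 + M * w ^ 2))) :=
        mul_le_mul_of_nonneg_left (mul_le_mul_of_nonneg_left hflux hK) (exp_pos _).le
    _ = couplingConst L Λ * ε ^ 2 * dampedDissipation L (y - ybar) t
        + couplingRate L ε Λ (y t) (ybar t) * (exp (-(2 * t)) * w ^ 2) := by
        rw [dampedDissipation, couplingRate, couplingConst, Pi.sub_apply]
        ring
    _ ≤ _ :=
        add_le_add_right (mul_le_mul_of_nonneg_left henergy (couplingRate_nonneg hL.le ε Λ _ _)) _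

lemma hasRightDerivLE_dampedEnergy_sub (hΦ : LipschitzOnWith Λ Φ (Ici 0))
    (hΦ₁ : ∀ r ∈ Ici 1, Φ r = 0) (hL : 0 < L) (hε : 0 < ε) (hsmall : couplingConst L Λ * ε ^ 2 ≤ 1)
    (hy : IsModifiedKdVSol L T ε Φ y) (hybar : IsModifiedKdVSol L T ε Φ ybar)
    (ht : t ∈ Ioo 0 T) :
    HasRightDerivLE (dampedEnergy L (y - ybar))
      (-dampedDissipation L (y - ybar) t
        + couplingRate L ε Λ (y t) (ybar t) * dampedEnergy L (y - ybar) t) t := by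
  have hy' := isKdVSolWithFlux_of_isModifiedKdVSol hy
  have hybar' := isKdVSolWithFlux_of_isModifiedKdVSol hybar
  have ht' := Ioo_subset_Icc_self ht
  refine ((hy'.sub hL hybar').hasRightDerivLE_dampedEnergy hL ht <|
    (isRightL2LipschitzAt_of_isModifiedKdVSol hΦ hΦ₁ hL hε hy ht).sub hL.le
      (hy'.eventually_continuousOn ht) (hybar'.eventually_continuousOn ht)
      (isRightL2LipschitzAt_of_isModifiedKdVSol hΦ hΦ₁ hL hε hybar ht)).mono ?_
  have hflux := exp_mul_convectiveFlux_sub_sq_le hΦ hΦ₁ hL hε (hy'.profile t ht')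
    (hybar'.profile t ht')
  have habsorb := mul_le_of_le_one_left (dampedDissipation_nonneg L (y - ybar) t) hsmall
  rw [dampedDissipation] at *
  simp only [Pi.sub_apply] at *
  linarith

lemma isKdVSolWithFlux_remainder (hL : 0 < L) (hy : IsModifiedKdVSol L T ε Φ y)
    (hybar : IsModifiedKdVSol L T ε Φ ybar) (hz : IsLinearKdVSol L T z)
    (hzbar : IsLinearKdVSol L T zbar) :
    IsKdVSolWithFlux L T (y - z - (ybar - zbar))
      (fun t => convectiveFlux L ε Φ (y t) - convectiveFlux L ε Φ (ybar t)) := by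
  have h := ((isKdVSolWithFlux_of_isModifiedKdVSol hy).sub hL
    (isKdVSolWithFlux_of_isLinearKdVSol hz)).sub hL
      ((isKdVSolWithFlux_of_isModifiedKdVSol hybar).sub hL
        (isKdVSolWithFlux_of_isLinearKdVSol hzbar))
  rwa [sub_zero, sub_zero] at h

lemma isRightL2LipschitzAt_remainder (hΦ : LipschitzOnWith Λ Φ (Ici 0))
    (hΦ₁ : ∀ r ∈ Ici 1, Φ r = 0) (hL : 0 < L) (hε : 0 < ε) (hy : IsModifiedKdVSol L T ε Φ y)
    (hz : IsLinearKdVSol L T z) (ht : t ∈ Ioo 0 T) : IsRightL2LipschitzAt L (y - z) t :=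
  (isRightL2LipschitzAt_of_isModifiedKdVSol hΦ hΦ₁ hL hε hy ht).sub hL.le
    ((isKdVSolWithFlux_of_isModifiedKdVSol hy).eventually_continuousOn ht)
    ((isKdVSolWithFlux_of_isLinearKdVSol hz).eventually_continuousOn ht)
    (isRightL2LipschitzAt_of_isLinearKdVSol hL hz ht)

lemma hasRightDerivLE_dampedEnergy_remainder (hΦ : LipschitzOnWith Λ Φ (Ici 0))
    (hΦ₁ : ∀ r ∈ Ici 1, Φ r = 0) (hL : 0 < L) (hε : 0 < ε)
    (hy : IsModifiedKdVSol L T ε Φ y) (hybar : IsModifiedKdVSol L T ε Φ ybar)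
    (hz : IsLinearKdVSol L T z) (hzbar : IsLinearKdVSol L T zbar) (ht : t ∈ Ioo 0 T) :
    HasRightDerivLE (dampedEnergy L (y - z - (ybar - zbar)))
      (couplingConst L Λ * ε ^ 2 * dampedDissipation L (y - ybar) t
        + couplingRate L ε Λ (y t) (ybar t) * dampedEnergy L (y - ybar) t) t := by
  have hy' := isKdVSolWithFlux_of_isModifiedKdVSol hy
  have hybar' := isKdVSolWithFlux_of_isModifiedKdVSol hybar
  have ht' := Ioo_subset_Icc_self ht
  have hLip : IsRightL2LipschitzAt L (y - z - (ybar - zbar)) t :=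
    (isRightL2LipschitzAt_remainder hΦ hΦ₁ hL hε hy hz ht).sub hL.le
      ((hy'.sub hL (isKdVSolWithFlux_of_isLinearKdVSol hz)).eventually_continuousOn ht)
      ((hybar'.sub hL (isKdVSolWithFlux_of_isLinearKdVSol hzbar)).eventually_continuousOn ht)
      (isRightL2LipschitzAt_remainder hΦ hΦ₁ hL hε hybar hzbar ht)
  refine ((isKdVSolWithFlux_remainder hL hy hybar hz hzbar).hasRightDerivLE_dampedEnergy hL ht
    hLip).mono ?_
  exact (mul_le_mul_of_nonneg_left (sub_le_self _ (by positivity)) (exp_pos _).le).trans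
    (exp_mul_convectiveFlux_sub_sq_le hΦ hΦ₁ hL hε (hy'.profile t ht') (hybar'.profile t ht'))

lemma continuousOn_saturate_dampedEnergy (hL : 0 ≤ L) (hε : 0 < ε) {u : ℝ → ℝ → ℝ} {s : Set ℝ}
    (hu : ContinuousOn (fun p : ℝ × ℝ => u p.1 p.2) (s ×ˢ Icc 0 L)) :
    ContinuousOn (fun t => saturate ε (dampedEnergy L u t)) s := by
  have hE := continuousOn_dampedEnergy hL hu
  exact (continuousOn_const.mul hE).div (hE.add continuousOn_const)
    fun t _ => by positivity [dampedEnergy_nonneg hL u t]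

lemma dampedEnergy_remainder_zero (hL : 0 ≤ L) (hyz : EqOn (y 0) (z 0) (Icc 0 L))
    (hyzbar : EqOn (ybar 0) (zbar 0) (Icc 0 L)) :
    dampedEnergy L (y - z - (ybar - zbar)) 0 = 0 := by
  have hzero : EqOn (fun x => (1 + x) * (y - z - (ybar - zbar)) 0 x ^ 2) 0 (uIcc 0 L) := by
    rw [uIcc_of_le hL]
    exact fun x hx => by simp [hyz hx, hyzbar hx]
  rw [dampedEnergy, intervalIntegral.integral_congr hzero]
  simp

lemma dampedEnergy_remainder_le (hΦ : LipschitzOnWith Λ Φ (Ici 0))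
    (hΦ₁ : ∀ r ∈ Ici 1, Φ r = 0) (hL : 0 < L) (hε : 0 < ε) (hsmall : couplingConst L Λ * ε ^ 2 ≤ 1)
    (hy : IsModifiedKdVSol L T ε Φ y) (hybar : IsModifiedKdVSol L T ε Φ ybar)
    (hz : IsLinearKdVSol L T z) (hzbar : IsLinearKdVSol L T zbar) (ht : t ∈ Icc 0 T) :
    dampedEnergy L (y - z - (ybar - zbar)) t
      ≤ dampedEnergy L (y - z - (ybar - zbar)) 0
        + (couplingConst L Λ * ε ^ 2 + couplingConst L Λ / absorptionConst L T * (2 * ε ^ 2))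
          * exp (couplingConst L Λ / absorptionConst L T * (2 * ε ^ 2))
          * dampedEnergy L (y - ybar) 0 := by
  set κ := couplingConst L Λ / absorptionConst L T with hκ_def
  have hk := absorptionConst_pos hL.le T
  have hκ : 0 ≤ κ := div_nonneg (couplingConst_nonneg hL.le _) hk.le
  have hE (u : ℝ → ℝ → ℝ) (s : ℝ) : 0 ≤ dampedEnergy L u s := dampedEnergy_nonneg hL.le u s
  have hcont {u q : ℝ → ℝ → ℝ} (hu : IsKdVSolWithFlux L T u q) :
      ContinuousOn (fun p : ℝ × ℝ => u p.1 p.2) (Icc 0 t ×ˢ Icc 0 L) :=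
    hu.continuousOn.mono (prod_mono_left (Icc_subset_Icc_right ht.2))
  have hy' := isKdVSolWithFlux_of_isModifiedKdVSol hy
  have hybar' := isKdVSolWithFlux_of_isModifiedKdVSol hybar
  refine le_add_of_hasRightDerivLE_of_absorbing (G := fun s => κ *
      (saturate ε (dampedEnergy L y s) + saturate ε (dampedEnergy L ybar s)))
    (mul_nonneg (couplingConst_nonneg hL.le _) (sq_nonneg ε)) ht.1
    (continuousOn_dampedEnergy hL.le (hcont (hy'.sub hL hybar')))
    (continuousOn_dampedEnergy hL.le (hcont (isKdVSolWithFlux_remainder hL hy hybar hz hzbar)))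
    (continuousOn_const.mul ((continuousOn_saturate_dampedEnergy hL.le hε (hcont hy')).add
      (continuousOn_saturate_dampedEnergy hL.le hε (hcont hybar')))) (fun s _ => hE _ s)
    (fun s _ => mul_nonneg hκ (add_nonneg (saturate_nonneg (hE y s)) (saturate_nonneg (hE ybar s))))
    (mul_le_mul_of_nonneg_left (by
      linarith [saturate_le_sq (ε := ε) (hE y 0), saturate_le_sq (ε := ε) (hE ybar 0)]) hκ)
    fun s hs => ?_
  have hsT : s ∈ Ioo 0 T := ⟨hs.1, hs.2.trans_le ht.2⟩
  refine ⟨couplingRate L ε Λ (y s) (ybar s), dampedDissipation L (y - ybar) s,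
    couplingRate_nonneg hL.le _ _ _ _, dampedDissipation_nonneg L _ s,
    hasRightDerivLE_dampedEnergy_sub hΦ hΦ₁ hL hε hsmall hy hybar hsT,
    hasRightDerivLE_dampedEnergy_remainder hΦ hΦ₁ hL hε hy hybar hz hzbar hsT,
    (((hasRightDerivLE_saturate_dampedEnergy hΦ hΦ₁ hL hε hsmall hy hsT).add
      (hasRightDerivLE_saturate_dampedEnergy hΦ hΦ₁ hL hε hsmall hybar hsT)).const_mul hκ).mono
      (le_of_eq ?_)⟩
  rw [couplingRate, hκ_def]
  field_simp
  ring

lemma L2norm_remainder_sq_le (hΦ : LipschitzOnWith Λ Φ (Ici 0))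
    (hΦ₁ : ∀ r ∈ Ici 1, Φ r = 0) (hL : 0 < L) (hε : 0 < ε) (hε₁ : ε ≤ 1)
    (hsmall : couplingConst L Λ * ε ^ 2 ≤ 1)
    (hy : IsModifiedKdVSol L T ε Φ y) (hybar : IsModifiedKdVSol L T ε Φ ybar)
    (hz : IsLinearKdVSol L T z) (hzbar : IsLinearKdVSol L T zbar) (hyz : EqOn (y 0) (z 0) (Icc 0 L))
    (hyzbar : EqOn (ybar 0) (zbar 0) (Icc 0 L)) (ht : t ∈ Icc 0 T) :
    L2norm L (y t - z t - (ybar t - zbar t)) ^ 2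
      ≤ remainderConst L T Λ * ε ^ 2 * L2norm L (y 0 - ybar 0) ^ 2 := by
  have hv := isKdVSolWithFlux_remainder hL hy hybar hz hzbar
  have hw := (isKdVSolWithFlux_of_isModifiedKdVSol hy).sub hL
    (isKdVSolWithFlux_of_isModifiedKdVSol hybar)
  have hdata : dampedEnergy L (y - ybar) 0 ≤ (1 + L) * L2norm L (y 0 - ybar 0) ^ 2 := by
    simpa using dampedEnergy_le_L2norm_sq hL.le
      (hw.profile 0 (left_mem_Icc.2 (ht.1.trans ht.2))).continuousOn
  have hmain := dampedEnergy_remainder_le hΦ hΦ₁ hL hε hsmall hy hybar hz hzbar ht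
  rw [dampedEnergy_remainder_zero hL.le hyz hyzbar, zero_add] at hmain
  set c := couplingConst L Λ with hc_def
  set k := absorptionConst L T with hk_def
  have hc : 0 ≤ c := couplingConst_nonneg hL.le Λ
  have hk : 0 < k := absorptionConst_pos hL.le T
  have hexp : exp (c / k * (2 * ε ^ 2)) ≤ exp (2 * c / k) := by
    rw [mul_comm 2 c, mul_div_right_comm]
    gcongr
    exact mul_le_of_le_one_right two_pos.le (pow_le_one₀ hε.le hε₁)
  have hdamped : exp (-(2 * T)) * L2norm L (y t - z t - (ybar t - zbar t)) ^ 2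
      ≤ (c * ε ^ 2 + c / k * (2 * ε ^ 2)) * exp (2 * c / k)
        * ((1 + L) * L2norm L (y 0 - ybar 0) ^ 2) :=
    calc _ ≤ exp (-(2 * t)) * L2norm L (y t - z t - (ybar t - zbar t)) ^ 2 := by
          gcongr
          exact ht.2
      _ ≤ dampedEnergy L (y - z - (ybar - zbar)) t :=
          L2norm_sq_le_dampedEnergy hL.le (hv.profile t ht).continuousOn
      _ ≤ _ := hmain
      _ ≤ _ := by
          have := dampedEnergy_nonneg hL.le (y - ybar) 0
          gcongr
  rw [exp_neg, inv_mul_le_iff₀ (exp_pos _)] at hdamped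
  rw [remainderConst, ← hc_def, ← hk_def]
  exact hdamped.trans_eq (by ring)

lemma L2norm_remainder_le (hΦ : LipschitzOnWith Λ Φ (Ici 0))
    (hΦ₁ : ∀ r ∈ Ici 1, Φ r = 0) (hL : 0 < L) (hε : 0 < ε) (hε₁ : ε ≤ 1)
    (hsmall : couplingConst L Λ * ε ^ 2 ≤ 1)
    (hy : IsModifiedKdVSol L T ε Φ y) (hybar : IsModifiedKdVSol L T ε Φ ybar)
    (hz : IsLinearKdVSol L T z) (hzbar : IsLinearKdVSol L T zbar) (hyz : EqOn (y 0) (z 0) (Icc 0 L))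
    (hyzbar : EqOn (ybar 0) (zbar 0) (Icc 0 L)) (ht : t ∈ Icc 0 T) :
    L2norm L (y t - z t - (ybar t - zbar t))
      ≤ √(remainderConst L T Λ) * ε * L2norm L (y 0 - ybar 0) := by
  have hC : 0 ≤ remainderConst L T Λ := by
    unfold remainderConst
    positivity [couplingConst_nonneg hL.le Λ, absorptionConst_pos hL.le T]
  refine (abs_le_of_sq_le_sq' ?_ (by positivity [L2norm_nonneg L (y 0 - ybar 0)])).2
  rw [mul_pow, mul_pow, sq_sqrt hC]
  exact L2norm_remainder_sq_le hΦ hΦ₁ hL hε hε₁ hsmall hy hybar hz hzbar hyz hyzbar ht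

end Remainder

end KdV

open KdV in
theorem modifiedKdV_remainder_global_lipschitz_general (L T : ℝ) (hL : 0 < L) (Φ : ℝ → ℝ)
    (Λ : NNReal) (hΦ : LipschitzOnWith Λ Φ (Ici 0)) (hΦ₁ : ∀ r ∈ Ici 1, Φ r = 0) :
    ∃ ε₀ : ℝ, 0 < ε₀ ∧ ε₀ ≤ 1 ∧
    ∃ Ctilde : ℝ → ℝ,
      (∀ ε ∈ Ioc (0:ℝ) ε₀, 0 < Ctilde ε) ∧
      Tendsto Ctilde (nhdsWithin 0 (Ioi (0:ℝ))) (nhds 0) ∧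
      ∀ ε ∈ Ioc (0:ℝ) ε₀, ∀ y₀ ybar₀ : ℝ → ℝ,
        ∀ y ybar z zbar : ℝ → ℝ → ℝ,
        IsModifiedKdVSol L T ε Φ y → IsModifiedKdVSol L T ε Φ ybar →
        IsLinearKdVSol L T z → IsLinearKdVSol L T zbar →
        (∀ x ∈ Icc (0:ℝ) L, y 0 x = y₀ x) →
        (∀ x ∈ Icc (0:ℝ) L, ybar 0 x = ybar₀ x) →
        (∀ x ∈ Icc (0:ℝ) L, z 0 x = y₀ x) →
        (∀ x ∈ Icc (0:ℝ) L, zbar 0 x = ybar₀ x) →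
        ∀ t ∈ Icc (0:ℝ) T,
          L2norm L (fun x => (y t x - z t x) - (ybar t x - zbar t x))
            ≤ Ctilde ε * L2norm L (fun x => y₀ x - ybar₀ x) := by
  have hc := couplingConst_nonneg hL.le Λ
  set c := couplingConst L Λ
  set C := √(remainderConst L T Λ) + 1
  have hC : 0 < C := by positivity
  refine ⟨1 / (1 + c), by positivity, (div_le_one (by positivity)).2 (by linarith),
    fun ε => C * ε, fun ε hε => mul_pos hC hε.1, ?_, ?_⟩
  · exact (Continuous.tendsto' (by fun_prop) 0 0 (mul_zero C)).mono_left nhdsWithin_le_nhds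
  · intro ε ⟨hε, hεc⟩ y₀ ybar₀ y ybar z zbar hy hybar hz hzbar hy₀ hybar₀ hz₀ hzbar₀ t ht
    rw [le_div_iff₀ (by positivity)] at hεc
    have hε₁ : ε ≤ 1 := by nlinarith
    have hsmall : c * ε ^ 2 ≤ 1 := by nlinarith
    have hdata : L2norm L (y 0 - ybar 0) = L2norm L (fun x => y₀ x - ybar₀ x) :=
      L2norm_congr hL.le fun x hx => by simp [hy₀ x hx, hybar₀ x hx]
    calc _ ≤ √(remainderConst L T Λ) * ε * L2norm L (y 0 - ybar 0) :=
          L2norm_remainder_le hΦ hΦ₁ hL hε hε₁ hsmall hy hybar hz hzbar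
            (fun x hx => (hy₀ x hx).trans (hz₀ x hx).symm)
            (fun x hx => (hybar₀ x hx).trans (hzbar₀ x hx).symm) ht
      _ ≤ C * ε * L2norm L (fun x => y₀ x - ybar₀ x) := by
          rw [hdata]
          gcongr
          · exact L2norm_nonneg L _
          · exact le_add_of_nonneg_right zero_le_one

/-- global Lipschitzianity of the nonlinear remainder map
`R(t) : y₀ ↦ y(t,·) − z(t,·)`, with a Lipschitz constant tending to `0` with `ε`.
There exist `ε₀ ∈ (0,1]` and `C̃ : (0,ε₀] → (0,∞)` with `C̃(ε) → 0` as `ε → 0⁺` such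
that, for all `ε ∈ (0,ε₀]`, all data `y₀, ȳ₀`, all solutions `y, ȳ` of the modified
KdV system and `z, z̄` of the linearized system with these initial data, and all
`t ∈ [0,T]`,
`‖(y(t,·) − z(t,·)) − (ȳ(t,·) − z̄(t,·))‖_{L²(0,L)} ≤ C̃(ε) ‖y₀ − ȳ₀‖_{L²(0,L)}`. -/
theorem modifiedKdV_remainder_global_lipschitz (L T : ℝ) (hL : 0 < L) (hT : 0 < T)
    (Φ : ℝ → ℝ) (hΦ : IsCutoff Φ) :
    ∃ ε₀ : ℝ, 0 < ε₀ ∧ ε₀ ≤ 1 ∧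
    ∃ Ctilde : ℝ → ℝ,
      (∀ ε ∈ Ioc (0:ℝ) ε₀, 0 < Ctilde ε) ∧
      Tendsto Ctilde (nhdsWithin 0 (Ioi (0:ℝ))) (nhds 0) ∧
      ∀ ε ∈ Ioc (0:ℝ) ε₀, ∀ y₀ ybar₀ : ℝ → ℝ,
        ∀ y ybar z zbar : ℝ → ℝ → ℝ,
        IsModifiedKdVSol L T ε Φ y → IsModifiedKdVSol L T ε Φ ybar →
        IsLinearKdVSol L T z → IsLinearKdVSol L T zbar →
        (∀ x ∈ Icc (0:ℝ) L, y 0 x = y₀ x) →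
        (∀ x ∈ Icc (0:ℝ) L, ybar 0 x = ybar₀ x) →
        (∀ x ∈ Icc (0:ℝ) L, z 0 x = y₀ x) →
        (∀ x ∈ Icc (0:ℝ) L, zbar 0 x = ybar₀ x) →
        ∀ t ∈ Icc (0:ℝ) T,
          L2norm L (fun x => (y t x - z t x) - (ybar t x - zbar t x))
            ≤ Ctilde ε * L2norm L (fun x => y₀ x - ybar₀ x) := by
  obtain ⟨Λ, hΛ⟩ := KdV.exists_lipschitzOnWith_of_isCutoff hΦ
  exact modifiedKdV_remainder_global_lipschitz_general L T hL Φ Λ hΛ hΦ.2.2.2.1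
end
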